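/- For every integer n ≥ 2, one has σ(n)/n ≤ e^γ · (log(log(e·τ(n))) + log(log(log(e^e·τ(n))))) + 0.9414441. -/

import Mathlib

/-!
Put `T = log τ(n)`; the right-hand side is `e^γ (log (1 + T) + log log (e + T)) + 0.9414441`.

Both `σ(n)/n` and `τ(n)` are multiplicative. Hence, if a slope `ε` and nonnegative numbers `b_p` are
such that `log (σ(p^v)/p^v) ≤ ε log (v + 1) + b_p` for all primes `p` and all `v`, then
`log (σ(n)/n) ≤ ε log τ(n) + ∑ b_p` (`line_bound`). The theorem follows from such linear bounds with
suitable slopes; put `s = log₂ τ(n)`.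

*Large `s`* (`s ≥ 134694`, lemma `big_case`). For slope `1/(x log 2)` the intercept
`U(x) = ∑_{m ≤ x} (Λ(m)/log m)(1/m - 1/x)` is admissible (`log_sigma_le_UU`). The function `U` is an
integral of `S(u) = ∑_{n ≤ u} Λ(n)(1/n - 1/u)` (`UU_eq`), and
`log u - 1.58052 - r(u) ≤ S(u) ≤ log u - 1.57444 + r(u)` with `r(u) = 40 (1 + log u)/u`
(`SS_lower`, `SS_upper`). This is shown by Chebyshev's method: with `K(y) = ∑_{k ≤ y} (y/k - 1)` one
has `∑_{n ≤ w} Λ(n) K(w/n) = ∑_{m ≤ w} log m (w/m - 1)`, which is known asymptotically, and suitable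
integer combinations `Φ(y)` of the functions `d K(y/d)` dominate `α (y - 1)`: for `y < 1501` this is
checked numerically, beyond that it follows from the asymptotics of `K` (`Phi_ge`).
With `J(x) = ∫_2^x dv / log v`, the two bounds for `S` show that `U(y) - log log y + J(y)/y` increases
from `x` to any `y ≥ x` up to a small loss `ρ(x)` (`U_lower`). A comparison with `log ζ(s)` for
`s → 1⁺` shows that it cannot remain above a constant larger than `γ` (`eta_nonneg`), and
`U(x) ≤ log log x + γ - J(x)/x + ρ(x)` follows (`UU_upper`). Choosing `x = e^L` with
`e^L (1/L + 1/L² + 2/L³ + 6/L⁴) = s` reduces the claim to an inequality in `L` (`final_ineq`).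

*Small `s`* (`1 ≤ s < 134694`). There is a list of `86` lines of slope `1/q` in `s`, whose
intercepts are computed from the increments `log (1 + 1/(p + ⋯ + p^k))` of the local factors
(`line_C`). For the primes in `[2040, q)` it is enough to sum over the larger set of all integers
without a small prime factor (`Cover`), since every term is nonnegative. The exponential of a line is
convex while the right-hand side is concave in `s` (`Gv_concave`), so each line has to be compared
with the right-hand side only at the two ends of the interval on which it is used (`exp_line_le`).
These comparisons are carried out in integer arithmetic (`chkLine_sound`, `lineData_ok`).
-/

open Real

/-- The sum of the divisors of `n`. -/
def sigmaFn (n : ℕ) : ℕ := ∑ d ∈ n.divisors, d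

/-- The number of divisors of `n`. -/
def tauFn (n : ℕ) : ℕ := n.divisors.card

/-! ### The dual inequality for `log (σ(n)/n)` -/

/-- The logarithm of `σ(p^v)/p^v = ∑_{i ≤ v} p^{-i}`. -/
noncomputable def locSig (p v : ℕ) : ℝ := log (∑ i ∈ Finset.range (v + 1), ((p : ℝ) ^ i)⁻¹)

theorem log_sigma_div (n : ℕ) (hn : n ≠ 0) :
    log ((sigmaFn n : ℝ) / n) = ∑ p ∈ n.primeFactors, locSig p (n.factorization p) := by
  have h1 : (sigmaFn n : ℝ) = ∏ p ∈ n.primeFactors,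
      ∑ k ∈ Finset.range (n.factorization p + 1), (p : ℝ) ^ k := by
    rw [sigmaFn, Nat.sum_divisors hn]; push_cast; rfl
  have h2 : (n : ℝ) = ∏ p ∈ n.primeFactors, (p : ℝ) ^ (n.factorization p) := by
    conv_lhs => rw [← Nat.prod_factorization_pow_eq_self hn]
    rw [Finsupp.prod, Nat.support_factorization]; push_cast; rfl
  rw [h1]
  nth_rewrite 1 [h2]
  rw [← Finset.prod_div_distrib, Real.log_prod]
  · refine Finset.sum_congr rfl fun p hp => ?_
    have hp0 : (p : ℝ) ≠ 0 := by exact_mod_cast (Nat.prime_of_mem_primeFactors hp).ne_zero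
    rw [locSig, Finset.sum_div, ← Finset.sum_range_reflect]
    congr 1
    refine Finset.sum_congr rfl fun i hi => ?_
    have hi' : i ≤ n.factorization p := by
      have := Finset.mem_range.1 hi; omega
    rw [show n.factorization p + 1 - 1 - i = n.factorization p - i by omega,
      pow_sub₀ _ hp0 hi']
    field_simp
  · intro p hp
    have hp0 : (0 : ℝ) < p := by exact_mod_cast (Nat.prime_of_mem_primeFactors hp).pos
    have : 0 < ∑ k ∈ Finset.range (n.factorization p + 1), (p : ℝ) ^ k :=
      Finset.sum_pos (fun _ _ => by positivity) (by simp)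
    positivity

theorem log_tau (n : ℕ) (hn : n ≠ 0) :
    log (tauFn n : ℝ) = ∑ p ∈ n.primeFactors, log ((n.factorization p : ℝ) + 1) := by
  rw [tauFn, Nat.card_divisors hn]
  push_cast
  rw [Real.log_prod]
  intro p hp
  positivity

/-- If every local factor lies below a line of slope `ε` in the logarithm of the local factor
`v + 1` of `τ`, then so does `log (σ(n)/n)` as a function of `log τ(n)`. The primes outside `F` have
intercept `0`. -/
theorem line_bound (n : ℕ) (hn : n ≠ 0) (ε : ℝ) (b : ℕ → ℝ) (F : Finset ℕ)
    (hb : ∀ p, 0 ≤ b p) (hF : ∀ p, p.Prime → p ∉ F → b p = 0)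
    (h : ∀ p v, p.Prime → locSig p v ≤ ε * log ((v : ℝ) + 1) + b p) :
    log ((sigmaFn n : ℝ) / n) ≤ ε * log (tauFn n : ℝ) + ∑ p ∈ F with p.Prime, b p := by
  rw [log_sigma_div n hn, log_tau n hn, Finset.mul_sum]
  have h1 : ∑ p ∈ n.primeFactors, b p ≤ ∑ p ∈ F with p.Prime, b p := by
    have : ∑ p ∈ n.primeFactors, b p = ∑ p ∈ n.primeFactors with p ∈ F, b p := by
      rw [Finset.sum_filter]
      refine Finset.sum_congr rfl fun p hp => ?_
      split_ifs with hpF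
      · rfl
      · exact hF p (Nat.prime_of_mem_primeFactors hp) hpF
    rw [this]
    refine Finset.sum_le_sum_of_subset_of_nonneg ?_ fun p _ _ => hb p
    intro p hp
    simp only [Finset.mem_filter] at hp ⊢
    exact ⟨hp.2, Nat.prime_of_mem_primeFactors hp.1⟩
  calc _ ≤ ∑ p ∈ n.primeFactors, (ε * log ((n.factorization p : ℝ) + 1) + b p) :=
        Finset.sum_le_sum fun p hp => h p _ (Nat.prime_of_mem_primeFactors hp)
    _ ≤ _ := by rw [Finset.sum_add_distrib]; linarith

/-! ### The intercept as a sum over prime powers -/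

/-- `U(x) = ∑_{m ≤ x} (Λ(m)/log m)(1/m - 1/x)`. -/
noncomputable def UU (x : ℝ) : ℝ :=
  ∑ m ∈ Finset.Ioc 0 ⌊x⌋₊, ArithmeticFunction.vonMangoldt m / log m * (1 / m - 1 / x)

theorem sum_deriv_le (v : ℕ) (z : ℝ) (hz : 0 ≤ z) :
    ∑ i ∈ Finset.range v, ((i : ℝ) + 1) * z ^ i ≤
      (∑ i ∈ Finset.range v, z ^ i) * ∑ i ∈ Finset.range (v + 1), z ^ i := by
  have h := Finset.sum_range_diag_flip v (fun a b => z ^ a * z ^ b)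
  have h1 : ∑ i ∈ Finset.range v, ((i : ℝ) + 1) * z ^ i =
      ∑ m ∈ Finset.range v, ∑ k ∈ Finset.range (m + 1), z ^ k * z ^ (m - k) := by
    refine Finset.sum_congr rfl fun m _ => ?_
    rw [Finset.sum_congr rfl (g := fun _ => z ^ m)]
    · simp
    · intro k hk
      rw [← pow_add]; congr 1; have := Finset.mem_range.1 hk; omega
  rw [h1, h, Finset.sum_mul]
  refine Finset.sum_le_sum fun m _ => ?_
  rw [← Finset.mul_sum]
  refine mul_le_mul_of_nonneg_left ?_ (by positivity)
  refine Finset.sum_le_sum_of_subset_of_nonneg ?_ fun i _ _ => by positivity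
  intro i hi
  simp only [Finset.mem_range] at *
  omega

/-- `log (1 + z + ⋯ + z^v) ≤ ∑_{j ≤ v} z^j / j`. -/
theorem log_geom_le (v : ℕ) (z : ℝ) (hz : 0 ≤ z) :
    log (∑ i ∈ Finset.range (v + 1), z ^ i) ≤ ∑ j ∈ Finset.range v, z ^ (j + 1) / ((j : ℝ) + 1) := by
  have hpos : ∀ y : ℝ, 0 ≤ y → 0 < ∑ i ∈ Finset.range (v + 1), y ^ i := by
    intro y hy
    rw [Finset.sum_range_succ']
    have : 0 ≤ ∑ k ∈ Finset.range v, y ^ (k + 1) := Finset.sum_nonneg fun _ _ => by positivity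
    simp; linarith
  let f : ℝ → ℝ := fun y => ∑ j ∈ Finset.range v, y ^ (j + 1) / ((j : ℝ) + 1) -
    log (∑ i ∈ Finset.range (v + 1), y ^ i)
  have hd : ∀ y : ℝ, 0 ≤ y → HasDerivAt f (∑ j ∈ Finset.range v, y ^ j -
      (∑ i ∈ Finset.range v, ((i : ℝ) + 1) * y ^ i) / ∑ i ∈ Finset.range (v + 1), y ^ i) y := by
    intro y hy
    refine HasDerivAt.sub ?_ ?_
    · refine HasDerivAt.fun_sum fun j _ => ?_
      have := (hasDerivAt_pow (j + 1) y).div_const ((j : ℝ) + 1)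
      refine this.congr_deriv ?_
      rw [Nat.add_sub_cancel]; push_cast; field_simp
    · refine HasDerivAt.log ?_ (hpos y hy).ne'
      have h2 : HasDerivAt (fun y : ℝ => ∑ i ∈ Finset.range v, y ^ (i + 1) + y ^ 0)
          (∑ i ∈ Finset.range v, ((i : ℝ) + 1) * y ^ i + 0) y := by
        refine HasDerivAt.add ?_ (by simpa using hasDerivAt_const y (1 : ℝ))
        refine HasDerivAt.fun_sum fun j _ => ?_
        have := (hasDerivAt_pow (j + 1) y)
        refine this.congr_deriv ?_
        rw [Nat.add_sub_cancel]; push_cast; rfl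
      simpa [Finset.sum_range_succ'] using h2
  have hm : MonotoneOn f (Set.Ici 0) := by
    refine monotoneOn_of_deriv_nonneg (convex_Ici 0)
      (fun y hy => (hd y hy).continuousAt.continuousWithinAt)
      (fun y hy => ?_) (fun y hy => ?_)
    · rw [interior_Ici] at hy
      exact (hd y hy.le).differentiableAt.differentiableWithinAt
    · rw [interior_Ici] at hy
      have hy0 : 0 ≤ y := (show (0 : ℝ) < y from hy).le
      rw [(hd y hy0).deriv, sub_nonneg, div_le_iff₀ (hpos y hy0)]
      exact sum_deriv_le v y hy0
  have h0 : f 0 = 0 := by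
    simp [f, Finset.sum_range_succ']
  have := hm (Set.mem_Ici.2 le_rfl) (Set.mem_Ici.2 hz) hz
  rw [h0] at this
  simp only [f] at this
  linarith

/-- `log₂(1+1/k) ≥ 1/k`, in additive form. -/
theorem log_one_add_inv_ge (k : ℕ) (hk : 1 ≤ k) : log 2 / k ≤ log (1 + 1 / (k : ℝ)) := by
  have hk' : (1 : ℝ) ≤ k := by exact_mod_cast hk
  have h := one_add_mul_self_le_rpow_one_add (s := 1 / (k : ℝ)) (p := k) (by
    have : 0 ≤ 1 / (k : ℝ) := by positivity
    linarith) hk'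
  have h2 : (k : ℝ) * (1 / k) = 1 := by field_simp
  rw [h2] at h
  have h3 := Real.log_le_log (by norm_num) h
  rw [Real.log_rpow (by positivity)] at h3
  rw [div_le_iff₀ (by positivity), mul_comm]
  norm_num at h3 ⊢
  linarith

/-- `H_v ≤ log₂ (v + 1)`, by summation of `log_one_add_inv_ge`. -/
theorem harmonic_le_log (v : ℕ) :
    ∑ j ∈ Finset.range v, 1 / ((j : ℝ) + 1) ≤ log ((v : ℝ) + 1) / log 2 := by
  induction v with
  | zero => simp
  | succ v ih =>
    rw [Finset.sum_range_succ]
    have h := log_one_add_inv_ge (v + 1) (by omega)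
    have h2 : log ((v : ℝ) + 1 + 1) = log ((v : ℝ) + 1) + log (1 + 1 / ((v : ℝ) + 1)) := by
      rw [← Real.log_mul (by positivity) (by positivity)]
      congr 1; field_simp
    have hl : 0 < log 2 := Real.log_pos (by norm_num)
    push_cast at h ⊢
    rw [h2, add_div]
    have : 1 / ((v : ℝ) + 1) ≤ log (1 + 1 / ((v : ℝ) + 1)) / log 2 := by
      rw [le_div_iff₀ hl]
      calc _ = log 2 / ((v : ℝ) + 1) := by ring
        _ ≤ _ := h
    linarith

/-- The value of `Λ(m)/log m` at a prime power. -/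
theorem vM_div_log (p k : ℕ) (hp : p.Prime) (hk : k ≠ 0) :
    ArithmeticFunction.vonMangoldt (p ^ k) / log ((p ^ k : ℕ) : ℝ) = 1 / k := by
  rw [ArithmeticFunction.vonMangoldt_apply_pow hk, ArithmeticFunction.vonMangoldt_apply_prime hp]
  push_cast
  rw [Real.log_pow]
  have : 0 < log (p : ℝ) := Real.log_pos (by exact_mod_cast hp.one_lt)
  have : (k : ℝ) ≠ 0 := by exact_mod_cast hk
  field_simp

/-- A sum weighted by `Λ(m)/log m` is a sum over prime powers `p^k` with weight `1/k`; here it is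
grouped by exponent. -/
theorem sum_vM_div_log (f : ℕ → ℝ) (x : ℝ) (hx : 0 ≤ x) (N : ℕ) (hN : ⌊log x / log 2⌋₊ ≤ N) :
    ∑ m ∈ Finset.Ioc 0 ⌊x⌋₊, ArithmeticFunction.vonMangoldt m / log m * f m =
      ∑ k ∈ Finset.Icc 1 N, ∑ p ∈ Finset.Ioc 0 ⌊x ^ ((1 : ℝ) / k)⌋₊ with p.Prime,
        1 / (k : ℝ) * f (p ^ k) := by
  rw [← Finset.sum_filter_of_ne (p := IsPrimePow), Chebyshev.sum_PrimePow_eq_sum_sum'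
    (fun m => ArithmeticFunction.vonMangoldt m / log m * f m) hx hN]
  · refine Finset.sum_congr rfl fun k hk => Finset.sum_congr rfl fun p hp => ?_
    rw [vM_div_log p k (Finset.mem_filter.1 hp).2 (by have := (Finset.mem_Icc.1 hk).1; omega)]
  · intro m _ h
    by_contra hc
    rw [← ArithmeticFunction.vonMangoldt_ne_zero_iff, not_not] at hc
    simp [hc] at h

/-- The linear bound with slope `1/(x log 2)` and intercept `U(x)`. At a prime `p`, `log_geom_le` with
`z = 1/p` and `harmonic_le_log` leave the terms `(1/j)(p^{-j} - 1/x)`, of which only those with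
`p^j ≤ x` are positive. -/
theorem log_sigma_le_UU (n : ℕ) (hn : n ≠ 0) (x : ℝ) (hx : 1 ≤ x) :
    log ((sigmaFn n : ℝ) / n) ≤ log (tauFn n : ℝ) / log 2 / x + UU x := by
  have hx0 : 0 < x := by linarith
  have hl : 0 < log 2 := Real.log_pos (by norm_num)
  set N := ⌊x⌋₊ + 1 with hN
  have hxN : x < N := by rw [hN]; exact_mod_cast Nat.lt_floor_add_one x
  let b : ℕ → ℝ := fun p => ∑ k ∈ Finset.range N,
    1 / ((k : ℝ) + 1) * max (1 / (p : ℝ) ^ (k + 1) - 1 / x) 0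
  have hbig : ∀ p k : ℕ, x < (p : ℝ) ^ k → max (1 / (p : ℝ) ^ k - 1 / x) 0 = 0 := by
    intro p k h
    refine max_eq_right ?_
    have := one_div_le_one_div_of_le hx0 h.le
    linarith
  have key := line_bound n hn (1 / (x * log 2)) b (Finset.Ioc 0 ⌊x⌋₊)
    (fun p => Finset.sum_nonneg fun _ _ => by positivity)
    (fun p hp hpF => Finset.sum_eq_zero fun k _ => by
      rw [hbig p (k + 1) ?_, mul_zero]
      have h1 : ⌊x⌋₊ < p := by
        by_contra hc
        exact hpF (Finset.mem_Ioc.2 ⟨hp.pos, by omega⟩)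
      have h2 : x < p := (Nat.floor_lt hx0.le).1 h1
      calc x < p := h2
        _ ≤ (p : ℝ) ^ (k + 1) := le_self_pow₀ (by exact_mod_cast hp.one_le) (by omega))
    (fun p v hp => by
      have h1 : locSig p v ≤ ∑ j ∈ Finset.range v, (1 / (p : ℝ)) ^ (j + 1) / ((j : ℝ) + 1) := by
        have := log_geom_le v (1 / (p : ℝ)) (by positivity)
        rw [locSig]
        convert this using 4
        simp
      have h2 := harmonic_le_log v
      have h3 : ∑ j ∈ Finset.range v, (1 / (p : ℝ)) ^ (j + 1) / ((j : ℝ) + 1) ≤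
          ∑ j ∈ Finset.range v, 1 / ((j : ℝ) + 1) * max (1 / (p : ℝ) ^ (j + 1) - 1 / x) 0 +
          (∑ j ∈ Finset.range v, 1 / ((j : ℝ) + 1)) / x := by
        rw [Finset.sum_div, ← Finset.sum_add_distrib]
        refine Finset.sum_le_sum fun j _ => ?_
        have := le_max_left (1 / (p : ℝ) ^ (j + 1) - 1 / x) 0
        calc _ = 1 / ((j : ℝ) + 1) * (1 / (p : ℝ) ^ (j + 1) - 1 / x) + 1 / ((j : ℝ) + 1) / x := by
              rw [div_pow, one_pow]; ring
          _ ≤ _ := by gcongr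
      have h4 : ∑ j ∈ Finset.range v, 1 / ((j : ℝ) + 1) * max (1 / (p : ℝ) ^ (j + 1) - 1 / x) 0
          ≤ b p := by
        rcases le_total v N with h | h
        · exact Finset.sum_le_sum_of_subset_of_nonneg (Finset.range_subset_range.2 h)
            fun _ _ _ => by positivity
        · refine (Finset.sum_subset (Finset.range_subset_range.2 h) fun j _ hj => ?_).symm.le
          rw [hbig p (j + 1) ?_, mul_zero]
          have hj' : N ≤ j := by simpa using hj
          have h5 : j < 2 ^ j := Nat.lt_two_pow_self
          have h6 : 2 ^ j ≤ p ^ (j + 1) :=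
            (Nat.pow_le_pow_left hp.two_le j).trans (Nat.pow_le_pow_right hp.pos (by omega))
          have : N ≤ p ^ (j + 1) := by omega
          exact hxN.trans_le (by exact_mod_cast this)
      calc _ ≤ _ := h1
        _ ≤ _ := h3
        _ ≤ b p + (log ((v : ℝ) + 1) / log 2) / x := by gcongr
        _ = _ := by field_simp; ring)
  have hU : ∑ p ∈ Finset.Ioc 0 ⌊x⌋₊ with p.Prime, b p ≤ UU x := by
    have hlogN : ⌊log x / log 2⌋₊ ≤ N := by
      refine Nat.floor_le_of_le ?_
      rw [div_le_iff₀ hl, ← Real.log_rpow (by norm_num)]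
      refine Real.log_le_log hx0 ?_
      rw [Real.rpow_natCast]
      have : N < 2 ^ N := Nat.lt_two_pow_self
      have h2 : (N : ℝ) < 2 ^ N := by exact_mod_cast this
      linarith
    rw [UU, sum_vM_div_log (fun m => 1 / (m : ℝ) - 1 / x) x hx0.le N hlogN]
    have hre : ∀ g : ℕ → ℝ, ∑ k ∈ Finset.Icc 1 N, g k = ∑ k ∈ Finset.range N, g (k + 1) := by
      intro g
      rw [Finset.range_eq_Ico, Finset.sum_Ico_add' g 0 N 1]; rfl
    rw [hre, Finset.sum_comm]
    refine Finset.sum_le_sum fun k _ => ?_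
    have hk0 : (0 : ℝ) < ((k + 1 : ℕ) : ℝ) := by positivity
    have hsub : (Finset.Ioc 0 ⌊x ^ ((1 : ℝ) / (k + 1 : ℕ))⌋₊).filter Nat.Prime ⊆
        (Finset.Ioc 0 ⌊x⌋₊).filter Nat.Prime := by
      refine Finset.filter_subset_filter _ (Finset.Ioc_subset_Ioc_right (Nat.floor_le_floor ?_))
      refine Real.rpow_le_self_of_one_le hx ?_
      rw [div_le_one hk0]; push_cast; linarith [Nat.cast_nonneg (α := ℝ) k]
    have hroot : ∀ p : ℕ, (p ≤ ⌊x ^ ((1 : ℝ) / (k + 1 : ℕ))⌋₊ ↔ (p : ℝ) ^ (k + 1) ≤ x) := by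
      intro p
      rw [Nat.le_floor_iff (by positivity), one_div, Real.le_rpow_inv_iff_of_pos (by positivity)
        hx0.le hk0, Real.rpow_natCast]
    rw [← Finset.sum_subset hsub]
    · refine Finset.sum_le_sum fun p hp => ?_
      simp only [Finset.mem_filter, Finset.mem_Ioc] at hp
      have h1 := (hroot p).1 hp.1.2
      have hp0 : (0 : ℝ) < (p : ℝ) ^ (k + 1) := by have := hp.1.1; positivity
      have h2 := one_div_le_one_div_of_le hp0 h1
      rw [max_eq_left (by linarith)]
      push_cast
      exact le_rfl
    · intro p hp hp2
      simp only [Finset.mem_filter, Finset.mem_Ioc] at hp hp2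
      rw [hbig p (k + 1), mul_zero]
      by_contra hc
      exact hp2 ⟨⟨hp.1.1, (hroot p).2 (not_lt.1 hc)⟩, hp.2⟩
  calc _ ≤ _ := key
    _ ≤ 1 / (x * log 2) * log (tauFn n : ℝ) + UU x := by linarith
    _ = _ := by field_simp

/-! ### Logarithm series and harmonic numbers -/

/-- A partial sum of `log (1 + 1/m) = 2 ∑ z^(2k+1)/(2k+1)`, `z = 1/(2m+1)`, is a lower bound. -/
theorem log_atanh_lower (m : ℝ) (hm : 0 < m) (n : ℕ) :
    ∑ k ∈ Finset.range n, (2 : ℝ) * (1 / (2 * k + 1)) * (1 / (2 * m + 1)) ^ (2 * k + 1) ≤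
      log (1 + 1 / m) := by
  rw [one_div m]
  exact sum_le_hasSum _ (fun k _ => by positivity) (hasSum_log_one_add_inv hm)

/-- The partial sum of `log_atanh_lower`, with the tail bounded by a geometric series. -/
theorem log_atanh_upper (m : ℝ) (hm : 0 < m) (n : ℕ) :
    log (1 + 1 / m) ≤
    ∑ k ∈ Finset.range n, (2 : ℝ) * (1 / (2 * k + 1)) * (1 / (2 * m + 1)) ^ (2 * k + 1) +
      2 * (1 / (2 * n + 1)) * (1 / (2 * m + 1)) ^ (2 * n + 1) / (1 - (1 / (2 * m + 1)) ^ 2) := by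
  rw [one_div m]
  set z := 1 / (2 * m + 1) with hz
  have hz0 : 0 < z := by positivity
  have hz1 : z < 1 := by rw [hz, div_lt_one (by positivity)]; linarith
  have h := hasSum_log_one_add_inv hm
  rw [← hz] at h
  have h1 := h.summable.sum_add_tsum_nat_add n
  rw [h.tsum_eq] at h1
  rw [← h1]
  gcongr
  have hs := (summable_nat_add_iff n).2 h.summable
  have hz2 : z ^ 2 < 1 := by nlinarith
  have hg : HasSum (fun k : ℕ => 2 * (1 / (2 * (n : ℝ) + 1)) * z ^ (2 * n + 1) * (z ^ 2) ^ k)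
      (2 * (1 / (2 * (n : ℝ) + 1)) * z ^ (2 * n + 1) * (1 - z ^ 2)⁻¹) :=
    (hasSum_geometric_of_lt_one (by positivity) hz2).mul_left _
  rw [div_eq_mul_inv]
  refine hasSum_le (fun k => ?_) hs.hasSum hg
  have : z ^ (2 * (k + n) + 1) = z ^ (2 * n + 1) * (z ^ 2) ^ k := by ring
  simp only [this]
  rw [mul_assoc (2 * (1 / (2 * (n : ℝ) + 1)))]
  gcongr
  linarith [Nat.cast_nonneg (α := ℝ) k]

theorem one_sub_z (m : ℝ) (hm : 0 < m) :
    (1 - (1 / (2 * m + 1)) ^ 2) = 4 * m * (m + 1) / (2 * m + 1) ^ 2 := by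
  field_simp; ring

theorem log_up1 (m : ℝ) (hm : 0 < m) :
    log (1 + 1 / m) ≤ 2 / (2 * m + 1) + 1 / (6 * (2 * m + 1) * m * (m + 1)) := by
  have h := log_atanh_upper m hm 1
  rw [one_sub_z m hm] at h
  norm_num only [Finset.sum_range_succ, Finset.sum_range_zero, Nat.cast_zero, Nat.cast_one] at h
  refine h.trans (le_of_eq ?_)
  field_simp; ring

theorem log_lo2 (m : ℝ) (hm : 0 < m) :
    2 / (2 * m + 1) + 2 / (3 * (2 * m + 1) ^ 3) ≤ log (1 + 1 / m) := by
  have h := log_atanh_lower m hm 2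
  norm_num only [Finset.sum_range_succ, Finset.sum_range_zero, Nat.cast_zero, Nat.cast_one] at h
  refine le_trans (le_of_eq ?_) h
  field_simp; ring

theorem log_up3 (m : ℝ) (hm : 0 < m) :
    log (1 + 1 / m) ≤ 2 / (2 * m + 1) + 2 / (3 * (2 * m + 1) ^ 3) + 2 / (5 * (2 * m + 1) ^ 5)
      + 1 / (14 * m * (m + 1) * (2 * m + 1) ^ 5) := by
  have h := log_atanh_upper m hm 3
  rw [one_sub_z m hm] at h
  norm_num only [Finset.sum_range_succ, Finset.sum_range_zero, Nat.cast_zero, Nat.cast_one,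
    Nat.cast_ofNat] at h
  refine h.trans (le_of_eq ?_)
  field_simp; ring

/-- The real harmonic numbers. -/
noncomputable def HH (n : ℕ) : ℝ := ∑ k ∈ Finset.range n, 1 / ((k : ℝ) + 1)

theorem HH_succ (n : ℕ) : HH (n + 1) = HH n + 1 / ((n : ℝ) + 1) := by
  rw [HH, Finset.sum_range_succ]; rfl

theorem tendsto_HH (c : ℕ → ℝ) (hc : Filter.Tendsto c Filter.atTop (nhds 0)) :
    Filter.Tendsto (fun n : ℕ => HH n - log n - c n) Filter.atTop
      (nhds eulerMascheroniConstant) := by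
  have h := tendsto_harmonic_sub_log
  have h2 := h.sub hc
  rw [sub_zero] at h2
  refine h2.congr fun n => ?_
  congr 2
  rw [harmonic, HH]; push_cast
  exact Finset.sum_congr rfl fun k _ => by rw [one_div]

theorem log_succ_sub (n : ℕ) (hn : 1 ≤ n) :
    log ((n + 1 : ℕ) : ℝ) = log n + log (1 + 1 / (n : ℝ)) := by
  have : (0 : ℝ) < n := by exact_mod_cast hn
  rw [← Real.log_mul (by positivity) (by positivity)]
  congr 1; push_cast; field_simp

/-- If `H_n - log n - c_n` is nondecreasing from `N` on and `c_n → 0`, it stays below `γ`. -/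
theorem HH_le_of (c : ℕ → ℝ) (hc : Filter.Tendsto c Filter.atTop (nhds 0))
    (N : ℕ) (hN : 1 ≤ N)
    (h : ∀ n : ℕ, N ≤ n → log (1 + 1 / (n : ℝ)) + c (n + 1) - c n ≤ 1 / ((n : ℝ) + 1)) :
    HH N - log N - c N ≤ eulerMascheroniConstant := by
  have hm : Monotone (fun k : ℕ => HH (N + k) - log ((N + k : ℕ) : ℝ) - c (N + k)) := by
    refine monotone_nat_of_le_succ fun k => ?_
    have h1 := h (N + k) (by omega)
    rw [← add_assoc, HH_succ, log_succ_sub (N + k) (by omega)]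
    linarith
  have ht := (Filter.tendsto_add_atTop_iff_nat N).2 (tendsto_HH c hc)
  have ht' : Filter.Tendsto (fun k : ℕ => HH (N + k) - log ((N + k : ℕ) : ℝ) - c (N + k))
      Filter.atTop (nhds eulerMascheroniConstant) := by
    refine ht.congr fun k => ?_
    rw [add_comm k N]
  simpa using hm.ge_of_tendsto ht' 0

/-- If `H_n - log n - c_n` is nonincreasing from `N` on and `c_n → 0`, it stays above `γ`. -/
theorem le_HH_of (c : ℕ → ℝ) (hc : Filter.Tendsto c Filter.atTop (nhds 0))
    (N : ℕ) (hN : 1 ≤ N)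
    (h : ∀ n : ℕ, N ≤ n → 1 / ((n : ℝ) + 1) ≤ log (1 + 1 / (n : ℝ)) + c (n + 1) - c n) :
    eulerMascheroniConstant ≤ HH N - log N - c N := by
  have hm : Antitone (fun k : ℕ => HH (N + k) - log ((N + k : ℕ) : ℝ) - c (N + k)) := by
    refine antitone_nat_of_succ_le fun k => ?_
    have h1 := h (N + k) (by omega)
    rw [← add_assoc, HH_succ, log_succ_sub (N + k) (by omega)]
    linarith
  have ht := (Filter.tendsto_add_atTop_iff_nat N).2 (tendsto_HH c hc)
  have ht' : Filter.Tendsto (fun k : ℕ => HH (N + k) - log ((N + k : ℕ) : ℝ) - c (N + k))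
      Filter.atTop (nhds eulerMascheroniConstant) := by
    refine ht.congr fun k => ?_
    rw [add_comm k N]
  simpa using hm.le_of_tendsto ht' 0

theorem tendsto_inv_pow (a : ℝ) (k : ℕ) (hk : k ≠ 0) :
    Filter.Tendsto (fun n : ℕ => a / (n : ℝ) ^ k) Filter.atTop (nhds 0) :=
  ((Filter.tendsto_pow_atTop hk).comp tendsto_natCast_atTop_atTop).const_div_atTop a

theorem HH_upper (n : ℕ) (hn : 1 ≤ n) :
    HH n ≤ log n + eulerMascheroniConstant + 1 / (2 * n) := by
  have h := HH_le_of (fun n => (1 / 2) / (n : ℝ) ^ 1) (tendsto_inv_pow _ 1 one_ne_zero) n hn ?_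
  · have : (1 / 2 : ℝ) / (n : ℝ) ^ 1 = 1 / (2 * n) := by field_simp
    simp only [this] at h
    linarith
  · intro k hk
    have hk0 : (0 : ℝ) < k := by exact_mod_cast (by omega : 0 < k)
    refine (sub_le_sub_right (add_le_add_left (log_up1 k hk0) _) _).trans ?_
    push_cast
    rw [← sub_nonneg]
    have e : 1 / ((k : ℝ) + 1) - (2 / (2 * (k : ℝ) + 1) + 1 / (6 * (2 * k + 1) * k * (k + 1)) +
      1 / 2 / (k + 1) ^ 1 - 1 / 2 / k ^ 1) = 1 / (3 * k * (k + 1) * (2 * k + 1)) := by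
      field_simp; ring
    rw [e]; positivity

theorem HH_lower (n : ℕ) (hn : 1 ≤ n) :
    log n + eulerMascheroniConstant + 1 / (2 * n) - 1 / (12 * (n : ℝ) ^ 2) ≤ HH n := by
  have h := le_HH_of (fun n => (1 / 2) / (n : ℝ) ^ 1 - (1 / 12) / (n : ℝ) ^ 2)
    (by simpa using (tendsto_inv_pow _ 1 one_ne_zero).sub (tendsto_inv_pow _ 2 two_ne_zero)) n hn ?_
  · have e1 : (1 / 2 : ℝ) / (n : ℝ) ^ 1 = 1 / (2 * n) := by field_simp
    have e2 : (1 / 12 : ℝ) / (n : ℝ) ^ 2 = 1 / (12 * (n : ℝ) ^ 2) := by field_simp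
    simp only [e1, e2] at h
    linarith
  · intro k hk
    have hk0 : (0 : ℝ) < k := by exact_mod_cast (by omega : 0 < k)
    refine le_trans ?_ (sub_le_sub_right (add_le_add_left (log_lo2 k hk0) _) _)
    push_cast
    rw [← sub_nonneg]
    have e : 2 / (2 * (k : ℝ) + 1) + 2 / (3 * (2 * (k : ℝ) + 1) ^ 3) +
      (1 / 2 / (k + 1) ^ 1 - 1 / 12 / (k + 1) ^ 2) - (1 / 2 / k ^ 1 - 1 / 12 / k ^ 2)
      - 1 / ((k : ℝ) + 1)
      = (1 / 4 + k / 2 + k ^ 2 / 2) / (3 * k ^ 2 * (k + 1) ^ 2 * (2 * k + 1) ^ 3) := by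
      field_simp; ring
    rw [e]; positivity

theorem gamma_lower (n : ℕ) (hn : 1 ≤ n) :
    HH n - log n - 1 / (2 * n) + 1 / (12 * (n : ℝ) ^ 2) - 1 / (120 * (n : ℝ) ^ 4)
      ≤ eulerMascheroniConstant := by
  have h := HH_le_of (fun n => (1 / 2) / (n : ℝ) ^ 1 - (1 / 12) / (n : ℝ) ^ 2 +
      (1 / 120) / (n : ℝ) ^ 4)
    (by
      simpa using ((tendsto_inv_pow (1 / 2) 1 one_ne_zero).sub
        (tendsto_inv_pow (1 / 12) 2 two_ne_zero)).add
          (tendsto_inv_pow (1 / 120) 4 (by norm_num))) n hn ?_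
  · have e1 : (1 / 2 : ℝ) / (n : ℝ) ^ 1 = 1 / (2 * n) := by field_simp
    have e2 : (1 / 12 : ℝ) / (n : ℝ) ^ 2 = 1 / (12 * (n : ℝ) ^ 2) := by field_simp
    have e3 : (1 / 120 : ℝ) / (n : ℝ) ^ 4 = 1 / (120 * (n : ℝ) ^ 4) := by field_simp
    simp only [e1, e2, e3] at h
    linarith
  · intro k hk
    have hk0 : (0 : ℝ) < k := by exact_mod_cast (by omega : 0 < k)
    refine (sub_le_sub_right (add_le_add_left (log_up3 k hk0) _) _).trans ?_
    push_cast
    rw [← sub_nonneg]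
    have e : 1 / ((k : ℝ) + 1) - (2 / (2 * (k : ℝ) + 1) + 2 / (3 * (2 * k + 1) ^ 3) +
      2 / (5 * (2 * k + 1) ^ 5) + 1 / (14 * k * (k + 1) * (2 * k + 1) ^ 5) +
      (1 / 2 / (k + 1) ^ 1 - 1 / 12 / (k + 1) ^ 2 + 1 / 120 / (k + 1) ^ 4) -
      (1 / 2 / k ^ 1 - 1 / 12 / k ^ 2 + 1 / 120 / k ^ 4)) =
      (1 / 120 + 7 / 60 * k + 19 / 30 * k ^ 2 + 377 / 210 * k ^ 3 + 1177 / 420 * k ^ 4 +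
        16 / 7 * k ^ 5 + 16 / 21 * k ^ 6) / (k ^ 4 * (k + 1) ^ 4 * (2 * k + 1) ^ 5) := by
      field_simp; ring
    rw [e]; positivity

/-! ### Asymptotics of `∑_{k ≤ y} (y/k - 1)` -/

/-- `K(y) = ∑_{k ≤ y} (y/k - 1)`. -/
noncomputable def KK (y : ℝ) : ℝ := y * HH ⌊y⌋₊ - ⌊y⌋₊

theorem KK_eq_sum (y : ℝ) : KK y = ∑ k ∈ Finset.Ioc 0 ⌊y⌋₊, (y / k - 1) := by
  have h : ∀ n : ℕ, HH n = ∑ k ∈ Finset.Ioc 0 n, 1 / (k : ℝ) := by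
    intro n
    induction n with
    | zero => simp [HH]
    | succ n ih =>
      rw [HH_succ, ih, Finset.sum_Ioc_succ_top (by omega)]; push_cast; rfl
  rw [KK, h, Finset.sum_sub_distrib, Finset.mul_sum]
  simp [div_eq_mul_inv]

theorem KK_asymp (y : ℝ) (hy : 20 ≤ y) :
    |KK y - (y * log y + (eulerMascheroniConstant - 1) * y + 1 / 2)| ≤ 1 / (4 * y) := by
  set f := ⌊y⌋₊ with hf
  have hy0 : 0 < y := by linarith
  have hf20 : 20 ≤ f := Nat.le_floor (by exact_mod_cast hy)
  have hfr : (20 : ℝ) ≤ f := by exact_mod_cast hf20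
  have hf0 : (0 : ℝ) < f := by linarith
  have h1 : (f : ℝ) ≤ y := Nat.floor_le hy0.le
  have h2 : y < f + 1 := Nat.lt_floor_add_one y
  obtain ⟨φ, hφ⟩ : ∃ φ, φ = y - f := ⟨_, rfl⟩
  have hyφ : y = f + φ := by linarith
  have hφ0 : 0 ≤ φ := by linarith
  have hφ1 : φ ≤ 1 := by linarith
  have hx0 : 0 ≤ φ / f := by positivity
  have hlog : log y = log f + log (1 + φ / f) := by
    rw [← Real.log_mul (by positivity) (by positivity)]
    congr 1; field_simp; linarith
  have hU := HH_upper f (by omega)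
  have hL := HH_lower f (by omega)
  -- two-sided bounds for `y * log (1 + φ / f)`
  have hlo : φ + φ ^ 2 / (2 * f + φ) ≤ y * log (1 + φ / f) := by
    have := Real.le_log_one_add_of_nonneg hx0
    calc φ + φ ^ 2 / (2 * f + φ) = y * (2 * (φ / f) / (φ / f + 2)) := by
          rw [hyφ]; field_simp; ring
      _ ≤ _ := by gcongr
  have hhi : y * log (1 + φ / f) ≤ φ + φ ^ 2 / (2 * f) := by
    have h3 : log (1 + φ / f) ≤ sinh (log (1 + φ / f)) :=
      Real.self_le_sinh_iff.2 (Real.log_nonneg (by linarith))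
    rw [Real.sinh_log (by positivity)] at h3
    calc _ ≤ y * (((1 + φ / f) - (1 + φ / f)⁻¹) / 2) := by gcongr
      _ = _ := by
        have : 1 + φ / f = y / f := by rw [hyφ]; field_simp
        rw [this, inv_div, hyφ]
        have : (f : ℝ) + φ ≠ 0 := by positivity
        field_simp; ring
  rw [KK, ← hf, hlog]
  rw [abs_le]
  constructor
  · have h5 : y * (log f + eulerMascheroniConstant + 1 / (2 * f) - 1 / (12 * (f : ℝ) ^ 2))
        ≤ y * HH f := by gcongr
    have h6 : -(1 / (4 * y)) ≤ y / (2 * f) - y / (12 * (f : ℝ) ^ 2) + φ - 1 / 2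
        - (φ + φ ^ 2 / (2 * f)) := by
      have e : y / (2 * f) - y / (12 * (f : ℝ) ^ 2) + φ - 1 / 2
        - (φ + φ ^ 2 / (2 * f)) = (φ - φ ^ 2) / (2 * f) - y / (12 * (f : ℝ) ^ 2) := by
        rw [hyφ]; field_simp; ring
      rw [e]
      have : 0 ≤ (φ - φ ^ 2) / (2 * f) := div_nonneg (by nlinarith) (by positivity)
      have : y / (12 * (f : ℝ) ^ 2) ≤ 1 / (4 * y) := by
        rw [div_le_div_iff₀ (by positivity) (by positivity)]; nlinarith
      linarith
    have e2 : y * (log f + eulerMascheroniConstant + 1 / (2 * f) - 1 / (12 * (f : ℝ) ^ 2)) =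
      y * log f + eulerMascheroniConstant * y + y / (2 * f) - y / (12 * (f : ℝ) ^ 2) := by ring
    rw [e2] at h5
    nlinarith
  · have h5 : y * HH f ≤ y * (log f + eulerMascheroniConstant + 1 / (2 * f)) := by gcongr
    have h6 : y / (2 * f) + φ - 1 / 2 - (φ + φ ^ 2 / (2 * f + φ)) ≤ 1 / (4 * y) := by
      have e : y / (2 * f) + φ - 1 / 2 - (φ + φ ^ 2 / (2 * f + φ)) =
          φ / (2 * f) - φ ^ 2 / (2 * f + φ) := by rw [hyφ]; field_simp; ring
      have h7 : φ ^ 2 / (2 * f + 1) ≤ φ ^ 2 / (2 * f + φ) := by gcongr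
      have h8 : φ / (2 * f) - φ ^ 2 / (2 * f + 1) ≤ 1 / (4 * (f + 1)) := by
        rw [div_sub_div _ _ (by positivity) (by positivity), div_le_div_iff₀ (by positivity)
          (by positivity)]
        nlinarith [sq_nonneg (2 * φ - 1), mul_nonneg hφ0 (sub_nonneg.2 hφ1),
          mul_nonneg (mul_nonneg hf0.le hf0.le) (sq_nonneg (2 * φ - 1)),
          mul_nonneg (mul_nonneg hf0.le (sub_nonneg.2 hφ1)) hφ0, mul_nonneg hf0.le (sub_nonneg.2 hfr),
          mul_nonneg hf0.le (sq_nonneg (2 * φ - 1))]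
      have h9 : 1 / (4 * ((f : ℝ) + 1)) ≤ 1 / (4 * y) := by gcongr
      linarith
    have e2 : y * (log f + eulerMascheroniConstant + 1 / (2 * f)) =
      y * log f + eulerMascheroniConstant * y + y / (2 * f) := by ring
    rw [e2] at h5
    nlinarith

/-! ### Sums of `log m` -/

/-- `B(w) = ∑_{m ≤ w} log m (w/m - 1)`. -/
noncomputable def BB (w : ℝ) : ℝ := ∑ m ∈ Finset.Ioc 0 ⌊w⌋₊, log m * (w / m - 1)

theorem sum_log_div (N : ℕ) :
    ∑ m ∈ Finset.Ioc 0 N, log m / m =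
      ∑ n ∈ Finset.Ioc 0 N, ArithmeticFunction.vonMangoldt n / n * HH (N / n) := by
  set f : ArithmeticFunction ℝ := ⟨fun n => ArithmeticFunction.vonMangoldt n / n, by simp⟩ with hf
  set g : ArithmeticFunction ℝ := ⟨fun n => 1 / (n : ℝ), by simp⟩ with hg
  have h := ArithmeticFunction.sum_Ioc_mul_eq_sum_sum f g N
  have h1 : ∀ m ∈ Finset.Ioc 0 N, (f * g) m = log m / m := by
    intro m hm
    rw [ArithmeticFunction.mul_apply, ← ArithmeticFunction.vonMangoldt_sum,
      ← Nat.sum_divisorsAntidiagonal (fun i _ => ArithmeticFunction.vonMangoldt i),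
      Finset.sum_div]
    refine Finset.sum_congr rfl fun x hx => ?_
    have hx' := (Nat.mem_divisorsAntidiagonal.1 hx).1
    simp only [hf, hg, ArithmeticFunction.coe_mk]
    rw [← hx']; push_cast
    rw [div_mul_div_comm, mul_one]
  rw [Finset.sum_congr rfl h1] at h
  rw [h]
  refine Finset.sum_congr rfl fun n _ => ?_
  simp only [hf, hg, ArithmeticFunction.coe_mk]
  congr 1
  generalize N / n = k
  induction k with
  | zero => simp [HH]
  | succ n ih =>
    rw [HH_succ, ← ih, Finset.sum_Ioc_succ_top (by omega)]; push_cast; rfl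

theorem sum_log (N : ℕ) :
    ∑ m ∈ Finset.Ioc 0 N, log m =
      ∑ n ∈ Finset.Ioc 0 N, ArithmeticFunction.vonMangoldt n * ((N / n : ℕ) : ℝ) := by
  rw [← ArithmeticFunction.sum_Ioc_mul_zeta_eq_sum, ArithmeticFunction.vonMangoldt_mul_zeta]
  rfl

/-- Since `log = Λ * 1`, `B(w) = ∑_{n ≤ w} Λ(n) K(w/n)`. -/
theorem BB_eq (w : ℝ) : BB w =
    ∑ n ∈ Finset.Ioc 0 ⌊w⌋₊, ArithmeticFunction.vonMangoldt n * KK (w / n) := by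
  have h1 : BB w = w * ∑ m ∈ Finset.Ioc 0 ⌊w⌋₊, log m / m - ∑ m ∈ Finset.Ioc 0 ⌊w⌋₊, log m := by
    rw [BB, Finset.mul_sum, ← Finset.sum_sub_distrib]
    refine Finset.sum_congr rfl fun m _ => by ring
  rw [h1, sum_log_div, sum_log, Finset.mul_sum, ← Finset.sum_sub_distrib]
  refine Finset.sum_congr rfl fun n _ => ?_
  rw [KK, Nat.floor_div_natCast]
  ring

theorem half_log_sq (a b : ℝ) (ha : 3 ≤ a) (hab : a ≤ b) :
    log b / b * (b - a) ≤ log b ^ 2 / 2 - log a ^ 2 / 2 ∧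
      log b ^ 2 / 2 - log a ^ 2 / 2 ≤ log a / a * (b - a) := by
  rcases hab.eq_or_lt with rfl | hab
  · simp
  have hd : ∀ x ∈ Set.Icc a b, HasDerivAt (fun x => log x ^ 2 / 2) (log x / x) x := by
    intro x hx
    have : x ≠ 0 := by have := hx.1; intro h; linarith
    refine (((Real.hasDerivAt_log this).pow 2).div_const 2).congr_deriv ?_
    field_simp; ring
  obtain ⟨c, hc, h⟩ := exists_hasDerivAt_eq_slope (fun x => log x ^ 2 / 2) (fun x => log x / x) hab
    (fun x hx => (hd x hx).continuousAt.continuousWithinAt)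
    (fun x hx => hd x (Set.Ioo_subset_Icc_self hx))
  have he : exp 1 ≤ 3 := by have := Real.exp_one_lt_d9; linarith
  have hba : 0 < b - a := by linarith
  have h' : log b ^ 2 / 2 - log a ^ 2 / 2 = log c / c * (b - a) := by
    rw [h]; field_simp
  have m1 : log c / c ≤ log a / a := Real.log_div_self_antitoneOn
    (show exp 1 ≤ a by linarith) (show exp 1 ≤ c by linarith [hc.1]) hc.1.le
  have m2 : log b / b ≤ log c / c := Real.log_div_self_antitoneOn
    (show exp 1 ≤ c by linarith [hc.1]) (show exp 1 ≤ b by linarith [hc.1]) hc.2.le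
  rw [h']
  exact ⟨by gcongr, by gcongr⟩

/-- `∑_{m ≤ N} log m / m - (log N)^2 / 2`, a convergent sequence. -/
noncomputable def aSeq (N : ℕ) : ℝ :=
  ∑ m ∈ Finset.Ioc 0 N, log m / m - log N ^ 2 / 2

theorem aSeq_succ (N : ℕ) (hN : 3 ≤ N) : aSeq (N + 1) ≤ aSeq N ∧
    aSeq N - log N / N ≤ aSeq (N + 1) - log (N + 1 : ℕ) / (N + 1 : ℕ) := by
  have h3 : (3 : ℝ) ≤ N := by exact_mod_cast hN
  obtain ⟨h1, h2⟩ := half_log_sq N (N + 1 : ℕ) h3 (by push_cast; linarith)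
  unfold aSeq
  rw [Finset.sum_Ioc_succ_top (by omega)]
  have e : ((N + 1 : ℕ) : ℝ) - N = 1 := by push_cast; ring
  rw [e, mul_one] at h1 h2
  constructor <;> linarith

/-- Existence of the limit `κ` of `aSeq` with a rate of convergence: from `3` on, `aSeq N` is
nonincreasing and `aSeq N - log N / N` is nondecreasing. -/
theorem exists_kappa : ∃ κ : ℝ, ∀ N : ℕ, 3 ≤ N → κ ≤ aSeq N ∧ aSeq N - log N / N ≤ κ := by
  have anti : ∀ N k, 3 ≤ N → aSeq (N + k) ≤ aSeq N := by
    intro N k hN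
    induction k with
    | zero => simp
    | succ k ih => exact ((aSeq_succ (N + k) (by omega)).1).trans ih
  have mono : ∀ N k : ℕ, 3 ≤ N → aSeq N - log N / N ≤ aSeq (N + k) - log (N + k : ℕ) / (N + k : ℕ) := by
    intro N k hN
    induction k with
    | zero => simp
    | succ k ih => exact ih.trans ((aSeq_succ (N + k) (by omega)).2)
  have hpos : ∀ N : ℕ, 0 ≤ log N / N := fun N => div_nonneg (Real.log_natCast_nonneg N) (by positivity)
  have key : ∀ M N : ℕ, 3 ≤ M → 3 ≤ N → aSeq M - log M / M ≤ aSeq N := by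
    intro M N hM hN
    rcases le_total M N with h | h
    · obtain ⟨k, rfl⟩ := Nat.exists_eq_add_of_le h
      have := mono M k hM; have := hpos (M + k); linarith
    · obtain ⟨k, rfl⟩ := Nat.exists_eq_add_of_le h
      have := anti N k hN; have := hpos (N + k); linarith
  refine ⟨sInf (aSeq '' {N | 3 ≤ N}), fun N hN => ⟨?_, ?_⟩⟩
  · refine csInf_le ⟨aSeq 3 - log (3 : ℕ) / (3 : ℕ), ?_⟩ ⟨N, hN, rfl⟩
    rintro _ ⟨M, hM, rfl⟩
    exact key 3 M le_rfl hM
  · refine le_csInf ⟨_, ⟨3, le_refl 3, rfl⟩⟩ ?_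
    rintro _ ⟨M, hM, rfl⟩
    exact key N M hN hM

theorem sum_log_bounds (N : ℕ) (hN : 1 ≤ N) :
    N * log N - N + 1 ≤ ∑ m ∈ Finset.Ioc 0 N, log m ∧
      ∑ m ∈ Finset.Ioc 0 N, log m ≤ N * log N - N + 1 + log N := by
  induction N, hN using Nat.le_induction with
  | base => simp
  | succ N hN ih =>
    have h1 : (1 : ℝ) ≤ N := by exact_mod_cast hN
    rw [Finset.sum_Ioc_succ_top (by omega)]
    have hu : log (N + 1) ≤ log N + 1 / N := by
      have := Real.log_le_sub_one_of_pos (show (0 : ℝ) < (N + 1) / N by positivity)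
      rw [Real.log_div (by positivity) (by positivity)] at this
      have e : ((N : ℝ) + 1) / N - 1 = 1 / N := by field_simp; ring
      linarith
    have hl : log N + 1 / (N + 1) ≤ log (N + 1) := by
      have := Real.log_le_sub_one_of_pos (show (0 : ℝ) < N / (N + 1) by positivity)
      rw [Real.log_div (by positivity) (by positivity)] at this
      have e : (N : ℝ) / (N + 1) - 1 = - (1 / (N + 1)) := by field_simp; ring
      linarith
    push_cast
    constructor
    · have : N * log (N + 1) ≤ N * log N + 1 := by
        calc N * log ((N : ℝ) + 1) ≤ N * (log N + 1 / N) := by gcongr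
          _ = _ := by field_simp
      linarith [ih.1]
    · have : (N + 1) * log N + 1 ≤ (N + 1) * log (N + 1) := by
        calc (N + 1) * log N + 1 = (N + 1) * (log N + 1 / (N + 1)) := by field_simp
          _ ≤ _ := by gcongr
      linarith [ih.2]

theorem BB_asymp : ∃ κ : ℝ, ∀ w : ℝ, 3 ≤ w →
    |BB w - w * (log w ^ 2 / 2 - log w + κ)| ≤ 1 + 7 / 3 * log w := by
  obtain ⟨κ, hκ⟩ := exists_kappa
  refine ⟨κ + 1, fun w hw => ?_⟩
  set N := ⌊w⌋₊ with hN
  have hN3 : 3 ≤ N := Nat.le_floor (by exact_mod_cast hw)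
  have h3 : (3 : ℝ) ≤ N := by exact_mod_cast hN3
  have h1 : (N : ℝ) ≤ w := Nat.floor_le (by linarith)
  have h2 : w < N + 1 := Nat.lt_floor_add_one w
  obtain ⟨k1, k2⟩ := hκ N hN3
  obtain ⟨-, q2⟩ := half_log_sq N w h3 h1
  have hlogN : 0 ≤ log N := Real.log_natCast_nonneg N
  have hlog : log N ≤ log w := Real.log_le_log (by linarith) h1
  have q1 : log N ^ 2 ≤ log w ^ 2 := by gcongr
  have q3 : log N / N * (w - N) ≤ log N / N := by
    have : 0 ≤ log N / N := by positivity
    nlinarith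
  have hwφ : w * (log N / N) ≤ 4 / 3 * log w := by
    have : w ≤ 4 / 3 * N := by linarith
    calc w * (log N / N) ≤ 4 / 3 * N * (log N / N) := by gcongr
      _ = 4 / 3 * log N := by field_simp
      _ ≤ _ := by linarith
  have hlogw1 : 1 ≤ log w := by
    rw [Real.le_log_iff_exp_le (by linarith)]
    have := Real.exp_one_lt_d9; linarith
  have hBB : BB w = w * (aSeq N + log N ^ 2 / 2) - ∑ m ∈ Finset.Ioc 0 N, log m := by
    rw [BB, ← hN, aSeq, sub_add_cancel, Finset.mul_sum, ← Finset.sum_sub_distrib]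
    refine Finset.sum_congr rfl fun m _ => by ring
  have hTu : ∑ m ∈ Finset.Ioc 0 N, log m ≤ w * log w - w + 1 + log w := by
    refine (sum_log_bounds N (by omega)).2.trans ?_
    have hl : log N + (w - N) / w ≤ log w := by
      have := Real.log_le_sub_one_of_pos (show (0 : ℝ) < N / w by positivity)
      rw [Real.log_div (by positivity) (by positivity)] at this
      have e : (N : ℝ) / w - 1 = - ((w - N) / w) := by field_simp; ring
      linarith
    have : w * log N + (w - N) ≤ w * log w := by
      calc w * log N + (w - N) = w * (log N + (w - N) / w) := by field_simp
        _ ≤ _ := by gcongr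
    have : N * log N ≤ w * log N := by gcongr
    linarith
  have hTl : w * log w - w + 1 - log w ≤ ∑ m ∈ Finset.Ioc 0 N, log m := by
    have := (sum_log_bounds (N + 1) (by omega)).1
    rw [Finset.sum_Ioc_succ_top (by omega)] at this
    push_cast at this
    have hlw : log w ≤ log (N + 1) := Real.log_le_log (by linarith) h2.le
    have : (w - 1) * (log w - 1) ≤ N * (log (N + 1) - 1) := by
      apply mul_le_mul <;> linarith
    linarith
  rw [hBB, abs_le]
  have u1 : w * (aSeq N + log N ^ 2 / 2) ≤ w * (κ + log N / N + log w ^ 2 / 2) := by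
    refine mul_le_mul_of_nonneg_left ?_ (by linarith); linarith
  have u2 : w * (κ - log N / N + log w ^ 2 / 2) ≤ w * (aSeq N + log N ^ 2 / 2) := by
    refine mul_le_mul_of_nonneg_left ?_ (by linarith); linarith
  constructor <;> nlinarith

/-! ### Integer combinations of dilates of `K` -/

/-- Weighted sum `∑ j · f(d)` over a list of pairs `(d, j)`. -/
noncomputable def lsum (L : List (ℕ × ℕ)) (f : ℕ → ℝ) : ℝ := (L.map fun q => (q.2 : ℝ) * f q.1).sum

theorem lsum_nil (f : ℕ → ℝ) : lsum [] f = 0 := by simp [lsum]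
theorem lsum_cons (q : ℕ × ℕ) (L : List (ℕ × ℕ)) (f : ℕ → ℝ) :
    lsum (q :: L) f = q.2 * f q.1 + lsum L f := by simp [lsum]
theorem lsum_add (L : List (ℕ × ℕ)) (f g : ℕ → ℝ) :
    lsum L (fun d => f d + g d) = lsum L f + lsum L g := by
  induction L with
  | nil => simp [lsum_nil]
  | cons q L ih => simp only [lsum_cons, ih]; ring
theorem lsum_mul (L : List (ℕ × ℕ)) (c : ℝ) (f : ℕ → ℝ) :
    lsum L (fun d => c * f d) = c * lsum L f := by
  induction L with
  | nil => simp [lsum_nil]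
  | cons q L ih => simp only [lsum_cons, ih]; ring
theorem lsum_congr (L : List (ℕ × ℕ)) (f g : ℕ → ℝ) (h : ∀ q ∈ L, f q.1 = g q.1) :
    lsum L f = lsum L g := by
  induction L with
  | nil => simp [lsum_nil]
  | cons q L ih =>
    simp only [lsum_cons]
    rw [ih fun r hr => h r (List.mem_cons_of_mem _ hr), h q List.mem_cons_self]
theorem lsum_le (L : List (ℕ × ℕ)) (f g : ℕ → ℝ) (h : ∀ q ∈ L, f q.1 ≤ g q.1) :
    lsum L f ≤ lsum L g := by
  induction L with
  | nil => simp [lsum_nil]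
  | cons q L ih =>
    simp only [lsum_cons]
    have := ih fun r hr => h r (List.mem_cons_of_mem _ hr)
    have := mul_le_mul_of_nonneg_left (h q List.mem_cons_self) (Nat.cast_nonneg (α := ℝ) q.2)
    linarith
theorem lsum_abs_sub (L : List (ℕ × ℕ)) (f g e : ℕ → ℝ) (h : ∀ q ∈ L, |f q.1 - g q.1| ≤ e q.1) :
    |lsum L f - lsum L g| ≤ lsum L e := by
  rw [abs_le]
  have h1 := lsum_le L f (fun d => g d + e d) fun q hq => by have := (abs_le.1 (h q hq)).2; linarith
  have h2 := lsum_le L g (fun d => f d + e d) fun q hq => by have := (abs_le.1 (h q hq)).1; linarith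
  rw [lsum_add] at h1 h2
  constructor <;> linarith
theorem lsum_sum (L : List (ℕ × ℕ)) {ι : Type*} (s : Finset ι) (f : ι → ℕ → ℝ) :
    lsum L (fun d => ∑ i ∈ s, f i d) = ∑ i ∈ s, lsum L (f i) := by
  induction L with
  | nil => simp [lsum_nil]
  | cons q L ih => simp only [lsum_cons, ih, Finset.sum_add_distrib, Finset.mul_sum]

/-- `Φ_L(y) = ∑ j d K(y/d)`, over the pairs `(d, j)` in `L`. -/
noncomputable def Phi (L : List (ℕ × ℕ)) (y : ℝ) : ℝ := lsum L fun d => d * KK (y / d)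

/-- `∑ d j` over the pairs `(d, j)` with `d ∣ N`. -/
def betaL : List (ℕ × ℕ) → ℕ → ℕ
  | [], _ => 0
  | q :: L, N => bif Nat.beq (N % q.1) 0 then q.1 * q.2 + betaL L N else betaL L N

theorem betaL_eq (L : List (ℕ × ℕ)) (N : ℕ) :
    (betaL L N : ℝ) = lsum L fun d => if d ∣ N then (d : ℝ) else 0 := by
  induction L with
  | nil => simp [lsum_nil, betaL]
  | cons q L ih =>
    rw [lsum_cons, ← ih, betaL]
    by_cases h : q.1 ∣ N
    · have : N % q.1 = 0 := Nat.mod_eq_zero_of_dvd h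
      simp [this, h, mul_comm]
    · have : N % q.1 ≠ 0 := fun h' => h (Nat.dvd_of_mod_eq_zero h')
      have h2 : Nat.beq (N % q.1) 0 = false := by
        rw [← Bool.not_eq_true, Nat.beq_eq]; exact this
      simp [h2, h]

/-- With `bL`, the coefficients of the piecewise linear function `Φ_L`: one has
`Φ_L(y) = y · aL L ⌊y⌋ - bL L ⌊y⌋` (`Phi_eq`). -/
noncomputable def aL (L : List (ℕ × ℕ)) (N : ℕ) : ℝ := lsum L fun d => HH (N / d)
/-- The constant term of `-Φ_L(y)` on `⌊y⌋ = N`; see `aL`. -/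
noncomputable def bL (L : List (ℕ × ℕ)) (N : ℕ) : ℝ := lsum L fun d => d * ((N / d : ℕ) : ℝ)

theorem Phi_eq (L : List (ℕ × ℕ)) (hL : ∀ q ∈ L, 1 ≤ q.1) (y : ℝ) :
    Phi L y = y * aL L ⌊y⌋₊ - bL L ⌊y⌋₊ := by
  have : ∀ a b : ℝ, a - b = a + (-1) * b := by intros; ring
  rw [this, aL, bL, ← lsum_mul, ← lsum_mul, ← lsum_add, Phi]
  refine lsum_congr _ _ _ fun q hq => ?_
  have : (q.1 : ℝ) ≠ 0 := by have := hL q hq; positivity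
  rw [KK, Nat.floor_div_natCast]
  field_simp; ring

theorem aL_succ (L : List (ℕ × ℕ)) (hL : ∀ q ∈ L, 1 ≤ q.1) (N : ℕ) :
    aL L (N + 1) = aL L N + betaL L (N + 1) / ((N : ℝ) + 1) := by
  rw [betaL_eq, div_eq_inv_mul, ← lsum_mul, aL, aL, ← lsum_add]
  refine lsum_congr _ _ _ fun q hq => ?_
  rw [Nat.succ_div]
  split_ifs with h
  · rw [HH_succ]
    congr 1
    have e : q.1 * (N / q.1 + 1) = N + 1 := by
      have := Nat.mul_div_cancel' h
      rw [Nat.succ_div, if_pos h] at this; exact this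
    have e' : (q.1 : ℝ) * (((N / q.1 : ℕ) : ℝ) + 1) = N + 1 := by exact_mod_cast e
    have : (q.1 : ℝ) ≠ 0 := by have := hL q hq; positivity
    rw [← e']; field_simp
  · simp

theorem bL_succ (L : List (ℕ × ℕ)) (N : ℕ) :
    bL L (N + 1) = bL L N + betaL L (N + 1) := by
  rw [betaL_eq, bL, bL, ← lsum_add]
  refine lsum_congr _ _ _ fun q hq => ?_
  rw [Nat.succ_div]
  split_ifs with h
  · push_cast; ring
  · simp

/-- The check of `Φ_{L₁}(y) - Φ_{L₂}(y) ≥ (Ap - An) (y - 1)` at the two ends of `[M, M+1]` for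
`M = N+1, …, N+n`, in fixed point with unit `2^(-40)`. The arguments after the number `n` of steps are
`N`, a lower approximation `P` of `2^40 · aL L₁ N`, an upper approximation `Q` of `2^40 · aL L₂ N`, and
the exact values `bp`, `bn` of `bL L₁ N`, `bL L₂ N`. -/
def chk (L₁ L₂ : List (ℕ × ℕ)) (Ap An : ℕ) : ℕ → ℕ → ℕ → ℕ → ℕ → ℕ → Bool :=
  fun n => Nat.rec (motive := fun _ => ℕ → ℕ → ℕ → ℕ → ℕ → Bool)
    (fun _ _ _ _ _ => true)
    (fun _ ih N P Q bp bn =>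
      (fun P' Q' bp' bn' =>
        Nat.ble ((N + 1) * Q' + 2 ^ 40 * (bp' + Ap * N)) ((N + 1) * P' + 2 ^ 40 * (bn' + An * N)) &&
        Nat.ble ((N + 2) * Q' + 2 ^ 40 * (bp' + Ap * (N + 1)))
          ((N + 2) * P' + 2 ^ 40 * (bn' + An * (N + 1))) &&
        ih (N + 1) P' Q' bp' bn')
      (P + 2 ^ 40 * betaL L₁ (N + 1) / (N + 1)) (Q + (2 ^ 40 * betaL L₂ (N + 1) + N) / (N + 1))
      (bp + betaL L₁ (N + 1)) (bn + betaL L₂ (N + 1))) n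

/-- The two functions are affine on each `[M, M+1)`, so the check at the ends suffices. -/
theorem chk_sound (L₁ L₂ : List (ℕ × ℕ)) (h₁ : ∀ q ∈ L₁, 1 ≤ q.1) (h₂ : ∀ q ∈ L₂, 1 ≤ q.1)
    (Ap An : ℕ) (n N P Q bp bn : ℕ) (h : chk L₁ L₂ Ap An n N P Q bp bn = true)
    (hP : (P : ℝ) ≤ 2 ^ 40 * aL L₁ N) (hQ : 2 ^ 40 * aL L₂ N ≤ Q) (hbp : (bp : ℝ) = bL L₁ N)
    (hbn : (bn : ℝ) = bL L₂ N) (y : ℝ) (hy1 : (N : ℝ) + 1 ≤ y) (hy2 : y < N + n + 1) :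
    ((Ap : ℝ) - An) * (y - 1) ≤ Phi L₁ y - Phi L₂ y := by
  induction n generalizing N P Q bp bn with
  | zero => exfalso; push_cast at hy2; linarith
  | succ n ih =>
    have hN1 : (0 : ℝ) < (N : ℝ) + 1 := by positivity
    set P' := P + 2 ^ 40 * betaL L₁ (N + 1) / (N + 1) with hP'
    set Q' := Q + (2 ^ 40 * betaL L₂ (N + 1) + N) / (N + 1) with hQ'
    set bp' := bp + betaL L₁ (N + 1) with hbp'
    set bn' := bn + betaL L₂ (N + 1) with hbn'
    have hh : (Nat.ble ((N + 1) * Q' + 2 ^ 40 * (bp' + Ap * N)) ((N + 1) * P' + 2 ^ 40 * (bn' + An * N)) &&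
        Nat.ble ((N + 2) * Q' + 2 ^ 40 * (bp' + Ap * (N + 1)))
          ((N + 2) * P' + 2 ^ 40 * (bn' + An * (N + 1))) &&
        chk L₁ L₂ Ap An n (N + 1) P' Q' bp' bn') = true := h
    simp only [Bool.and_eq_true, Nat.ble_eq] at hh
    obtain ⟨⟨t1, t2⟩, t3⟩ := hh
    have iP : (P' : ℝ) ≤ 2 ^ 40 * aL L₁ (N + 1) := by
      rw [aL_succ _ h₁, hP']
      have := Nat.cast_div_le (α := ℝ) (m := 2 ^ 40 * betaL L₁ (N + 1)) (n := N + 1)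
      push_cast at this ⊢
      rw [mul_add, ← mul_div_assoc]; linarith
    have iQ : 2 ^ 40 * aL L₂ (N + 1) ≤ Q' := by
      rw [aL_succ _ h₂, hQ']
      have h5 : (2 ^ 40 * betaL L₂ (N + 1)) ≤
          (N + 1) * ((2 ^ 40 * betaL L₂ (N + 1) + N) / (N + 1)) := by
        have h6 := Nat.div_add_mod (2 ^ 40 * betaL L₂ (N + 1) + N) (N + 1)
        have h7 := Nat.mod_lt (2 ^ 40 * betaL L₂ (N + 1) + N) (show 0 < N + 1 by omega)
        omega
      have h8 : ((2 ^ 40 * betaL L₂ (N + 1) : ℕ) : ℝ) ≤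
          (((N + 1) * ((2 ^ 40 * betaL L₂ (N + 1) + N) / (N + 1)) : ℕ) : ℝ) := by exact_mod_cast h5
      rw [Nat.cast_mul, Nat.cast_mul] at h8
      push_cast at h8 ⊢
      rw [mul_add, ← mul_div_assoc]
      gcongr
      rw [div_le_iff₀ hN1]; push_cast at h8; linarith
    have ibp : (bp' : ℝ) = bL L₁ (N + 1) := by rw [bL_succ, hbp', ← hbp]; push_cast; ring
    have ibn : (bn' : ℝ) = bL L₂ (N + 1) := by rw [bL_succ, hbn', ← hbn]; push_cast; ring
    rcases lt_or_ge y (N + 2) with hlt | hge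
    · have hf : ⌊y⌋₊ = N + 1 := by
        rw [Nat.floor_eq_iff (by linarith)]; push_cast; constructor <;> linarith
      rw [Phi_eq _ h₁, Phi_eq _ h₂, hf, ← ibp, ← ibn]
      have t1' : (((N + 1) * Q' + 2 ^ 40 * (bp' + Ap * N) : ℕ) : ℝ) ≤
        (((N + 1) * P' + 2 ^ 40 * (bn' + An * N) : ℕ) : ℝ) := by exact_mod_cast t1
      have t2' : (((N + 2) * Q' + 2 ^ 40 * (bp' + Ap * (N + 1)) : ℕ) : ℝ) ≤
        (((N + 2) * P' + 2 ^ 40 * (bn' + An * (N + 1)) : ℕ) : ℝ) := by exact_mod_cast t2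
      push_cast at t1' t2'
      obtain ⟨a, ha⟩ : ∃ a, a = aL L₁ (N + 1) - aL L₂ (N + 1) := ⟨_, rfl⟩
      have ha' : (P' : ℝ) - Q' ≤ 2 ^ 40 * a := by rw [ha]; linarith
      have s1 : 0 ≤ (N + 1) * a - bp' + bn' - (Ap - An) * N := by nlinarith
      have s2 : 0 ≤ (N + 2) * a - bp' + bn' - (Ap - An) * (N + 1) := by nlinarith
      have s3 := mul_nonneg (sub_nonneg.2 hlt.le) s1
      have s4 := mul_nonneg (sub_nonneg.2 hy1) s2
      have : y * aL L₁ (N + 1) - bp' - (y * aL L₂ (N + 1) - bn') = y * a - bp' + bn' := by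
        rw [ha]; ring
      rw [this]
      nlinarith
    · exact ih (N + 1) P' Q' bp' bn' t3 iP iQ ibp ibn (by push_cast; linarith)
        (by push_cast at hy2 ⊢; linarith)

theorem Phi_ge_small (L₁ L₂ : List (ℕ × ℕ)) (h₁ : ∀ q ∈ L₁, 1 ≤ q.1) (h₂ : ∀ q ∈ L₂, 1 ≤ q.1)
    (Ap An n : ℕ) (h : chk L₁ L₂ Ap An n 0 0 0 0 0 = true) (y : ℝ) (hy1 : 1 ≤ y) (hy2 : y < n + 1) :
    ((Ap : ℝ) - An) * (y - 1) ≤ Phi L₁ y - Phi L₂ y := by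
  have ha : ∀ L, aL L 0 = 0 := by
    intro L; rw [aL]
    have := lsum_mul L 0 (fun _ => 0); simp only [zero_mul] at this
    rw [← this]; exact lsum_congr _ _ _ fun q _ => by simp [HH]
  have hb : ∀ L, bL L 0 = 0 := by
    intro L; rw [bL]
    have := lsum_mul L 0 (fun _ => 0); simp only [zero_mul] at this
    rw [← this]; exact lsum_congr _ _ _ fun q _ => by simp
  refine chk_sound L₁ L₂ h₁ h₂ Ap An n 0 0 0 0 0 h ?_ ?_ ?_ ?_ y (by simpa using hy1)
    (by simpa using hy2) <;> simp [ha, hb]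

theorem Phi_asymp (L : List (ℕ × ℕ)) (hL : ∀ q ∈ L, 1 ≤ q.1) (y : ℝ)
    (hy : ∀ q ∈ L, (q.1 : ℝ) * 20 ≤ y) (hy0 : 0 < y) :
    |Phi L y - ((y * log y + (eulerMascheroniConstant - 1) * y) * lsum L (fun _ => 1)
      - y * lsum L (fun d => log d) + 1 / 2 * lsum L (fun d => d))| ≤
      1 / (4 * y) * lsum L (fun d => (d : ℝ) ^ 2) := by
  have e : (y * log y + (eulerMascheroniConstant - 1) * y) * lsum L (fun _ => 1)
      - y * lsum L (fun d => log d) + 1 / 2 * lsum L (fun d => d) =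
      lsum L (fun d => (y * log y + (eulerMascheroniConstant - 1) * y) * 1 +
        ((-y) * log d + 1 / 2 * d)) := by
    rw [lsum_add, lsum_add, lsum_mul, lsum_mul, lsum_mul]; ring
  rw [e, ← lsum_mul, Phi]
  refine lsum_abs_sub _ _ _ _ fun q hq => ?_
  have hd : (0 : ℝ) < q.1 := by have := hL q hq; positivity
  have h1 := KK_asymp (y / q.1) (by rw [le_div_iff₀ hd]; linarith [hy q hq])
  have e2 : (q.1 : ℝ) * KK (y / q.1) - ((y * log y + (eulerMascheroniConstant - 1) * y) * 1 +
        ((-y) * log q.1 + 1 / 2 * q.1)) =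
      q.1 * (KK (y / q.1) - (y / q.1 * log (y / q.1) +
        (eulerMascheroniConstant - 1) * (y / q.1) + 1 / 2)) := by
    rw [Real.log_div hy0.ne' hd.ne']; field_simp; ring
  rw [e2, abs_mul, abs_of_pos hd]
  calc (q.1 : ℝ) * _ ≤ q.1 * (1 / (4 * (y / q.1))) := by gcongr
    _ = _ := by field_simp

/-- `Φ_{L₁} - Φ_{L₂}` dominates `α (y - 1)` on `[1, ∞)`: by `chk` for `y < n + 1`, and by the
asymptotics of `K` beyond, where the main term is `α y + ½ ∑ ± j d` because `∑ ± j = 0`. -/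
theorem Phi_ge (L₁ L₂ : List (ℕ × ℕ)) (h₁ : ∀ q ∈ L₁, 1 ≤ q.1) (h₂ : ∀ q ∈ L₂, 1 ≤ q.1)
    (Ap An n D : ℕ) (h : chk L₁ L₂ Ap An n 0 0 0 0 0 = true)
    (d₁ : ∀ q ∈ L₁, q.1 ≤ D) (d₂ : ∀ q ∈ L₂, q.1 ≤ D) (hDn : D * 20 ≤ n)
    (h0 : lsum L₁ (fun _ => 1) = lsum L₂ (fun _ => 1)) (α : ℝ)
    (hα : α = lsum L₂ (fun d => log d) - lsum L₁ (fun d => log d)) (hA : α ≤ (Ap : ℝ) - An)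
    (hn : 0 < n)
    (ht : (lsum L₁ (fun d => (d : ℝ) ^ 2) + lsum L₂ (fun d => (d : ℝ) ^ 2)) / (4 * n) ≤
      1 / 2 * (lsum L₁ (fun d => d) - lsum L₂ (fun d => d)) + α)
    (y : ℝ) (hy : 1 ≤ y) : α * (y - 1) ≤ Phi L₁ y - Phi L₂ y := by
  rcases lt_or_ge y (n + 1) with hlt | hge
  · refine le_trans ?_ (Phi_ge_small L₁ L₂ h₁ h₂ Ap An n h y hy hlt)
    have : 0 ≤ y - 1 := by linarith
    gcongr
  · have hy0 : 0 < y := by linarith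
    have hny : (n : ℝ) ≤ y := by linarith
    have hD : ∀ q : ℕ × ℕ, q.1 ≤ D → (q.1 : ℝ) * 20 ≤ y := by
      intro q hq
      have : q.1 * 20 ≤ n := by omega
      have : ((q.1 * 20 : ℕ) : ℝ) ≤ n := by exact_mod_cast this
      push_cast at this; linarith
    have a1 := abs_le.1 (Phi_asymp L₁ h₁ y (fun q hq => hD q (d₁ q hq)) hy0)
    have a2 := abs_le.1 (Phi_asymp L₂ h₂ y (fun q hq => hD q (d₂ q hq)) hy0)
    rw [h0] at a1
    have hpos : 0 ≤ lsum L₁ (fun d => (d : ℝ) ^ 2) + lsum L₂ (fun d => (d : ℝ) ^ 2) := by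
      have z := fun L => lsum_le L (fun _ => 0 * 0) (fun d => (d : ℝ) ^ 2) fun q _ => by simp
      have z1 := z L₁; have z2 := z L₂
      rw [lsum_mul] at z1 z2; linarith
    have n0 : (0 : ℝ) < n := by exact_mod_cast hn
    have ht' : (lsum L₁ (fun d => (d : ℝ) ^ 2) + lsum L₂ (fun d => (d : ℝ) ^ 2)) / (4 * y) ≤
        (lsum L₁ (fun d => (d : ℝ) ^ 2) + lsum L₂ (fun d => (d : ℝ) ^ 2)) / (4 * n) := by gcongr
    have e : (lsum L₁ (fun d => (d : ℝ) ^ 2) + lsum L₂ (fun d => (d : ℝ) ^ 2)) / (4 * y) =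
      1 / (4 * y) * lsum L₁ (fun d => (d : ℝ) ^ 2) + 1 / (4 * y) * lsum L₂ (fun d => (d : ℝ) ^ 2) := by
      ring
    have e2 : α * (y - 1) = y * lsum L₂ (fun d => log d) - y * lsum L₁ (fun d => log d) - α := by
      rw [hα]; ring
    linarith [a1.1, a2.2]

/-! ### The coefficients, and logarithms of small integers -/

/-- Positive part of the coefficients for the upper bound of `S`: the pairs `(d, j)` with coefficient
`j` of `d K(y/d)`. The coefficients are scaled so that `α` is about `10^7`. -/
def LUp : List (ℕ × ℕ) := [(1, 10000060), (6, 1666677), (9, 207166), (10, 658699), (13, 173920),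
  (16, 208754), (20, 235681), (22, 347800), (24, 89637)]
/-- Negative part of the coefficients for the upper bound of `S`. The sum of the `j` agrees with that of
`LUp`. -/
def LUm : List (ℕ × ℕ) := [(2, 5000030), (3, 3333353), (5, 2000012), (7, 1392067), (8, 73026),
  (11, 605919), (12, 130593), (14, 101949), (15, 179878), (17, 61035), (18, 103583), (19, 319846),
  (21, 68884), (23, 218219)]
/-- Positive part of the coefficients for the lower bound of `S`. It is used with the opposite sign:
`Φ_{LLm} - Φ_{LLp} ≥ -α' (y - 1)` with `α'` about `10^7`. -/
def LLp : List (ℕ × ℕ) := [(1, 9999940), (6, 1538716), (10, 378611), (12, 118273), (14, 49178),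
  (15, 345145), (17, 43695), (18, 17839), (21, 390894), (22, 119948)]
/-- Negative part of the coefficients for the lower bound of `S`; see `LLp`. -/
def LLm : List (ℕ × ℕ) := [(2, 4999970), (3, 3333313), (5, 1999988), (7, 1172681), (8, 127941),
  (11, 363614), (13, 119585), (16, 218293), (19, 90185), (20, 219644), (23, 311864), (24, 45161)]

/-- The minorant with `10000010 (y - 1)` on `[1, 1501)`; this slope is slightly larger than the
`α` of `LUp` and `LUm`. -/
theorem chkU : chk LUp LUm 10000010 0 1500 0 0 0 0 0 = true := by decide +kernel
/-- The minorant with `-9999990 (y - 1)` on `[1, 1501)`; this slope is slightly larger than the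
`α` of `LLm` and `LLp`. -/
theorem chkL : chk LLm LLp 0 9999990 1500 0 0 0 0 0 = true := by decide +kernel

theorem log_step (m : ℝ) (hm : 0 < m) : log (m + 1) = log m + log (1 + 1 / m) := by
  rw [← Real.log_mul hm.ne' (by positivity)]
  congr 1; field_simp

/-- `⌊10^8 log d⌋` (up to a few units) for `1 ≤ d ≤ 24`. -/
def lgTab (d : ℕ) : ℕ := [0, 0, 69314718, 109861228, 138629436, 160943791, 179175946, 194591014,
  207944154, 219722457, 230258509, 239789527, 248490664, 256494935, 263905732, 270805020, 277258872,
  283321334, 289037175, 294443897, 299573227, 304452243, 309104245, 313549421, 317805383].getD d 0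

theorem lgTab_spec (d : ℕ) (h1 : 1 ≤ d) (h2 : d ≤ 24) :
    ((lgTab d : ℝ) - 5) / 10 ^ 8 ≤ log d ∧ log d ≤ ((lgTab d : ℝ) + 15) / 10 ^ 8 := by
  have l2 := Real.log_two_gt_d9
  have u2 := Real.log_two_lt_d9
  have st : ∀ m : ℝ, 0 < m → ∀ n : ℕ, _ := fun m hm n =>
    And.intro (log_atanh_lower m hm n) (log_atanh_upper m hm n)
  have a2 := st 2 (by norm_num) 6
  have a4 := st 4 (by norm_num) 5
  have a6 := st 6 (by norm_num) 4
  have a10 := st 10 (by norm_num) 3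
  have a12 := st 12 (by norm_num) 3
  have a16 := st 16 (by norm_num) 3
  have a18 := st 18 (by norm_num) 3
  have a22 := st 22 (by norm_num) 3
  simp only [Finset.sum_range_succ, Finset.sum_range_zero] at a2 a4 a6 a10 a12 a16 a18 a22
  have e3 := log_step 2 (by norm_num)
  have e5 := log_step 4 (by norm_num)
  have e7 := log_step 6 (by norm_num)
  have e11 := log_step 10 (by norm_num)
  have e13 := log_step 12 (by norm_num)
  have e17 := log_step 16 (by norm_num)
  have e19 := log_step 18 (by norm_num)
  have e23 := log_step 22 (by norm_num)
  have m : ∀ a b : ℝ, 0 < a → 0 < b → log (a * b) = log a + log b :=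
    fun a b ha hb => Real.log_mul ha.ne' hb.ne'
  have f4 := m 2 2 (by norm_num) (by norm_num)
  have f6 := m 2 3 (by norm_num) (by norm_num)
  have f8 := m 2 4 (by norm_num) (by norm_num)
  have f9 := m 3 3 (by norm_num) (by norm_num)
  have f10 := m 2 5 (by norm_num) (by norm_num)
  have f12 := m 2 6 (by norm_num) (by norm_num)
  have f14 := m 2 7 (by norm_num) (by norm_num)
  have f15 := m 3 5 (by norm_num) (by norm_num)
  have f16 := m 2 8 (by norm_num) (by norm_num)
  have f18 := m 2 9 (by norm_num) (by norm_num)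
  have f20 := m 2 10 (by norm_num) (by norm_num)
  have f21 := m 3 7 (by norm_num) (by norm_num)
  have f22 := m 2 11 (by norm_num) (by norm_num)
  have f24 := m 2 12 (by norm_num) (by norm_num)
  norm_num at a2 a4 a6 a10 a12 a16 a18 a22 e3 e5 e7 e11 e13 e17 e19 e23 f4 f6 f8 f9 f10 f12 f14 f15 f16 f18 f20 f21 f22 f24
  obtain ⟨c3, c3'⟩ := a2
  obtain ⟨c5, c5'⟩ := a4
  obtain ⟨c7, c7'⟩ := a6
  obtain ⟨c11, c11'⟩ := a10
  obtain ⟨c13, c13'⟩ := a12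
  obtain ⟨c17, c17'⟩ := a16
  obtain ⟨c19, c19'⟩ := a18
  obtain ⟨c23, c23'⟩ := a22
  interval_cases d <;> simp only [lgTab, List.getD_cons_succ, List.getD_cons_zero] <;> norm_num
  all_goals constructor <;> linarith

/-! ### Chebyshev-type bounds for `S` -/

/-- `S(u) = ∑_{n ≤ u} Λ(n) (1/n - 1/u)`. -/
noncomputable def SS (u : ℝ) : ℝ :=
  ∑ n ∈ Finset.Ioc 0 ⌊u⌋₊, ArithmeticFunction.vonMangoldt n * (1 / n - 1 / u)

theorem KK_small (y : ℝ) (hy : y < 1) : KK y = 0 := by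
  have : ⌊y⌋₊ = 0 := by rw [Nat.floor_eq_zero]; exact hy
  simp [KK, this, HH]

theorem sum_vM_Phi (L : List (ℕ × ℕ)) (hL : ∀ q ∈ L, 1 ≤ q.1) (u : ℝ) (hu : 0 ≤ u) :
    ∑ n ∈ Finset.Ioc 0 ⌊u⌋₊, ArithmeticFunction.vonMangoldt n * Phi L (u / n) =
      lsum L fun d => d * BB (u / d) := by
  have h1 : ∀ n : ℕ, ArithmeticFunction.vonMangoldt n * Phi L (u / n) =
      lsum L fun d => ArithmeticFunction.vonMangoldt n * (d * KK (u / n / d)) := by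
    intro n; rw [lsum_mul]; rfl
  simp only [h1]
  rw [← lsum_sum]
  refine lsum_congr _ _ _ fun q hq => ?_
  have hd1 : (1 : ℝ) ≤ q.1 := by exact_mod_cast hL q hq
  rw [BB_eq, Finset.mul_sum]
  symm
  have hle : u / q.1 ≤ u := div_le_self hu hd1
  have hsub : Finset.Ioc 0 ⌊u / q.1⌋₊ ⊆ Finset.Ioc 0 ⌊u⌋₊ :=
    Finset.Ioc_subset_Ioc_right (Nat.floor_le_floor hle)
  rw [Finset.sum_subset hsub]
  · refine Finset.sum_congr rfl fun n _ => ?_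
    rw [div_right_comm]; ring
  · intro n hn hn'
    rw [Finset.mem_Ioc] at hn hn'
    have h2 : ⌊u / q.1⌋₊ < n := by by_contra h; exact hn' ⟨hn.1, by omega⟩
    have h3 : u / q.1 < n := Nat.lt_of_floor_lt h2
    rw [KK_small, mul_zero, mul_zero]
    have : (0 : ℝ) < n := by exact_mod_cast hn.1
    rwa [div_lt_one this]

theorem lsum_BB_bound (κ : ℝ)
    (hκ : ∀ w : ℝ, 3 ≤ w → |BB w - w * (log w ^ 2 / 2 - log w + κ)| ≤ 1 + 7 / 3 * log w)
    (L : List (ℕ × ℕ)) (hL : ∀ q ∈ L, 1 ≤ q.1 ∧ q.1 ≤ 24) (u : ℝ) (hu : 72 ≤ u) :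
    |lsum L (fun d => d * BB (u / d)) - u * ((log u ^ 2 / 2 - log u + κ) * lsum L (fun _ => 1) +
      (1 - log u) * lsum L (fun d => log d) + 1 / 2 * lsum L (fun d => log d ^ 2))| ≤
      (1 + 7 / 3 * log u) * lsum L (fun d => d) := by
  have hu0 : 0 < u := by linarith
  have e : u * ((log u ^ 2 / 2 - log u + κ) * lsum L (fun _ => 1) +
      (1 - log u) * lsum L (fun d => log d) + 1 / 2 * lsum L (fun d => log d ^ 2)) =
      lsum L fun d => u * ((log u ^ 2 / 2 - log u + κ) * 1 + ((1 - log u) * log d +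
        1 / 2 * log d ^ 2)) := by
    rw [lsum_mul, lsum_add, lsum_add, lsum_mul, lsum_mul, lsum_mul]; ring
  rw [e, ← lsum_mul]
  refine lsum_abs_sub _ _ _ _ fun q hq => ?_
  have hd1 : (1 : ℝ) ≤ q.1 := by exact_mod_cast (hL q hq).1
  have hd2 : (q.1 : ℝ) ≤ 24 := by exact_mod_cast (hL q hq).2
  have hd0 : (0 : ℝ) < q.1 := by linarith
  have h1 := hκ (u / q.1) (by rw [le_div_iff₀ hd0]; nlinarith)
  have hlog : log (u / q.1) = log u - log q.1 := Real.log_div hu0.ne' hd0.ne'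
  have e2 : (q.1 : ℝ) * BB (u / q.1) - u * ((log u ^ 2 / 2 - log u + κ) * 1 +
      ((1 - log u) * log q.1 + 1 / 2 * log q.1 ^ 2)) =
      q.1 * (BB (u / q.1) - u / q.1 * (log (u / q.1) ^ 2 / 2 - log (u / q.1) + κ)) := by
    rw [hlog]; field_simp; ring
  rw [e2, abs_mul, abs_of_pos hd0, mul_comm]
  refine mul_le_mul_of_nonneg_right (h1.trans ?_) hd0.le
  have := Real.log_nonneg hd1
  rw [hlog]; linarith

/-- One-sided bound for `S` from a minorant of the shape `α (y - 1) ≤ Φ(y)`. -/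
theorem SS_general (L₁ L₂ : List (ℕ × ℕ)) (h₁ : ∀ q ∈ L₁, 1 ≤ q.1 ∧ q.1 ≤ 24)
    (h₂ : ∀ q ∈ L₂, 1 ≤ q.1 ∧ q.1 ≤ 24)
    (h0 : lsum L₁ (fun _ => 1) = lsum L₂ (fun _ => 1)) (α : ℝ)
    (hα : α = lsum L₂ (fun d => log d) - lsum L₁ (fun d => log d))
    (H : ∀ y : ℝ, 1 ≤ y → α * (y - 1) ≤ Phi L₁ y - Phi L₂ y) (u : ℝ) (hu : 72 ≤ u) :
    α * SS u ≤ α * (log u - 1) +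
      1 / 2 * (lsum L₁ (fun d => log d ^ 2) - lsum L₂ (fun d => log d ^ 2)) +
      (1 + 7 / 3 * log u) * (lsum L₁ (fun d => d) + lsum L₂ (fun d => d)) / u := by
  have hu0 : 0 < u := by linarith
  obtain ⟨κ, hκ⟩ := BB_asymp
  have b1 := abs_le.1 (lsum_BB_bound κ hκ L₁ h₁ u hu)
  have b2 := abs_le.1 (lsum_BB_bound κ hκ L₂ h₂ u hu)
  rw [h0] at b1
  have key : u * (α * SS u) ≤
      lsum L₁ (fun d => d * BB (u / d)) - lsum L₂ (fun d => d * BB (u / d)) := by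
    rw [← sum_vM_Phi L₁ (fun q hq => (h₁ q hq).1) u hu0.le,
      ← sum_vM_Phi L₂ (fun q hq => (h₂ q hq).1) u hu0.le, SS, ← Finset.sum_sub_distrib,
      Finset.mul_sum, Finset.mul_sum]
    refine Finset.sum_le_sum fun n hn => ?_
    rw [Finset.mem_Ioc] at hn
    have hn0 : (0 : ℝ) < n := by exact_mod_cast hn.1
    have hnu : (n : ℝ) ≤ u := (Nat.le_floor_iff hu0.le).1 hn.2
    have := H (u / n) (by rwa [le_div_iff₀ hn0, one_mul])
    rw [← mul_sub]
    calc _ = ArithmeticFunction.vonMangoldt n * (α * (u / n - 1)) := by field_simp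
      _ ≤ _ := mul_le_mul_of_nonneg_left this ArithmeticFunction.vonMangoldt_nonneg
  have : u * (α * SS u) ≤ u * (α * (log u - 1) +
      1 / 2 * (lsum L₁ (fun d => log d ^ 2) - lsum L₂ (fun d => log d ^ 2)) +
      (1 + 7 / 3 * log u) * (lsum L₁ (fun d => d) + lsum L₂ (fun d => d)) / u) := by
    rw [mul_add, mul_div_cancel₀ _ hu0.ne', hα] at *
    linarith [b1.2, b2.1]
  exact le_of_mul_le_mul_left this hu0

theorem lsum_log_bounds (L : List (ℕ × ℕ)) (hL : ∀ q ∈ L, 1 ≤ q.1 ∧ q.1 ≤ 24) :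
    lsum L (fun d => ((lgTab d : ℝ) - 5) / 10 ^ 8) ≤ lsum L (fun d => log d) ∧
      lsum L (fun d => log d) ≤ lsum L (fun d => ((lgTab d : ℝ) + 15) / 10 ^ 8) :=
  ⟨lsum_le _ _ _ fun q hq => (lgTab_spec _ (hL q hq).1 (hL q hq).2).1,
    lsum_le _ _ _ fun q hq => (lgTab_spec _ (hL q hq).1 (hL q hq).2).2⟩

theorem lsum_g_bounds (L : List (ℕ × ℕ)) (hL : ∀ q ∈ L, 2 ≤ q.1 ∧ q.1 ≤ 24) (lam : ℝ)
    (hlam : -0.6 ≤ lam) :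
    lsum L (fun d => 1 / 2 * (((lgTab d : ℝ) - 5) / 10 ^ 8) ^ 2 + lam * (((lgTab d : ℝ) - 5) / 10 ^ 8)) ≤
      1 / 2 * lsum L (fun d => log d ^ 2) + lam * lsum L (fun d => log d) ∧
    1 / 2 * lsum L (fun d => log d ^ 2) + lam * lsum L (fun d => log d) ≤
      lsum L (fun d => 1 / 2 * (((lgTab d : ℝ) + 15) / 10 ^ 8) ^ 2 +
        lam * (((lgTab d : ℝ) + 15) / 10 ^ 8)) := by
  rw [← lsum_mul, ← lsum_mul, ← lsum_add]
  have mono : ∀ a b : ℝ, 0.6 ≤ a → a ≤ b → 1 / 2 * a ^ 2 + lam * a ≤ 1 / 2 * b ^ 2 + lam * b := by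
    intro a b ha hab; nlinarith
  have lb : ∀ d : ℕ, 2 ≤ d → d ≤ 24 → 0.6 ≤ ((lgTab d : ℝ) - 5) / 10 ^ 8 := by
    intro d h1 h2
    have : 60000005 ≤ lgTab d := by interval_cases d <;> decide
    have : (60000005 : ℝ) ≤ lgTab d := by exact_mod_cast this
    rw [le_div_iff₀ (by norm_num)]; linarith
  constructor
  · refine lsum_le _ _ _ fun q hq => ?_
    have h := lgTab_spec q.1 (by linarith [(hL q hq).1]) (hL q hq).2
    exact mono _ _ (lb _ (hL q hq).1 (hL q hq).2) h.1
  · refine lsum_le _ _ _ fun q hq => ?_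
    have h := lgTab_spec q.1 (by linarith [(hL q hq).1]) (hL q hq).2
    exact mono _ _ ((lb _ (hL q hq).1 (hL q hq).2).trans h.1) h.2

theorem SS_nonneg (u : ℝ) : 0 ≤ SS u := by
  rcases lt_or_ge u 0 with h | h
  · have : ⌊u⌋₊ = 0 := Nat.floor_of_nonpos h.le
    simp [SS, this]
  refine Finset.sum_nonneg fun n hn => mul_nonneg ArithmeticFunction.vonMangoldt_nonneg ?_
  rw [Finset.mem_Ioc] at hn
  have hn0 : (0 : ℝ) < n := by exact_mod_cast hn.1
  have := one_div_le_one_div_of_le hn0 ((Nat.le_floor_iff h).1 hn.2)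
  linarith

/-- `S(u) ≤ log u`, since `∑_{n ≤ u} Λ(n) ⌊u/n⌋ = log ⌊u⌋!`. -/
theorem SS_le_log (u : ℝ) (hu : 1 ≤ u) : SS u ≤ log u := by
  have hu0 : 0 < u := by linarith
  have h1 : u * SS u ≤ ∑ m ∈ Finset.Ioc 0 ⌊u⌋₊, log m := by
    rw [sum_log, SS, Finset.mul_sum]
    refine Finset.sum_le_sum fun n hn => ?_
    rw [Finset.mem_Ioc] at hn
    have hn0 : (0 : ℝ) < n := by exact_mod_cast hn.1
    have h2 : u / n - 1 ≤ ((⌊u⌋₊ / n : ℕ) : ℝ) := by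
      rw [← Nat.floor_div_natCast]
      have := Nat.lt_floor_add_one (u / (n : ℝ)); linarith
    calc _ = ArithmeticFunction.vonMangoldt n * (u / n - 1) := by field_simp
      _ ≤ _ := mul_le_mul_of_nonneg_left h2 ArithmeticFunction.vonMangoldt_nonneg
  have h2 : ∑ m ∈ Finset.Ioc 0 ⌊u⌋₊, log m ≤ u * log u := by
    calc ∑ m ∈ Finset.Ioc 0 ⌊u⌋₊, log (m : ℝ) ≤ ∑ m ∈ Finset.Ioc 0 ⌊u⌋₊, log u := by
          refine Finset.sum_le_sum fun m hm => ?_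
          rw [Finset.mem_Ioc] at hm
          exact Real.log_le_log (by exact_mod_cast hm.1) ((Nat.le_floor_iff hu0.le).1 hm.2)
      _ = ⌊u⌋₊ * log u := by simp
      _ ≤ _ := by
        have := Nat.floor_le hu0.le
        have := Real.log_nonneg hu
        gcongr
  exact le_of_mul_le_mul_left (h1.trans h2) hu0

theorem log72 : log 72 ≤ 4.28 := by
  have h := (lgTab_spec 2 (by norm_num) (by norm_num)).2
  have h' := (lgTab_spec 3 (by norm_num) (by norm_num)).2
  have e : log 72 = 3 * log (2 : ℕ) + 2 * log (3 : ℕ) := by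
    rw [show (72 : ℝ) = 2 ^ 3 * 3 ^ 2 by norm_num, Real.log_mul (by norm_num) (by norm_num),
      Real.log_pow, Real.log_pow]; push_cast; ring
  simp only [lgTab, List.getD_cons_succ, List.getD_cons_zero] at h h'
  push_cast at h h' e
  linarith


theorem LUp_num : 804904225 / 100 ≤ lsum LUp (fun d => log d) ∧
    lsum LUp (fun d => log d) ≤ 804904498 / 100 ∧
    484414511 / 100 ≤ 1 / 2 * lsum LUp (fun d => log d ^ 2) + (-0.57444) * lsum LUp (fun d => log d) ∧
    1 / 2 * lsum LUp (fun d => log d ^ 2) + (-0.57444) * lsum LUp (fun d => log d) ≤ 484414632 / 100 ∧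
    lsum LUp (fun _ => 1) = 13588394 ∧ lsum LUp (fun d => d) = 48569138 ∧
    lsum LUp (fun d => (d : ℝ) ^ 2) = 549722794 := by
  have n1 := lsum_log_bounds LUp (by decide)
  have q1 := lsum_g_bounds LUp.tail (by decide) (-0.57444) (by norm_num)
  have q3 : lsum LUp.tail (fun d => log d ^ 2) = lsum LUp (fun d => log d ^ 2) := by
    rw [show LUp = (1, 10000060) :: LUp.tail from rfl, lsum_cons]; simp
  have q4 : lsum LUp.tail (fun d => log d) = lsum LUp (fun d => log d) := by
    rw [show LUp = (1, 10000060) :: LUp.tail from rfl, lsum_cons]; simp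
  rw [q3, q4] at q1
  refine ⟨le_trans ?_ n1.1, n1.2.trans ?_, le_trans ?_ q1.1, q1.2.trans ?_, ?_, ?_, ?_⟩ <;>
  · simp only [LUp, List.tail_cons, lsum_cons, lsum_nil, lgTab, List.getD_cons_succ, List.getD_cons_zero]
    norm_num

theorem LUm_num : 1804904277 / 100 ≤ lsum LUm (fun d => log d) ∧
    lsum LUm (fun d => log d) ≤ 1804904550 / 100 ∧
    484424636 / 100 ≤ 1 / 2 * lsum LUm (fun d => log d ^ 2) + (-0.57444) * lsum LUm (fun d => log d) ∧
    1 / 2 * lsum LUm (fun d => log d ^ 2) + (-0.57444) * lsum LUm (fun d => log d) ≤ 484424841 / 100 ∧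
    lsum LUm (fun _ => 1) = 13588394 ∧ lsum LUm (fun d => d) = 68131301 ∧
    lsum LUm (fun d => (d : ℝ) ^ 2) = 637941797 := by
  have n1 := lsum_log_bounds LUm (by decide)
  have q1 := lsum_g_bounds LUm (by decide) (-0.57444) (by norm_num)
  refine ⟨le_trans ?_ n1.1, n1.2.trans ?_, le_trans ?_ q1.1, q1.2.trans ?_, ?_, ?_, ?_⟩ <;>
  · simp only [LUm, List.tail_cons, lsum_cons, lsum_nil, lgTab, List.getD_cons_succ, List.getD_cons_zero]
    norm_num

theorem LLp_num : 672335176 / 100 ≤ lsum LLp (fun d => log d) ∧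
    lsum LLp (fun d => log d) ≤ 672335437 / 100 ∧
    400709262 / 100 ≤ 1 / 2 * lsum LLp (fun d => log d ^ 2) + (-0.58052) * lsum LLp (fun d => log d) ∧
    1 / 2 * lsum LLp (fun d => log d ^ 2) + (-0.58052) * lsum LLp (fun d => log d) ≤ 400709362 / 100 ∧
    lsum LLp (fun _ => 1) = 13002239 ∧ lsum LLp (fun d => d) = 42214836 ∧
    lsum LLp (fun d => (d : ℝ) ^ 2) = 456429418 := by
  have n1 := lsum_log_bounds LLp (by decide)
  have q1 := lsum_g_bounds LLp.tail (by decide) (-0.58052) (by norm_num)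
  have q3 : lsum LLp.tail (fun d => log d ^ 2) = lsum LLp (fun d => log d ^ 2) := by
    rw [show LLp = (1, 9999940) :: LLp.tail from rfl, lsum_cons]; simp
  have q4 : lsum LLp.tail (fun d => log d) = lsum LLp (fun d => log d) := by
    rw [show LLp = (1, 9999940) :: LLp.tail from rfl, lsum_cons]; simp
  rw [q3, q4] at q1
  refine ⟨le_trans ?_ n1.1, n1.2.trans ?_, le_trans ?_ q1.1, q1.2.trans ?_, ?_, ?_, ?_⟩ <;>
  · simp only [LLp, List.tail_cons, lsum_cons, lsum_nil, lgTab, List.getD_cons_succ, List.getD_cons_zero]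
    norm_num

theorem LLm_num : 1672335240 / 100 ≤ lsum LLm (fun d => log d) ∧
    lsum LLm (fun d => log d) ≤ 1672335501 / 100 ∧
    400694891 / 100 ≤ 1 / 2 * lsum LLm (fun d => log d ^ 2) + (-0.58052) * lsum LLm (fun d => log d) ∧
    1 / 2 * lsum LLm (fun d => log d ^ 2) + (-0.58052) * lsum LLm (fun d => log d) ≤ 400695075 / 100 ∧
    lsum LLm (fun _ => 1) = 13002239 ∧ lsum LLm (fun d => d) = 62642292 ∧
    lsum LLm (fun d => (d : ℝ) ^ 2) = 597142334 := by
  have n1 := lsum_log_bounds LLm (by decide)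
  have q1 := lsum_g_bounds LLm (by decide) (-0.58052) (by norm_num)
  refine ⟨le_trans ?_ n1.1, n1.2.trans ?_, le_trans ?_ q1.1, q1.2.trans ?_, ?_, ?_, ?_⟩ <;>
  · simp only [LLm, List.tail_cons, lsum_cons, lsum_nil, lgTab, List.getD_cons_succ, List.getD_cons_zero]
    norm_num

theorem SS_upper_big (u : ℝ) (hu : 72 ≤ u) :
    SS u ≤ log u - 1 - 0.57444 + 40 * (1 + log u) / u := by
  obtain ⟨a1, a2, a3, a4, a5, a6, a7⟩ := LUp_num
  obtain ⟨b1, b2, b3, b4, b5, b6, b7⟩ := LUm_num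
  obtain ⟨α, hα⟩ : ∃ α, α = lsum LUm (fun d => log d) - lsum LUp (fun d => log d) := ⟨_, rfl⟩
  have h0 : lsum LUp (fun _ => 1) = lsum LUm (fun _ => 1) := by rw [a5, b5]
  have H := Phi_ge LUp LUm (by decide) (by decide) 10000010 0 1500 24 chkU (by decide) (by decide)
    (by norm_num) h0 α hα (by rw [hα]; push_cast; linarith) (by norm_num)
    (by rw [a7, b7, a6, b6, hα]; push_cast; linarith)
  have hg := SS_general LUp LUm (by decide) (by decide) h0 α hα H u hu
  rw [a6, b6] at hg
  have hu0 : 0 < u := by linarith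
  have hlog : 0 ≤ log u := Real.log_nonneg (by linarith)
  have herr : (1 + 7 / 3 * log u) * ((48569138 : ℝ) + 68131301) / u ≤ 300000000 * ((1 + log u) / u) := by
    rw [← mul_div_assoc]
    refine div_le_div_of_nonneg_right ?_ hu0.le
    linarith
  have hX : 0 ≤ (1 + log u) / u := by positivity
  rw [mul_div_assoc]
  by_contra hcon
  push Not at hcon
  have hα0 : 9900000 ≤ α := by rw [hα]; linarith
  have hb : 1 / 2 * (lsum LUp (fun d => log d ^ 2) - lsum LUm (fun d => log d ^ 2)) ≤
      -0.57444 * α := by rw [hα]; linarith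
  have := mul_le_mul_of_nonneg_left hcon.le (show 0 ≤ α by linarith)
  have := mul_le_mul_of_nonneg_right hα0 hX
  have : 0 < (1 + log u) / u := by positivity
  linarith

theorem SS_lower_big (u : ℝ) (hu : 72 ≤ u) :
    log u - 1 - 0.58052 - 40 * (1 + log u) / u ≤ SS u := by
  obtain ⟨a1, a2, a3, a4, a5, a6, a7⟩ := LLm_num
  obtain ⟨b1, b2, b3, b4, b5, b6, b7⟩ := LLp_num
  obtain ⟨α, hα⟩ : ∃ α, α = lsum LLp (fun d => log d) - lsum LLm (fun d => log d) := ⟨_, rfl⟩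
  have h0 : lsum LLm (fun _ => 1) = lsum LLp (fun _ => 1) := by rw [a5, b5]
  have H := Phi_ge LLm LLp (by decide) (by decide) 0 9999990 1500 24 chkL (by decide) (by decide)
    (by norm_num) h0 α hα (by rw [hα]; push_cast; linarith) (by norm_num)
    (by rw [a7, b7, a6, b6, hα]; push_cast; linarith)
  have hg := SS_general LLm LLp (by decide) (by decide) h0 α hα H u hu
  rw [a6, b6] at hg
  have hu0 : 0 < u := by linarith
  have hlog : 0 ≤ log u := Real.log_nonneg (by linarith)
  have herr : (1 + 7 / 3 * log u) * ((62642292 : ℝ) + 42214836) / u ≤ 300000000 * ((1 + log u) / u) := by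
    rw [← mul_div_assoc]
    refine div_le_div_of_nonneg_right ?_ hu0.le
    linarith
  have hX : 0 ≤ (1 + log u) / u := by positivity
  rw [mul_div_assoc]
  by_contra hcon
  push Not at hcon
  have hα0 : α ≤ -9900000 := by rw [hα]; linarith
  have hb : 1 / 2 * (lsum LLm (fun d => log d ^ 2) - lsum LLp (fun d => log d ^ 2)) ≤
      -0.58052 * α := by rw [hα]; linarith
  have := mul_le_mul_of_nonpos_left hcon.le (show α ≤ 0 by linarith)
  have := mul_le_mul_of_nonneg_right hα0 hX
  have : 0 < (1 + log u) / u := by positivity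
  linarith

theorem SS_small_aux (u : ℝ) (h2 : 2 ≤ u) (hu : u < 72) :
    log u - 1 - 0.57444 ≤ 40 * (1 + log u) / u := by
  have h1 : log u ≤ 4.28 := (Real.log_le_log (by linarith) hu.le).trans log72
  have h0 : 0 ≤ log u := Real.log_nonneg (by linarith)
  rw [le_div_iff₀ (by linarith)]
  rcases le_or_gt (log u - 1 - 0.57444) 0 with h | h
  · nlinarith
  · nlinarith

/-- The limit of `log u - S(u)` is `1 + γ = 1.57721…`, so the constant loses less than `0.003`. -/
theorem SS_upper (u : ℝ) (hu : 2 ≤ u) :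
    SS u ≤ log u - 1 - 0.57444 + 40 * (1 + log u) / u := by
  rcases le_or_gt 72 u with h | h
  · exact SS_upper_big u h
  · have h1 := SS_le_log u (by linarith)
    have h0 : 0 ≤ log u := Real.log_nonneg (by linarith)
    have h4 : 1.57444 ≤ 40 * (1 + log u) / u := by
      rw [le_div_iff₀ (by linarith)]
      rcases le_or_gt 24 u with h5 | h5
      · have h6 := (lgTab_spec 24 (by norm_num) (by norm_num)).1
        simp only [lgTab, List.getD_cons_succ, List.getD_cons_zero] at h6
        have h7 := Real.log_le_log (by norm_num) h5
        push_cast at h6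
        linarith
      · linarith
    linarith

/-- The limit of `log u - S(u)` is `1 + γ = 1.57721…`, so the constant loses less than `0.004`. -/
theorem SS_lower (u : ℝ) (hu : 2 ≤ u) :
    log u - 1 - 0.58052 - 40 * (1 + log u) / u ≤ SS u := by
  rcases le_or_gt 72 u with h | h
  · exact SS_lower_big u h
  · have := SS_small_aux u hu h; have := SS_nonneg u; linarith

/-! ### `U` as an integral of `S` -/

/-- Weight for passing from `S` to `U`. -/
noncomputable def wt (y v : ℝ) : ℝ :=
  1 / (v * log v ^ 2) + 1 / (y * log v ^ 2) + 2 * (1 - v / y) / (v * log v ^ 3)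

/-- Primitive of `-wt y`. -/
noncomputable def WW (y v : ℝ) : ℝ := 1 / log v + (1 - v / y) / log v ^ 2

/-- The difference of two weights `wt x v - wt y v` is `(1/x - 1/y) kk v` (`wt_sub`). -/
noncomputable def kk (v : ℝ) : ℝ := 1 / log v ^ 2 - 2 / log v ^ 3

/-- The logarithmic integral from `2`. -/
noncomputable def JJ (x : ℝ) : ℝ := ∫ v in (2 : ℝ)..x, 1 / log v

theorem log_pos' {v : ℝ} (hv : 2 ≤ v) : 0 < log v := Real.log_pos (by linarith)

theorem hasDerivAt_WW (y v : ℝ) (hy : 2 ≤ y) (hv : 2 ≤ v) :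
    HasDerivAt (WW y) (-wt y v) v := by
  have hl := log_pos' hv
  have hv0 : v ≠ 0 := by linarith
  have hy0 : y ≠ 0 := by linarith
  have h1 := Real.hasDerivAt_log hv0
  have h2 : HasDerivAt (fun v : ℝ => 1 - v / y) (-(1 / y)) v := by
    have := ((hasDerivAt_id v).div_const y).const_sub 1
    exact this
  have := ((hasDerivAt_const v (1 : ℝ)).div h1 hl.ne').add (h2.div (h1.pow 2) (by simpa using hl.ne'))
  refine this.congr_deriv ?_
  simp only [wt, Nat.cast_ofNat, Pi.pow_apply]
  field_simp
  ring

theorem contOn_log : ContinuousOn log (Set.Ici (2 : ℝ)) :=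
  Real.continuousOn_log.mono fun v hv => by
    simp only [Set.mem_Ici] at hv; simp only [Set.mem_compl_iff, Set.mem_singleton_iff]; linarith

theorem continuousOn_wt (y : ℝ) (hy : 2 ≤ y) : ContinuousOn (wt y) (Set.Ici 2) := by
  have hl : ∀ v ∈ Set.Ici (2 : ℝ), log v ≠ 0 := fun v hv => (log_pos' hv).ne'
  have hv0 : ∀ v ∈ Set.Ici (2 : ℝ), v ≠ 0 := fun v hv => by
    simp only [Set.mem_Ici] at hv; linarith
  have hy0 : y ≠ 0 := by linarith
  have := contOn_log
  unfold wt
  refine ((continuousOn_const.div (continuousOn_id.mul (this.pow 2)) ?_).add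
    (continuousOn_const.div (continuousOn_const.mul (this.pow 2)) ?_)).add
    ((continuousOn_const.mul (continuousOn_const.sub (continuousOn_id.div_const y))).div
      (continuousOn_id.mul (this.pow 3)) ?_)
  · exact fun v hv => mul_ne_zero (hv0 v hv) (pow_ne_zero _ (hl v hv))
  · exact fun v hv => mul_ne_zero hy0 (pow_ne_zero _ (hl v hv))
  · exact fun v hv => mul_ne_zero (hv0 v hv) (pow_ne_zero _ (hl v hv))

theorem continuousOn_kk : ContinuousOn kk (Set.Ici 2) := by
  have hl : ∀ v ∈ Set.Ici (2 : ℝ), log v ≠ 0 := fun v hv => (log_pos' hv).ne'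
  exact (continuousOn_const.div (contOn_log.pow 2) fun v hv => pow_ne_zero _ (hl v hv)).sub
    (continuousOn_const.div (contOn_log.pow 3) fun v hv => pow_ne_zero _ (hl v hv))

theorem wt_nonneg (y v : ℝ) (hv : 2 ≤ v) (hvy : v ≤ y) : 0 ≤ wt y v := by
  have hl := log_pos' hv
  have : v / y ≤ 1 := by rw [div_le_one (by linarith)]; exact hvy
  have : 0 ≤ 1 - v / y := by linarith
  have : 0 < v := by linarith
  have : 0 < y := by linarith
  unfold wt
  positivity

theorem wt_sub (x y v : ℝ) (hx : 2 ≤ x) (hy : 2 ≤ y) (hv : 2 ≤ v) :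
    wt y v = wt x v - (1 / x - 1 / y) * kk v := by
  have hl := log_pos' hv
  have : v ≠ 0 := by linarith
  have : x ≠ 0 := by linarith
  have : y ≠ 0 := by linarith
  unfold wt kk
  field_simp
  ring

/-- Fundamental theorem of calculus on `[a,b] ⊆ [2,∞)`. -/
theorem ftc2 (F f : ℝ → ℝ) (a b : ℝ) (ha : 2 ≤ a) (hab : a ≤ b)
    (h : ∀ v, 2 ≤ v → HasDerivAt F (f v) v) (hc : ContinuousOn f (Set.Ici 2)) :
    ∫ v in a..b, f v = F b - F a := by
  refine intervalIntegral.integral_eq_sub_of_hasDerivAt (fun v hv => h v ?_) ?_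
  · rw [Set.uIcc_of_le hab] at hv; linarith [hv.1]
  · refine (hc.mono fun v hv => ?_).intervalIntegrable
    rw [Set.uIcc_of_le hab] at hv; exact ha.trans hv.1

theorem intable (f : ℝ → ℝ) (a b : ℝ) (ha : 2 ≤ a) (hab : a ≤ b) (hc : ContinuousOn f (Set.Ici 2)) :
    IntervalIntegrable f MeasureTheory.volume a b := by
  refine (hc.mono fun v hv => ?_).intervalIntegrable
  rw [Set.uIcc_of_le hab] at hv; exact ha.trans hv.1

theorem continuousOn_max (n : ℝ) : ContinuousOn (fun v : ℝ => max 0 (1 / n - 1 / v)) (Set.Ici 2) := by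
  refine continuousOn_const.sup (continuousOn_const.sub (continuousOn_const.div continuousOn_id ?_))
  exact fun v hv => ne_of_gt (lt_of_lt_of_le two_pos (Set.mem_Ici.1 hv))

/-- The contribution of a single integer `n` to `UU_eq`. -/
theorem int_single (n y : ℝ) (hn : 2 ≤ n) (hny : n ≤ y) :
    ∫ v in (2 : ℝ)..y, max 0 (1 / n - 1 / v) * wt y v = (1 / n - 1 / y) * (1 / log n - 1 / log y) := by
  have hy : 2 ≤ y := hn.trans hny
  have hc : ContinuousOn (fun v => max 0 (1 / n - 1 / v) * wt y v) (Set.Ici 2) :=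
    (continuousOn_max n).mul (continuousOn_wt y hy)
  rw [← intervalIntegral.integral_add_adjacent_intervals (intable _ 2 n le_rfl hn hc)
    (intable _ n y hn hny hc)]
  have h1 : ∫ v in (2 : ℝ)..n, max 0 (1 / n - 1 / v) * wt y v = 0 := by
    rw [intervalIntegral.integral_congr (g := fun _ => 0)]
    · simp
    · intro v hv
      rw [Set.uIcc_of_le hn] at hv
      have := one_div_le_one_div_of_le (by linarith [hv.1]) hv.2
      simp only
      rw [max_eq_left (by linarith), zero_mul]
  have h2 : ∫ v in n..y, max 0 (1 / n - 1 / v) * wt y v = ∫ v in n..y, (1 / n - 1 / v) * wt y v := by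
    refine intervalIntegral.integral_congr fun v hv => ?_
    rw [Set.uIcc_of_le hny] at hv
    have := one_div_le_one_div_of_le (by linarith [hv.1]) hv.1
    rw [max_eq_right (by linarith)]
  rw [h1, h2, zero_add, ftc2 (fun v => -((1 / n - 1 / v) * WW y v) - (1 / v - 1 / y) / log v) _ n y hn hny]
  · have : y ≠ 0 := by linarith
    simp only [WW]
    rw [div_self this]
    ring
  · intro v hv
    have hl := log_pos' hv
    have hv0 : v ≠ 0 := by linarith
    have hy0 : y ≠ 0 := by linarith
    have d1 : HasDerivAt (fun v : ℝ => 1 / v) (-(1 / v ^ 2)) v := by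
      refine ((hasDerivAt_inv hv0).congr_of_eventuallyEq ?_).congr_deriv ?_
      · exact Filter.Eventually.of_forall fun v => by simp
      · simp
    have d2 := ((d1.const_sub (1 / n)).mul (hasDerivAt_WW y v hy hv)).neg.sub
      ((d1.sub_const (1 / y)).div (Real.hasDerivAt_log hv0) hl.ne')
    refine d2.congr_deriv ?_
    simp only [WW]
    field_simp
    ring
  · refine (continuousOn_const.sub (continuousOn_const.div continuousOn_id ?_)).mul
      (continuousOn_wt y hy)
    exact fun v hv => ne_of_gt (lt_of_lt_of_le two_pos (Set.mem_Ici.1 hv))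

theorem SS_eq_max (v y : ℝ) (hv : 0 < v) (hvy : v ≤ y) :
    SS v = ∑ n ∈ Finset.Ioc 0 ⌊y⌋₊, ArithmeticFunction.vonMangoldt n * max 0 (1 / (n : ℝ) - 1 / v) := by
  rw [SS]
  have hsub : Finset.Ioc 0 ⌊v⌋₊ ⊆ Finset.Ioc 0 ⌊y⌋₊ :=
    Finset.Ioc_subset_Ioc_right (Nat.floor_le_floor hvy)
  rw [← Finset.sum_subset hsub]
  · refine Finset.sum_congr rfl fun n hn => ?_
    rw [Finset.mem_Ioc] at hn
    have hn0 : (0 : ℝ) < n := by exact_mod_cast hn.1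
    have := one_div_le_one_div_of_le hn0 ((Nat.le_floor_iff hv.le).1 hn.2)
    rw [max_eq_right (by linarith)]
  · intro n hn hn'
    rw [Finset.mem_Ioc] at hn hn'
    have h2 : ⌊v⌋₊ < n := by by_contra h; exact hn' ⟨hn.1, by omega⟩
    have h3 : v < n := Nat.lt_of_floor_lt h2
    have := one_div_le_one_div_of_le hv h3.le
    rw [max_eq_left (by linarith), mul_zero]

theorem SS_intable (a b : ℝ) (ha : 2 ≤ a) (hab : a ≤ b) (f : ℝ → ℝ) (hf : ContinuousOn f (Set.Ici 2)) :
    IntervalIntegrable (fun v => SS v * f v) MeasureTheory.volume a b := by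
  have : ContinuousOn (fun v => (∑ n ∈ Finset.Ioc 0 ⌊b⌋₊,
      ArithmeticFunction.vonMangoldt n * max 0 (1 / (n : ℝ) - 1 / v)) * f v) (Set.Ici 2) :=
    ContinuousOn.mul (continuousOn_finsetSum (Finset.Ioc 0 ⌊b⌋₊)
      fun n _ => (continuousOn_const (c := ArithmeticFunction.vonMangoldt n)).mul
        (continuousOn_max n)) hf
  refine (intable _ a b ha hab this).congr fun v hv => ?_
  rw [Set.uIoc_of_le hab] at hv
  rw [← SS_eq_max v b (by linarith [hv.1]) hv.2]

/-- Passage from the weights `Λ(n)` to `Λ(n)/log n`, by `int_single` for each `n`. -/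
theorem UU_eq (y : ℝ) (hy : 2 ≤ y) :
    UU y = SS y / log y + ∫ v in (2 : ℝ)..y, SS v * wt y v := by
  have h1 : ∫ v in (2 : ℝ)..y, SS v * wt y v = ∫ v in (2 : ℝ)..y, ∑ n ∈ Finset.Ioc 0 ⌊y⌋₊,
      ArithmeticFunction.vonMangoldt n * (max 0 (1 / (n : ℝ) - 1 / v) * wt y v) := by
    refine intervalIntegral.integral_congr fun v hv => ?_
    rw [Set.uIcc_of_le hy] at hv
    rw [SS_eq_max v y (by linarith [hv.1]) hv.2, Finset.sum_mul]
    exact Finset.sum_congr rfl fun n _ => by ring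
  rw [h1, intervalIntegral.integral_finsetSum]
  · simp only [intervalIntegral.integral_const_mul]
    rw [UU, SS, Finset.sum_div, ← Finset.sum_add_distrib]
    refine Finset.sum_congr rfl fun n hn => ?_
    rw [Finset.mem_Ioc] at hn
    rcases Nat.lt_or_ge n 2 with h | h
    · have : n = 1 := by omega
      subst this; simp
    · rw [int_single n y (by exact_mod_cast h) ((Nat.le_floor_iff (by linarith)).1 hn.2)]
      ring
  · intro n _
    exact intable _ 2 y le_rfl hy (continuousOn_const.mul
      ((continuousOn_max n).mul (continuousOn_wt y hy)))

/-! ### Monotonicity of `U` up to a small loss -/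

/-- Error term in the approximation of `SS`. -/
noncomputable def err (v : ℝ) : ℝ := 40 * (1 + log v) / v

/-- Loss in the comparison of `UU x` with its limiting form. -/
noncomputable def rho (x : ℝ) : ℝ :=
  0.00608 / log x + 0.00608 / log x ^ 2 + err x * (2 / log x + 1 / log x ^ 2)
    + (40 * (log (log x) + 3) + 1) / x

theorem err_nonneg (v : ℝ) (hv : 2 ≤ v) : 0 ≤ err v := by
  have := log_pos' hv
  have : 0 < v := by linarith
  unfold err; positivity

theorem err_anti (x v : ℝ) (hx : 2 ≤ x) (hxv : x ≤ v) : err v ≤ err x := by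
  unfold err
  have hx0 : 0 < x := by linarith
  have hv0 : 0 < v := by linarith
  have hl := log_pos' hx
  rw [div_le_div_iff₀ hv0 hx0]
  have h : log v - log x ≤ v / x - 1 := by
    rw [← Real.log_div hv0.ne' hx0.ne']
    exact Real.log_le_sub_one_of_pos (by positivity)
  have h2 : (log v - log x) * x ≤ v - x := by
    have := mul_le_mul_of_nonneg_right h hx0.le
    have e : (v / x - 1) * x = v - x := by field_simp
    rw [e] at this; exact this
  nlinarith

theorem SS_kk_le (v : ℝ) (hv : 2 ≤ v) :
    SS v * kk v ≤ (log v - 1.57444) * kk v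
      + 40 * ((1 / log v + 2.5 / log v ^ 3) / v) := by
  have hl := log_pos' hv
  have hv0 : 0 < v := by linarith
  have hU := SS_upper v hv
  have hL := SS_lower v hv
  set l := log v with hldef
  have ek : kk v = (l - 2) / l ^ 3 := by
    rw [kk, ← hldef]; field_simp
  have e2 : 40 * ((1 / l + 2.5 / l ^ 3) / v) = (40 * (l ^ 2 + 2.5) / v) / l ^ 3 := by
    field_simp
  rw [e2, ek, mul_div_assoc', mul_div_assoc', ← add_div]
  refine div_le_div_of_nonneg_right ?_ (by positivity)
  rcases le_total 2 l with h | h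
  · have h1 := mul_le_mul_of_nonneg_right hU (by linarith : 0 ≤ l - 2)
    refine h1.trans ?_
    have e3 : (l - 1 - 0.57444 + 40 * (1 + l) / v) * (l - 2)
        = (l - 1.57444) * (l - 2) + 40 * ((1 + l) * (l - 2)) / v := by ring
    rw [e3]
    have : 40 * ((1 + l) * (l - 2)) / v ≤ 40 * (l ^ 2 + 2.5) / v :=
      div_le_div_of_nonneg_right (by nlinarith) hv0.le
    linarith
  · have hv8 : v ≤ 8 := by
      have : log v ≤ log 8 := by
        rw [← hldef]
        have : (8 : ℝ) = 2 ^ 3 := by norm_num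
        rw [this, Real.log_pow]
        have := Real.log_two_gt_d9
        push_cast; linarith
      exact (Real.log_le_log_iff hv0 (by norm_num)).1 this
    have h1 := mul_le_mul_of_nonneg_right hL (by linarith : 0 ≤ 2 - l)
    have e3 : (l - 1 - 0.58052 - 40 * (1 + l) / v) * (2 - l)
        = (l - 1.58052) * (2 - l) - 40 * ((1 + l) * (2 - l)) / v := by ring
    rw [e3] at h1
    have h2 : 0.00608 * (2 - l) ≤ 40 * (2 * l ^ 2 - l + 0.5) / v := by
      rw [le_div_iff₀ hv0]
      have : 0.00608 * (2 - l) * v ≤ 0.00608 * 2 * 8 := by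
        have := mul_le_mul (by linarith : 2 - l ≤ 2) hv8 hv0.le (by norm_num)
        nlinarith
      nlinarith [sq_nonneg (l - 1 / 4)]
    have e4 : 40 * (l ^ 2 + 2.5) / v = 40 * ((1 + l) * (2 - l)) / v
        + 40 * (2 * l ^ 2 - l + 0.5) / v := by ring
    rw [e4]
    nlinarith

theorem contOn_inv_log : ContinuousOn (fun v => 1 / log v) (Set.Ici 2) :=
  continuousOn_const.div contOn_log fun _ hv => (log_pos' hv).ne'

theorem hasDerivAt_JJ (x : ℝ) (hx : 2 < x) : HasDerivAt JJ (1 / log x) x := by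
  refine intervalIntegral.integral_hasDerivAt_right (intable _ 2 x le_rfl hx.le contOn_inv_log) ?_ ?_
  · exact contOn_inv_log.stronglyMeasurableAtFilter_nhdsWithin measurableSet_Ici x |>.filter_mono
      (by rw [nhdsWithin_eq_nhds.2 (Ici_mem_nhds hx)])
  · exact contOn_inv_log.continuousAt (Ici_mem_nhds hx)

theorem JJ_sub (x y : ℝ) (hx : 2 ≤ x) (hxy : x ≤ y) :
    ∫ v in x..y, 1 / log v = JJ y - JJ x := by
  rw [JJ, JJ, intervalIntegral.integral_interval_sub_left]
  · exact intable _ 2 y le_rfl (hx.trans hxy) contOn_inv_log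
  · exact intable _ 2 x le_rfl hx contOn_inv_log

theorem hasDerivAt_vlog (v : ℝ) (hv : 2 ≤ v) :
    HasDerivAt (fun v => v / log v) (1 / log v - 1 / log v ^ 2) v := by
  have hl := log_pos' hv
  have hv0 : v ≠ 0 := by linarith
  refine ((hasDerivAt_id v).div (Real.hasDerivAt_log hv0) hl.ne').congr_deriv ?_
  simp only [id]
  field_simp

theorem hasDerivAt_vlog2 (v : ℝ) (hv : 2 ≤ v) :
    HasDerivAt (fun v => v / log v ^ 2) (kk v) v := by
  have hl := log_pos' hv
  have hv0 : v ≠ 0 := by linarith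
  refine ((hasDerivAt_id v).div ((Real.hasDerivAt_log hv0).pow 2) (by simpa using hl.ne')).congr_deriv ?_
  simp only [id, kk, Pi.pow_apply]
  field_simp
  push_cast
  ring

theorem hasDerivAt_loglog (v : ℝ) (hv : 2 ≤ v) :
    HasDerivAt (fun v => log (log v)) (1 / (v * log v)) v := by
  have hl := log_pos' hv
  have hv0 : v ≠ 0 := by linarith
  refine ((Real.hasDerivAt_log hv0).log hl.ne').congr_deriv ?_
  field_simp

theorem hasDerivAt_invlog (v : ℝ) (hv : 2 ≤ v) :
    HasDerivAt (fun v => 1 / log v) (-(1 / (v * log v ^ 2))) v := by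
  have hl := log_pos' hv
  have hv0 : v ≠ 0 := by linarith
  refine ((hasDerivAt_const v (1 : ℝ)).div (Real.hasDerivAt_log hv0) hl.ne').congr_deriv ?_
  field_simp
  ring

theorem hasDerivAt_invlog2 (v : ℝ) (hv : 2 ≤ v) :
    HasDerivAt (fun v => 1 / log v ^ 2) (-(2 / (v * log v ^ 3))) v := by
  have hl := log_pos' hv
  have hv0 : v ≠ 0 := by linarith
  refine ((hasDerivAt_const v (1 : ℝ)).div ((Real.hasDerivAt_log hv0).pow 2)
    (by simpa using hl.ne')).congr_deriv ?_
  simp only [Pi.pow_apply]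
  field_simp
  push_cast
  ring

theorem contOn_lin (a : ℝ) : ContinuousOn (fun v => log v - a) (Set.Ici 2) :=
  contOn_log.sub continuousOn_const

/-- `∫ (log v - a) kk v`. -/
theorem int_lin_kk (a x : ℝ) (hx : 2 ≤ x) :
    ∫ v in (2 : ℝ)..x, (log v - a) * kk v = (log x - a) * (x / log x ^ 2) + x / log x - JJ x
      - ((log 2 - a) * (2 / log 2 ^ 2) + 2 / log 2) := by
  have hc : ContinuousOn (fun v => (log v - a) * kk v) (Set.Ici 2) :=
    (contOn_lin a).mul continuousOn_kk
  have hc2 : ContinuousOn (fun v => (log v - a) * kk v + 1 / log v) (Set.Ici 2) :=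
    hc.add contOn_inv_log
  have h := ftc2 (fun v => (log v - a) * (v / log v ^ 2) + v / log v)
    (fun v => (log v - a) * kk v + 1 / log v) 2 x le_rfl hx (fun v hv => by
      have hl := log_pos' hv
      have hv0 : v ≠ 0 := by linarith
      refine ((((Real.hasDerivAt_log hv0).sub_const a).mul (hasDerivAt_vlog2 v hv)).add
        (hasDerivAt_vlog v hv)).congr_deriv ?_
      field_simp
      ring) hc2
  rw [intervalIntegral.integral_add (intable _ 2 x le_rfl hx hc)
    (intable _ 2 x le_rfl hx contOn_inv_log)] at h
  change _ + JJ x = _ at h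
  linarith

theorem int_lin_wt (a x y : ℝ) (hx : 2 ≤ x) (hxy : x ≤ y) :
    ∫ v in x..y, (log v - a) * wt y v = -((log y - a) / log y) + log (log y)
      - (-((log x - a) * WW y x) + log (log x) - 1 / log x + x / log x / y) - (JJ y - JJ x) / y := by
  have hy : 2 ≤ y := hx.trans hxy
  have hy0 : y ≠ 0 := by linarith
  have hc : ContinuousOn (fun v => (log v - a) * wt y v) (Set.Ici 2) :=
    (contOn_lin a).mul (continuousOn_wt y hy)
  have hj : ContinuousOn (fun v => 1 / log v / y) (Set.Ici 2) := contOn_inv_log.div_const y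
  have hc2 : ContinuousOn (fun v => (log v - a) * wt y v + 1 / log v / y) (Set.Ici 2) :=
    hc.add hj
  have h := ftc2 (fun v => -((log v - a) * WW y v) + log (log v) - 1 / log v + v / log v / y)
    (fun v => (log v - a) * wt y v + 1 / log v / y) x y hx hxy (fun v hv => by
      have hl := log_pos' hv
      have hv0 : v ≠ 0 := by linarith
      refine ((((((Real.hasDerivAt_log hv0).sub_const a).mul (hasDerivAt_WW y v hy hv)).neg.add
        (hasDerivAt_loglog v hv)).sub (hasDerivAt_invlog v hv)).add
        ((hasDerivAt_vlog v hv).div_const y)).congr_deriv ?_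
      simp only [WW]
      field_simp
      ring) hc2
  rw [intervalIntegral.integral_add (intable _ x y hx hxy hc)
    (intable _ x y hx hxy hj), intervalIntegral.integral_div, JJ_sub x y hx hxy] at h
  have e : WW y y = 1 / log y := by rw [WW, div_self hy0]; ring
  rw [e] at h
  have e2 : y / log y / y = 1 / log y := by field_simp
  rw [e2] at h
  rw [show (log y - a) / log y = (log y - a) * (1 / log y) by ring]
  linarith

theorem int_wt (x y : ℝ) (hx : 2 ≤ x) (hxy : x ≤ y) :
    ∫ v in x..y, wt y v = WW y x - 1 / log y := by
  have hy : 2 ≤ y := hx.trans hxy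
  have hy0 : y ≠ 0 := by linarith
  have h := ftc2 (fun v => -WW y v) (wt y) x y hx hxy
    (fun v hv => (hasDerivAt_WW y v hy hv).neg.congr_deriv (neg_neg _)) (continuousOn_wt y hy)
  rw [h, show WW y y = 1 / log y by rw [WW, div_self hy0]; ring]
  ring

theorem int_h (x : ℝ) (hx : 2 ≤ x) :
    ∫ v in (2 : ℝ)..x, (1 / log v + 2.5 / log v ^ 3) / v ≤ log (log x) + 3 := by
  have hc : ContinuousOn (fun v => (1 / log v + 2.5 / log v ^ 3) / v) (Set.Ici 2) := by
    refine ContinuousOn.div (ContinuousOn.add contOn_inv_log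
      (ContinuousOn.div continuousOn_const (contOn_log.pow 3) ?_)) continuousOn_id ?_
    · exact fun v hv => pow_ne_zero _ (log_pos' hv).ne'
    · exact fun v hv => ne_of_gt (lt_of_lt_of_le two_pos (Set.mem_Ici.1 hv))
  rw [ftc2 (fun v => log (log v) - 1.25 * (1 / log v ^ 2)) _ 2 x le_rfl hx (fun v hv => by
      have hl := log_pos' hv
      have hv0 : v ≠ 0 := by linarith
      refine ((hasDerivAt_loglog v hv).sub ((hasDerivAt_invlog2 v hv).const_mul 1.25)).congr_deriv ?_
      field_simp
      ring) hc]
  have h2 := Real.log_two_gt_d9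
  have hlx := log_pos' hx
  have h3 : (1:ℝ) / log 2 ^ 2 ≤ 2.0816 := by
    rw [div_le_iff₀ (by positivity)]
    nlinarith
  have h4 : -log (log 2) ≤ 0.367 + 0.02 := by
    have := Real.log_le_sub_one_of_pos (x := 1 / (log 2 * (1.4426))) (by positivity)
    rw [Real.log_div one_ne_zero (by positivity), Real.log_one,
      Real.log_mul (by linarith) (by norm_num)] at this
    have h5 : log 1.4426 ≤ 0.369 := by
      rw [Real.log_le_iff_le_exp (by norm_num)]
      refine le_trans ?_ (Real.sum_le_exp_of_nonneg (by norm_num) 5)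
      norm_num [Finset.sum_range_succ, Nat.factorial]
    have h6 : 1 / (log 2 * 1.4426) ≤ 1.0001 := by
      rw [div_le_iff₀ (by positivity)]; nlinarith
    linarith
  have h7 : 0 ≤ 1 / log x ^ 2 := by positivity
  linarith

/-- `U(y) - (log log y - J(y)/y)` increases from `x` to `y` up to a loss of at most `ρ(x)`: the lower
bound for `S` is used on `[x, y]`, the upper bound at `x`, and `SS_kk_le` below `x`. -/
theorem U_lower (x y : ℝ) (hx : 2 ≤ x) (hxy : x ≤ y) :
    UU x - (log (log x) - JJ x / x) - rho x ≤ UU y - (log (log y) - JJ y / y) := by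
  have hy : 2 ≤ y := hx.trans hxy
  have hx0 : 0 < x := by linarith
  have hy0 : 0 < y := by linarith
  have hlx := log_pos' hx
  have hly := log_pos' hy
  have hr1 : 0 ≤ 1 / x - 1 / y := sub_nonneg.2 (one_div_le_one_div_of_le hx0 hxy)
  have hr2 : 1 / x - 1 / y ≤ 1 / x := by have : 0 < 1 / y := by positivity
                                         linarith
  have hx1 : 0 ≤ 1 - x / y := by rw [sub_nonneg, div_le_one hy0]; exact hxy
  have hx2 : 1 - x / y ≤ 1 := by have : 0 < x / y := by positivity
                                 linarith
  have he := err_nonneg x hx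
  have hw := continuousOn_wt y hy
  have hwx := continuousOn_wt x hx
  -- splitting of the integral for `UU y` at `x`
  have i1 : ∫ v in (2 : ℝ)..y, SS v * wt y v
      = (∫ v in (2 : ℝ)..x, SS v * wt y v) + ∫ v in x..y, SS v * wt y v :=
    (intervalIntegral.integral_add_adjacent_intervals (SS_intable 2 x le_rfl hx _ hw)
      (SS_intable x y hx hxy _ hw)).symm
  have i2 : ∫ v in (2 : ℝ)..x, SS v * wt y v = (∫ v in (2 : ℝ)..x, SS v * wt x v)
      - (1 / x - 1 / y) * ∫ v in (2 : ℝ)..x, SS v * kk v := by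
    rw [← intervalIntegral.integral_const_mul, ← intervalIntegral.integral_sub
      (SS_intable 2 x le_rfl hx _ hwx) ((SS_intable 2 x le_rfl hx _ continuousOn_kk).const_mul _)]
    refine intervalIntegral.integral_congr fun v hv => ?_
    rw [Set.uIcc_of_le hx] at hv
    rw [wt_sub x y v hx hy hv.1]
    ring
  have i3 : ∫ v in (2 : ℝ)..x, SS v * kk v ≤ (∫ v in (2 : ℝ)..x, (log v - 1.57444) * kk v)
      + 40 * (log (log x) + 3) := by
    have hc : ContinuousOn (fun v => (1 / log v + 2.5 / log v ^ 3) / v) (Set.Ici 2) := by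
      refine ContinuousOn.div (ContinuousOn.add contOn_inv_log
        (ContinuousOn.div continuousOn_const (contOn_log.pow 3) ?_)) continuousOn_id ?_
      · exact fun v hv => pow_ne_zero _ (log_pos' hv).ne'
      · exact fun v hv => ne_of_gt (lt_of_lt_of_le two_pos (Set.mem_Ici.1 hv))
    have hc1 : ContinuousOn (fun v => (log v - 1.57444) * kk v) (Set.Ici 2) :=
      (contOn_lin _).mul continuousOn_kk
    have hi := (intable _ 2 x le_rfl hx hc).const_mul 40
    have := intervalIntegral.integral_mono_on hx (SS_intable 2 x le_rfl hx _ continuousOn_kk)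
      ((intable _ 2 x le_rfl hx hc1).add hi) (fun v hv => SS_kk_le v hv.1)
    rw [intervalIntegral.integral_add (intable _ 2 x le_rfl hx hc1) hi,
      intervalIntegral.integral_const_mul] at this
    linarith [int_h x hx]
  have i4 : (∫ v in x..y, (log v - 1.58052) * wt y v) - err x * (WW y x - 1 / log y)
      ≤ ∫ v in x..y, SS v * wt y v := by
    have hc1 : ContinuousOn (fun v => (log v - 1.58052) * wt y v) (Set.Ici 2) :=
      (contOn_lin _).mul hw
    rw [← int_wt x y hx hxy, ← intervalIntegral.integral_const_mul,
      ← intervalIntegral.integral_sub (intable _ x y hx hxy hc1)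
        ((intable _ x y hx hxy hw).const_mul _)]
    refine intervalIntegral.integral_mono_on hxy ((intable _ x y hx hxy hc1).sub
      ((intable _ x y hx hxy hw).const_mul _)) (SS_intable x y hx hxy _ hw) fun v hv => ?_
    have hv2 : 2 ≤ v := hx.trans hv.1
    rw [← sub_mul]
    refine mul_le_mul_of_nonneg_right ?_ (wt_nonneg y v hv2 hv.2)
    have h1 := SS_lower v hv2
    have h2 := err_anti x v hx hv.1
    unfold err at h2 ⊢
    linarith
  have hSy : (log y - 1.58052 - err x) / log y ≤ SS y / log y := by
    refine div_le_div_of_nonneg_right ?_ hly.le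
    have h1 := SS_lower y hy
    have h2 := err_anti x y hx hxy
    unfold err at h2 ⊢
    linarith
  have hSx : SS x / log x ≤ (log x - 1.57444 + err x) / log x := by
    refine div_le_div_of_nonneg_right ?_ hlx.le
    have h1 := SS_upper x hx
    unfold err
    linarith
  have i5 := mul_le_mul_of_nonneg_left i3 hr1
  rw [int_lin_kk _ x hx] at i5
  rw [int_lin_wt _ x y hx hxy] at i4
  have hb : -1 ≤ (log 2 - 1.57444) * (2 / log 2 ^ 2) + 2 / log 2 := by
    have h1 := Real.log_two_gt_d9
    have h2 := Real.log_two_lt_d9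
    have e : (log 2 - 1.57444) * (2 / log 2 ^ 2) + 2 / log 2
      = (4 * log 2 - 2 * 1.57444) / log 2 ^ 2 := by
      field_simp; ring
    rw [e, le_div_iff₀ (by positivity)]
    nlinarith
  set b2 := (log 2 - 1.57444) * (2 / log 2 ^ 2) + 2 / log 2
  have hb' : (1 / x - 1 / y) * (-b2) ≤ 1 / x := by nlinarith
  have hll : 0 ≤ log (log x) + 3 := by
    have h0 := int_h x hx
    refine le_trans ?_ h0
    refine intervalIntegral.integral_nonneg hx fun v hv => ?_
    have := log_pos' hv.1
    have : 0 < v := by linarith [hv.1]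
    positivity
  have hll' : (1 / x - 1 / y) * (40 * (log (log x) + 3)) ≤ 1 / x * (40 * (log (log x) + 3)) :=
    mul_le_mul_of_nonneg_right hr2 (by positivity)
  rw [UU_eq x hx, UU_eq y hy, i1, i2]
  unfold rho
  unfold WW at i4
  have e1 : (log y - 1.58052 - err x) / log y = 1 - 1.58052 * (1 / log y) - err x * (1 / log y) := by
    field_simp
  have e2 : (log x - 1.57444 + err x) / log x = 1 - 1.57444 * (1 / log x) + err x * (1 / log x) := by
    field_simp
  rw [e1] at hSy
  rw [e2] at hSx
  have e3 : (log y - 1.58052) / log y = 1 - 1.58052 * (1 / log y) := by field_simp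
  have e4 : (log x - 1.58052) * (1 / log x + (1 - x / y) / log x ^ 2)
     = 1 - 1.58052 * (1 / log x) + (1 - x / y) * (1 / log x) - 1.58052 * ((1 - x / y) * (1 / log x ^ 2)) := by
    field_simp; ring
  rw [e3, e4] at i4
  have e5 : (1 / x - 1 / y) * ((log x - 1.57444) * (x / log x ^ 2) + x / log x - JJ x - b2
      + 40 * (log (log x) + 3)) = 2 * ((1 - x / y) * (1 / log x))
      - 1.57444 * ((1 - x / y) * (1 / log x ^ 2)) - (JJ x / x - JJ x / y)
      + (1 / x - 1 / y) * (-b2) + (1 / x - 1 / y) * (40 * (log (log x) + 3)) := by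
    field_simp; ring
  rw [e5] at i5
  have e6 : x / log x / y = 1 / log x - (1 - x / y) * (1 / log x) := by ring
  have e7 : (JJ y - JJ x) / y = JJ y / y - JJ x / y := by ring
  rw [e6, e7] at i4
  have e8 : err x * (1 / log x + (1 - x / y) / log x ^ 2 - 1 / log y)
     = err x * (1 / log x) + (1 - x / y) * (err x * (1 / log x ^ 2)) - err x * (1 / log y) := by ring
  rw [e8] at i4
  have f1 : (1 - x / y) * (err x * (1 / log x ^ 2)) ≤ 1 * (err x * (1 / log x ^ 2)) :=
    mul_le_mul_of_nonneg_right hx2 (by positivity)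
  have f2 : (1 - x / y) * (1 / log x ^ 2) ≤ 1 * (1 / log x ^ 2) :=
    mul_le_mul_of_nonneg_right hx2 (by positivity)
  have e9 : 0.00608 / log x + 0.00608 / log x ^ 2 + err x * (2 / log x + 1 / log x ^ 2)
    + (40 * (log (log x) + 3) + 1) / x = 0.00608 * (1 / log x) + 0.00608 * (1 / log x ^ 2)
    + 2 * (err x * (1 / log x)) + err x * (1 / log x ^ 2) + 1 / x * (40 * (log (log x) + 3)) + 1 / x := by
    ring
  rw [e9]
  linarith

/-! ### Comparison with the zeta function, and the upper bound for `U` -/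

/-- The completely multiplicative function `n ↦ n ^ (-s)`. -/
noncomputable def rpowHom (s : ℝ) : ℕ →* ℝ where
  toFun n := 1 / (n : ℝ) ^ s
  map_one' := by simp
  map_mul' m n := by
    push_cast
    rw [Real.mul_rpow (Nat.cast_nonneg m) (Nat.cast_nonneg n)]
    simp only [one_div, mul_inv]

theorem rpowHom_prime (s : ℝ) (hs : 1 < s) (p : ℕ) (hp : p.Prime) :
    0 < rpowHom s p ∧ rpowHom s p < 1 := by
  have h1 : (1 : ℝ) < p := by exact_mod_cast hp.one_lt
  have h2 : 1 < (p : ℝ) ^ s := Real.one_lt_rpow h1 (by linarith)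
  change 0 < 1 / (p : ℝ) ^ s ∧ 1 / (p : ℝ) ^ s < 1
  exact ⟨by positivity, by rw [div_lt_one (by linarith)]; exact h2⟩

/-- The finite Euler products are at most `ζ(s)`. -/
theorem sum_log_le_log_zeta (s : ℝ) (hs : 1 < s) (F : Finset ℕ) :
    ∑ p ∈ F with p.Prime, -log (1 - rpowHom s p) ≤ log (∑' n : ℕ, 1 / (n : ℝ) ^ s) := by
  have hsum : Summable (fun n : ℕ => 1 / (n : ℝ) ^ s) := Real.summable_one_div_nat_rpow.2 hs
  have h0 : ∀ p ∈ F.filter Nat.Prime, 0 < 1 - rpowHom s p := fun p hp => by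
    have := (rpowHom_prime s hs p (Finset.mem_filter.1 hp).2).2
    linarith
  have e : ∑ p ∈ F with p.Prime, -log (1 - rpowHom s p)
      = log (∏ p ∈ F with p.Prime, (1 - rpowHom s p)⁻¹) := by
    rw [Real.log_prod fun p hp => inv_ne_zero (h0 p hp).ne']
    exact Finset.sum_congr rfl fun p _ => (Real.log_inv _).symm
  rw [e]
  have h := (EulerProduct.summable_and_hasSum_factoredNumbers_prod_filter_prime_geometric
    (f := rpowHom s) (fun {p} hp => by
      have := rpowHom_prime s hs p hp
      rw [Real.norm_eq_abs, abs_of_pos this.1]; exact this.2) F).2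
  refine Real.log_le_log (Finset.prod_pos fun p hp => inv_pos.2 (h0 p hp)) ?_
  rw [← h.tsum_eq]
  exact hsum.tsum_subtype_le _ _ (fun n => one_div_nonneg.2 (Real.rpow_nonneg (Nat.cast_nonneg n) s))

theorem sum_vM_le_log_zeta (s : ℝ) (hs : 1 < s) (M : ℕ) :
    ∑ m ∈ Finset.Ioc 0 M, ArithmeticFunction.vonMangoldt m / log m * (1 / (m : ℝ) ^ s)
      ≤ log (∑' n : ℕ, 1 / (n : ℝ) ^ s) := by
  have h := sum_vM_div_log (fun m => 1 / (m : ℝ) ^ s) M (Nat.cast_nonneg M) _ le_rfl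
  rw [Nat.floor_natCast] at h
  rw [h]
  set N := ⌊log (M : ℝ) / log 2⌋₊
  have h1 : ∀ k ∈ Finset.Icc 1 N,
      ∑ p ∈ Finset.Ioc 0 ⌊(M : ℝ) ^ ((1 : ℝ) / k)⌋₊ with p.Prime,
        1 / (k : ℝ) * (1 / ((p ^ k : ℕ) : ℝ) ^ s)
      ≤ ∑ p ∈ Finset.Ioc 0 M with p.Prime, 1 / (k : ℝ) * rpowHom s p ^ k := by
    intro k hk
    rw [Finset.mem_Icc] at hk
    have e : ∀ p : ℕ, (1 / ((p ^ k : ℕ) : ℝ) ^ s) = rpowHom s p ^ k := fun p => by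
      change rpowHom s (p ^ k) = _
      rw [map_pow]
    simp only [e]
    refine Finset.sum_le_sum_of_subset_of_nonneg (Finset.filter_subset_filter _
      (Finset.Ioc_subset_Ioc_right ?_)) fun p hp _ => ?_
    · refine Nat.floor_le_of_le ?_
      rcases Nat.eq_zero_or_pos M with h | h
      · subst h
        have : (1 : ℝ) / k ≠ 0 := by
          have : (0 : ℝ) < k := by exact_mod_cast hk.1
          positivity
        rw [Nat.cast_zero, Real.zero_rpow this]
      · have h1 : (1 : ℝ) ≤ M := by exact_mod_cast h
        have h2 : (1 : ℝ) / k ≤ 1 := by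
          have : (1 : ℝ) ≤ k := by exact_mod_cast hk.1
          rw [div_le_one (by linarith)]; exact this
        calc (M : ℝ) ^ ((1 : ℝ) / k) ≤ (M : ℝ) ^ (1 : ℝ) := Real.rpow_le_rpow_of_exponent_le h1 h2
          _ = M := Real.rpow_one _
    · have := (rpowHom_prime s hs p (Finset.mem_filter.1 hp).2).1
      positivity
  refine (Finset.sum_le_sum h1).trans ?_
  rw [Finset.sum_comm]
  refine le_trans ?_ (sum_log_le_log_zeta s hs (Finset.Ioc 0 M))
  refine Finset.sum_le_sum fun p hp => ?_
  have hp := rpowHom_prime s hs p (Finset.mem_filter.1 hp).2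
  have hs := Real.hasSum_pow_div_log_of_abs_lt_one (x := rpowHom s p)
    (by rw [abs_of_pos hp.1]; exact hp.2)
  have := sum_le_hasSum (Finset.range N) (fun i _ => by have := hp.1; positivity) hs
  refine le_trans (le_of_eq ?_) this
  have e1 : Finset.Icc 1 N = Finset.Ico (0 + 1) (N + 1) := by
    ext k; simp only [Finset.mem_Icc, Finset.mem_Ico]; omega
  rw [e1, ← Finset.sum_Ico_add' (fun k : ℕ => 1 / (k : ℝ) * rpowHom s p ^ k) 0 N 1,
    Finset.range_eq_Ico]
  refine Finset.sum_congr rfl fun i _ => ?_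
  push_cast; ring

theorem UU_eq_max (v y : ℝ) (hv : 0 < v) (hvy : v ≤ y) :
    UU v = ∑ n ∈ Finset.Ioc 0 ⌊y⌋₊,
      ArithmeticFunction.vonMangoldt n / log n * max 0 (1 / (n : ℝ) - 1 / v) := by
  rw [UU]
  have hsub : Finset.Ioc 0 ⌊v⌋₊ ⊆ Finset.Ioc 0 ⌊y⌋₊ :=
    Finset.Ioc_subset_Ioc_right (Nat.floor_le_floor hvy)
  rw [← Finset.sum_subset hsub]
  · refine Finset.sum_congr rfl fun n hn => ?_
    rw [Finset.mem_Ioc] at hn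
    have hn0 : (0 : ℝ) < n := by exact_mod_cast hn.1
    have := one_div_le_one_div_of_le hn0 ((Nat.le_floor_iff hv.le).1 hn.2)
    rw [max_eq_right (by linarith)]
  · intro n hn hn'
    rw [Finset.mem_Ioc] at hn hn'
    have h2 : ⌊v⌋₊ < n := by by_contra h; exact hn' ⟨hn.1, by omega⟩
    have h3 : v < n := Nat.lt_of_floor_lt h2
    have := one_div_le_one_div_of_le hv h3.le
    rw [max_eq_left (by linarith), mul_zero]

theorem vM_div_nonneg (n : ℕ) : 0 ≤ ArithmeticFunction.vonMangoldt n / log n :=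
  div_nonneg ArithmeticFunction.vonMangoldt_nonneg (Real.log_natCast_nonneg n)

theorem UU_nonneg (v : ℝ) (hv : 0 < v) : 0 ≤ UU v := by
  rw [UU_eq_max v v hv le_rfl]
  exact Finset.sum_nonneg fun n _ => mul_nonneg (vM_div_nonneg n) (le_max_left _ _)

/-- Telescoping: the weights `q_k = e^{-δk} - e^{-δ(k+1)}` with `k ≥ log m` have total at most
`m ^ (-δ)`. -/
theorem sum_weights (d : ℝ) (hd : 0 < d) (m N : ℕ) (hm : 0 < m) :
    ∑ k ∈ Finset.range N, max 0 (1 / (m : ℝ) - 1 / exp k) * (exp (-d * k) - exp (-d * (k + 1)))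
      ≤ 1 / (m : ℝ) ^ (1 + d) := by
  have hm0 : (0 : ℝ) < m := by exact_mod_cast hm
  have key : ∀ N : ℕ,
      ∑ k ∈ Finset.range N, max 0 (1 / (m : ℝ) - 1 / exp k) * (exp (-d * k) - exp (-d * (k + 1)))
      ≤ 1 / m * max 0 ((m : ℝ) ^ (-d) - exp (-d * N)) := by
    intro N
    induction N with
    | zero => simp only [Finset.range_zero, Finset.sum_empty]; positivity
    | succ N ih =>
      rw [Finset.sum_range_succ]
      have hq : 0 ≤ exp (-d * N) - exp (-d * (N + 1)) := by
        rw [sub_nonneg]; exact Real.exp_le_exp.2 (by nlinarith)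
      push_cast
      rcases le_or_gt (m : ℝ) (exp N) with h | h
      · have h1 : 1 / exp (N : ℝ) ≤ 1 / m := one_div_le_one_div_of_le hm0 h
        have h2 : exp (-d * N) ≤ (m : ℝ) ^ (-d) := by
          rw [Real.rpow_def_of_pos hm0]
          refine Real.exp_le_exp.2 ?_
          have := (Real.log_le_iff_le_exp hm0).2 h
          nlinarith
        rw [max_eq_right (by linarith)] at ih ⊢
        have h3 : (1 / (m : ℝ) - 1 / exp N) * (exp (-d * N) - exp (-d * (N + 1)))
            ≤ 1 / m * (exp (-d * N) - exp (-d * (N + 1))) := by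
          refine mul_le_mul_of_nonneg_right ?_ hq
          have := Real.exp_pos (N : ℝ)
          have : 0 < 1 / exp (N : ℝ) := by positivity
          linarith
        have h4 : (m : ℝ) ^ (-d) - exp (-d * (N + 1)) ≤ max 0 ((m : ℝ) ^ (-d) - exp (-d * (N + 1))) :=
          le_max_right _ _
        have h5 := mul_le_mul_of_nonneg_left h4 (by positivity : 0 ≤ 1 / (m : ℝ))
        have e : 1 / (m : ℝ) * ((m : ℝ) ^ (-d) - exp (-d * (N + 1))) =
          1 / (m : ℝ) * ((m : ℝ) ^ (-d) - exp (-d * N))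
          + 1 / m * (exp (-d * N) - exp (-d * (N + 1))) := by ring
        linarith
      · have h1 : 1 / (m : ℝ) ≤ 1 / exp N := one_div_le_one_div_of_le (Real.exp_pos _) h.le
        rw [max_eq_left (by linarith), zero_mul, add_zero]
        refine ih.trans (mul_le_mul_of_nonneg_left ?_ (by positivity))
        exact max_le_max le_rfl (by linarith)
  refine (key N).trans ?_
  have e : 1 / (m : ℝ) ^ (1 + d) = 1 / m * (m : ℝ) ^ (-d) := by
    rw [Real.rpow_add hm0, Real.rpow_one, Real.rpow_neg hm0.le]
    field_simp
  rw [e]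
  refine mul_le_mul_of_nonneg_left (max_le (by positivity) ?_) (by positivity)
  have := Real.exp_pos (-d * (N : ℝ))
  linarith

/-- An average of `U(e^k)` over `k` is at most `log ζ(1 + d)`. -/
theorem sum_UU_le (d : ℝ) (hd : 0 < d) (N : ℕ) :
    ∑ k ∈ Finset.range N, UU (exp k) * (exp (-d * k) - exp (-d * (k + 1)))
      ≤ log (∑' n : ℕ, 1 / (n : ℝ) ^ (1 + d)) := by
  refine le_trans ?_ (sum_vM_le_log_zeta (1 + d) (by linarith) ⌊exp (N : ℝ)⌋₊)
  have h1 : ∀ k ∈ Finset.range N, UU (exp k) * (exp (-d * k) - exp (-d * (k + 1)))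
      = ∑ m ∈ Finset.Ioc 0 ⌊exp (N : ℝ)⌋₊, ArithmeticFunction.vonMangoldt m / log m *
        (max 0 (1 / (m : ℝ) - 1 / exp k) * (exp (-d * k) - exp (-d * (k + 1)))) := by
    intro k hk
    rw [UU_eq_max _ (exp N) (Real.exp_pos _) (Real.exp_le_exp.2 (by
      exact_mod_cast (Finset.mem_range.1 hk).le)), Finset.sum_mul]
    exact Finset.sum_congr rfl fun _ _ => by ring
  rw [Finset.sum_congr rfl h1, Finset.sum_comm]
  refine Finset.sum_le_sum fun m hm => ?_
  rw [← Finset.mul_sum]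
  exact mul_le_mul_of_nonneg_left (sum_weights d hd m N (Finset.mem_Ioc.1 hm).1) (vM_div_nonneg m)

/-- Abel summation for the average of `H_k` with the weights of `sum_UU_le`. The sum on the right
tends to `-log (1 - e^{-d})` as `N → ∞`. -/
theorem abel_HH (d : ℝ) (N : ℕ) :
    ∑ k ∈ Finset.range N, HH k * (exp (-d * k) - exp (-d * (k + 1)))
      = ∑ k ∈ Finset.range N, exp (-d) ^ (k + 1) / ((k : ℝ) + 1) - HH N * exp (-d * N) := by
  induction N with
  | zero => simp [HH]
  | succ N ih =>
    rw [Finset.sum_range_succ, Finset.sum_range_succ, ih, HH_succ]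
    have : exp (-d) ^ (N + 1) = exp (-d * (N + 1)) := by
      rw [← Real.exp_nat_mul]; push_cast; ring_nf
    rw [this]; push_cast
    ring

theorem HH_le_self (n : ℕ) : HH n ≤ n := by
  induction n with
  | zero => simp [HH]
  | succ n ih =>
    rw [HH_succ]; push_cast
    have : 1 / ((n : ℝ) + 1) ≤ 1 := by rw [div_le_one (by positivity)]; linarith [n.cast_nonneg (α := ℝ)]
    linarith

theorem HH_mono : Monotone HH := monotone_nat_of_le_succ fun n => by
  rw [HH_succ]; have : (0:ℝ) ≤ 1 / ((n : ℝ) + 1) := by positivity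
  linarith

/-- If `U(e^k) ≥ H_k - η` for large `k`, then `η ≥ 0`. Averaging over `k` as in `sum_UU_le` and
`abel_HH` and letting `d → 0`, both `log ζ(1 + d)` and the average of `H_k` are `log (1/d) + o(1)`. -/
theorem eta_nonneg (η : ℝ) (k₀ : ℕ) (h : ∀ k : ℕ, k₀ ≤ k → HH k - η ≤ UU (exp k)) : 0 ≤ η := by
  set B := HH k₀ + |η| with hB
  have hHH0 : 0 ≤ HH k₀ := Finset.sum_nonneg fun i _ => by positivity
  have hB0 : 0 ≤ B := by positivity
  have step : ∀ d : ℝ, 0 < d → -η - B * k₀ * d ≤ log (d * ∑' n : ℕ, 1 / (n : ℝ) ^ (1 + d)) := by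
    intro d hd
    have hN : ∀ N : ℕ, ∑ k ∈ Finset.range N, exp (-d) ^ (k + 1) / ((k : ℝ) + 1)
        - HH N * exp (-d * N) - η * (1 - exp (-d * N)) - B * k₀ * d
        ≤ log (∑' n : ℕ, 1 / (n : ℝ) ^ (1 + d)) := by
      intro N
      refine le_trans ?_ (sum_UU_le d hd N)
      have hq : ∀ k : ℕ, 0 ≤ exp (-d * k) - exp (-d * (k + 1)) := fun k => by
        rw [sub_nonneg]; exact Real.exp_le_exp.2 (by nlinarith)
      have hq2 : ∀ k : ℕ, exp (-d * k) - exp (-d * (k + 1)) ≤ d := fun k => by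
        have h1 : exp (-d * (k + 1)) = exp (-d * k) * exp (-d) := by
          rw [← Real.exp_add]; ring_nf
        have h2 := Real.add_one_le_exp (-d)
        have h3 : exp (-d * k) ≤ 1 := Real.exp_le_one_iff.2 (by
          have : (0 : ℝ) ≤ k := Nat.cast_nonneg k
          nlinarith)
        have h4 := Real.exp_pos (-d * (k : ℝ))
        rw [h1]; nlinarith
      have tel : ∀ N : ℕ, ∑ k ∈ Finset.range N, (exp (-d * k) - exp (-d * (k + 1)))
          = 1 - exp (-d * N) := by
        intro N
        induction N with
        | zero => simp
        | succ N ih => rw [Finset.sum_range_succ, ih]; push_cast; ring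
      have hb : ∑ k ∈ Finset.range N, (if k < k₀ then B * d else 0) ≤ B * k₀ * d := by
        rw [← Finset.sum_filter, Finset.sum_const, nsmul_eq_mul]
        have : ((Finset.range N).filter (· < k₀)).card ≤ k₀ := by
          calc _ ≤ (Finset.range k₀).card := Finset.card_le_card fun i hi => by
                simp only [Finset.mem_filter] at hi; exact Finset.mem_range.2 hi.2
            _ = k₀ := Finset.card_range _
        have : (((Finset.range N).filter (· < k₀)).card : ℝ) ≤ k₀ := by exact_mod_cast this
        calc _ ≤ (k₀ : ℝ) * (B * d) := mul_le_mul_of_nonneg_right this (by positivity)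
          _ = _ := by ring
      rw [← abel_HH, ← tel N, Finset.mul_sum]
      refine le_trans (sub_le_sub_left hb _) ?_
      rw [← Finset.sum_sub_distrib, ← Finset.sum_sub_distrib]
      refine Finset.sum_le_sum fun k _ => ?_
      have h1 := hq k
      split_ifs with hk
      · have h2 : HH k - η ≤ B := by
          have := HH_mono hk.le; have := neg_abs_le η; linarith
        have h3 := mul_le_mul_of_nonneg_right h2 h1
        have h4 := mul_le_mul_of_nonneg_left (hq2 k) hB0
        have h5 := mul_nonneg (UU_nonneg (exp k) (Real.exp_pos _)) h1
        linarith
      · have := mul_le_mul_of_nonneg_right (h k (by omega)) h1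
        linarith
    have he1 : exp (-d) < 1 := Real.exp_lt_one_iff.2 (by linarith)
    have he0 := Real.exp_pos (-d)
    have t1 := (Real.hasSum_pow_div_log_of_abs_lt_one (x := exp (-d))
      (by rw [abs_of_pos he0]; exact he1)).tendsto_sum_nat
    have t2 : Filter.Tendsto (fun N : ℕ => exp (-d * N)) Filter.atTop (nhds 0) := by
      have := tendsto_pow_atTop_nhds_zero_of_lt_one he0.le he1
      refine this.congr fun N => ?_
      rw [← Real.exp_nat_mul]; ring_nf
    have t3 : Filter.Tendsto (fun N : ℕ => HH N * exp (-d * N)) Filter.atTop (nhds 0) := by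
      have := tendsto_self_mul_const_pow_of_lt_one he0.le he1
      refine squeeze_zero (fun N => mul_nonneg (Finset.sum_nonneg fun i _ => by positivity)
        (Real.exp_pos _).le) (fun N => ?_) this
      have e : exp (-d * N) = exp (-d) ^ N := by rw [← Real.exp_nat_mul]; ring_nf
      rw [e]
      exact mul_le_mul_of_nonneg_right (HH_le_self N) (by positivity)
    have t4 := ((t1.sub t3).sub ((t2.const_sub 1).const_mul η)).sub_const (B * k₀ * d)
    have h5 := le_of_tendsto' t4 hN
    have hz : 0 < ∑' n : ℕ, 1 / (n : ℝ) ^ (1 + d) := by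
      have hsum : Summable (fun n : ℕ => 1 / (n : ℝ) ^ (1 + d)) :=
        Real.summable_one_div_nat_rpow.2 (by linarith)
      exact hsum.tsum_pos (fun n => by positivity) 1 (by simp)
    rw [Real.log_mul hd.ne' hz.ne']
    have h6 : -log d ≤ -log (1 - exp (-d)) := by
      rw [neg_le_neg_iff]
      refine Real.log_le_log (by linarith) ?_
      linarith [Real.add_one_le_exp (-d)]
    linarith
  have hlim : Filter.Tendsto (fun d : ℝ => log (d * ∑' n : ℕ, 1 / (n : ℝ) ^ (1 + d)))
      (nhdsWithin 0 (Set.Ioi 0)) (nhds 0) := by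
    have h1 : Filter.Tendsto (fun d : ℝ => 1 + d) (nhdsWithin 0 (Set.Ioi 0))
        (nhdsWithin 1 (Set.Ioi 1)) := by
      refine tendsto_nhdsWithin_iff.2 ⟨?_, ?_⟩
      · have : Filter.Tendsto (fun d : ℝ => 1 + d) (nhds 0) (nhds (1 + 0)) :=
          (continuous_const.add continuous_id).tendsto 0
        rw [add_zero] at this
        exact this.mono_left nhdsWithin_le_nhds
      · filter_upwards [self_mem_nhdsWithin] with d hd
        simp only [Set.mem_Ioi] at hd ⊢; linarith
    have h2 := (tendsto_sub_mul_tsum_nat_rpow.comp h1).log one_ne_zero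
    rw [Real.log_one] at h2
    refine h2.congr fun d => ?_
    simp only [Function.comp]
    rw [add_sub_cancel_left]
  have hlim2 : Filter.Tendsto (fun d : ℝ => -η - B * k₀ * d)
      (nhdsWithin 0 (Set.Ioi 0)) (nhds (-η - B * k₀ * 0)) := by
    have : Filter.Tendsto (fun d : ℝ => -η - B * k₀ * d) (nhds 0) (nhds (-η - B * k₀ * 0)) :=
      (continuous_const.sub (continuous_const.mul continuous_id)).tendsto 0
    exact this.mono_left nhdsWithin_le_nhds
  have := le_of_tendsto_of_tendsto hlim2 hlim (by
    filter_upwards [self_mem_nhdsWithin] with d hd using step d hd)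
  linarith

theorem JJ_le (y : ℝ) (hy : 2 ≤ y) : JJ y ≤ 2 * (y / log y) + 40 * log y := by
  have hc : ContinuousOn (fun v => 2 * (1 / log v - 1 / log v ^ 2) + 40 * (1 / v)) (Set.Ici 2) := by
    refine ContinuousOn.add (continuousOn_const.mul (contOn_inv_log.sub
      (continuousOn_const.div (contOn_log.pow 2) ?_)))
      (continuousOn_const.mul (continuousOn_const.div continuousOn_id ?_))
    · exact fun v hv => pow_ne_zero _ (log_pos' hv).ne'
    · exact fun v hv => ne_of_gt (lt_of_lt_of_le two_pos (Set.mem_Ici.1 hv))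
  have h := ftc2 (fun v => 2 * (v / log v) + 40 * log v) _ 2 y le_rfl hy (fun v hv => by
    have hv0 : v ≠ 0 := by linarith
    refine (((hasDerivAt_vlog v hv).const_mul 2).add
      ((Real.hasDerivAt_log hv0).const_mul 40)).congr_deriv ?_
    rw [one_div v]) hc
  have h2 : JJ y ≤ ∫ v in (2 : ℝ)..y, (2 * (1 / log v - 1 / log v ^ 2) + 40 * (1 / v)) := by
    refine intervalIntegral.integral_mono_on hy (intable _ 2 y le_rfl hy contOn_inv_log)
      (intable _ 2 y le_rfl hy hc) fun v hv => ?_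
    have hl := log_pos' hv.1
    have hv0 : 0 < v := by linarith [hv.1]
    set l := log v with hldef
    have hl2 : 0.69 ≤ l := by
      have := Real.log_le_log two_pos hv.1
      linarith [Real.log_two_gt_d9]
    have e : 2 * (1 / l - 1 / l ^ 2) + 40 * (1 / v) - 1 / l = (l - 2 + 40 * l ^ 2 / v) / l ^ 2 := by
      field_simp; ring
    rw [← sub_nonneg, e]
    refine div_nonneg ?_ (by positivity)
    rcases le_total 2 l with h | h
    · have : 0 ≤ 40 * l ^ 2 / v := by positivity
      linarith
    · have hv8 : v ≤ 8 := by
        have : log v ≤ log 8 := by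
          rw [← hldef]
          have : (8 : ℝ) = 2 ^ 3 := by norm_num
          rw [this, Real.log_pow]
          have := Real.log_two_gt_d9
          push_cast; linarith
        exact (Real.log_le_log_iff hv0 (by norm_num)).1 this
      have : 2 ≤ 40 * l ^ 2 / v := by
        rw [le_div_iff₀ hv0]; nlinarith
      linarith
  rw [h] at h2
  have : 0 < log 2 := Real.log_pos (by norm_num)
  have : 0 ≤ 2 * (2 / log 2) + 40 * log 2 := by positivity
  linarith

/-- Otherwise `U_lower` with `y = e^k`, `k → ∞`, contradicts `eta_nonneg`. -/
theorem UU_upper (x : ℝ) (hx : 2 ≤ x) :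
    UU x ≤ log (log x) + eulerMascheroniConstant - JJ x / x + rho x := by
  by_contra hcon
  push Not at hcon
  -- the lower bound for `UU` at `e^k` would exceed `H_k + const` with a positive constant
  set c := UU x - (log (log x) - JJ x / x) - rho x with hc
  have hcγ : 0 < c - eulerMascheroniConstant := by linarith
  set ε := (c - eulerMascheroniConstant) / 3 with hε
  have hε0 : 0 < ε := by positivity
  have tJ : Filter.Tendsto (fun k : ℕ => 2 * (1 / (k : ℝ)) + 40 * ((k : ℝ) * exp (-1) ^ k))
      Filter.atTop (nhds (2 * 0 + 40 * 0)) := by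
    have h1 : Filter.Tendsto (fun k : ℕ => 1 / (k : ℝ)) Filter.atTop (nhds 0) :=
      tendsto_one_div_atTop_nhds_zero_nat
    have h2 := tendsto_self_mul_const_pow_of_lt_one (Real.exp_pos (-1)).le
      (Real.exp_lt_one_iff.2 (by norm_num))
    exact (h1.const_mul 2).add (h2.const_mul 40)
  have tH : Filter.Tendsto (fun k : ℕ => HH k - log k - 0) Filter.atTop
      (nhds eulerMascheroniConstant) := tendsto_HH (fun _ => 0) tendsto_const_nhds
  have ev1 := tJ.eventually (gt_mem_nhds (show 2 * 0 + 40 * 0 < ε by linarith))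
  have ev2 := tH.eventually (gt_mem_nhds (show eulerMascheroniConstant
    < eulerMascheroniConstant + ε by linarith))
  have ev3 := Real.tendsto_exp_atTop.comp tendsto_natCast_atTop_atTop |>.eventually_ge_atTop x
  obtain ⟨k₀, hk₀⟩ := Filter.eventually_atTop.1
    ((ev1.and ev2).and (ev3.and (Filter.eventually_ge_atTop 1)))
  have := eta_nonneg (-ε) k₀ fun k hk => by
    obtain ⟨⟨h1, h2⟩, h3, h4⟩ := hk₀ k hk
    simp only [Function.comp] at h3
    have hU := U_lower x (exp k) hx h3
    have hJ := JJ_le (exp k) (hx.trans h3)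
    rw [Real.log_exp] at hU hJ
    have hk0 : (0 : ℝ) < k := by exact_mod_cast h4
    have hJ2 : JJ (exp k) / exp k ≤ 2 * (1 / (k : ℝ)) + 40 * ((k : ℝ) * exp (-1) ^ k) := by
      have he := Real.exp_pos (k : ℝ)
      rw [div_le_iff₀ he]
      have e : exp (-1) ^ k = 1 / exp k := by
        rw [← Real.exp_nat_mul, one_div, ← Real.exp_neg]; ring_nf
      rw [e]
      refine hJ.trans (le_of_eq ?_)
      field_simp
    linarith
  linarith

/-! ### The logarithmic integral -/

/-- Four terms of the asymptotic expansion of `li(x)/x` in terms of `L = log x`. -/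
noncomputable def qq (L : ℝ) : ℝ := 1 / L + 1 / L ^ 2 + 2 / L ^ 3 + 6 / L ^ 4

theorem hasDerivAt_vqq (v : ℝ) (hv : 2 ≤ v) :
    HasDerivAt (fun v => v * qq (log v)) (1 / log v - 24 / log v ^ 5) v := by
  have hl := log_pos' hv
  have hv0 : v ≠ 0 := by linarith
  have h1 : HasDerivAt qq (-(1 / log v ^ 2) - 2 / log v ^ 3 - 6 / log v ^ 4 - 24 / log v ^ 5) (log v) := by
    have hl0 : log v ≠ 0 := hl.ne'
    have e1 := (hasDerivAt_const (log v) (1 : ℝ)).div (hasDerivAt_id (log v)) hl0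
    have e2 := (hasDerivAt_const (log v) (1 : ℝ)).div (hasDerivAt_pow 2 (log v)) (pow_ne_zero 2 hl0)
    have e3 := (hasDerivAt_const (log v) (2 : ℝ)).div (hasDerivAt_pow 3 (log v)) (pow_ne_zero 3 hl0)
    have e4 := (hasDerivAt_const (log v) (6 : ℝ)).div (hasDerivAt_pow 4 (log v)) (pow_ne_zero 4 hl0)
    refine (((e1.add e2).add e3).add e4).congr_deriv ?_
    simp only [id]
    push_cast
    field_simp
    ring
  refine ((hasDerivAt_id v).mul (h1.comp v (Real.hasDerivAt_log hv0))).congr_deriv ?_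
  simp only [id, Function.comp, qq]
  field_simp
  ring

theorem log_eight : log 8 = 3 * log 2 := by
  rw [show (8 : ℝ) = 2 ^ 3 by norm_num, Real.log_pow]; norm_num

/-- `v qq (log v)` has derivative `1/log v - 24/(log v)^5`, so it grows more slowly than `J`. -/
theorem JJ_ge (x : ℝ) (hx : 8 ≤ x) : x * qq (log x) - 10.1 ≤ JJ x := by
  have h5 : ContinuousOn (fun v => 24 / log v ^ 5) (Set.Ici 2) :=
    continuousOn_const.div (contOn_log.pow 5) fun v hv => pow_ne_zero _ (log_pos' hv).ne'
  have hc : ContinuousOn (fun v => 1 / log v - 24 / log v ^ 5) (Set.Ici 2) := contOn_inv_log.sub h5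
  have h := ftc2 (fun v => v * qq (log v)) _ 8 x (by norm_num) hx (fun v hv => hasDerivAt_vqq v hv) hc
  have h2 : ∫ v in (8 : ℝ)..x, (1 / log v - 24 / log v ^ 5) ≤ ∫ v in (8 : ℝ)..x, 1 / log v := by
    refine intervalIntegral.integral_mono_on hx (intable _ 8 x (by norm_num) hx hc)
      (intable _ 8 x (by norm_num) hx contOn_inv_log) fun v hv => ?_
    have := log_pos' (show 2 ≤ v by linarith [hv.1])
    have : 0 ≤ 24 / log v ^ 5 := by positivity
    linarith
  rw [JJ_sub 8 x (by norm_num) hx, h] at h2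
  have h3 : 0 ≤ JJ 8 := intervalIntegral.integral_nonneg (by norm_num) fun v hv => by
    have := log_pos' hv.1; positivity
  have h4 : 8 * qq (log 8) ≤ 10.1 := by
    have h6 : 2.0794 ≤ log 8 := by rw [log_eight]; linarith [Real.log_two_gt_d9]
    have h7 : qq (log 8) ≤ qq 2.0794 := by
      unfold qq
      gcongr
    refine (mul_le_mul_of_nonneg_left h7 (by norm_num)).trans ?_
    norm_num [qq]
  linarith

/-- The error term at `x = e^L`, multiplied by `L`. -/
theorem error_bound (L : ℝ) (hL : 14.4 ≤ L) :
    rho (exp L) + 10.1 / exp L ≤ (0.00608 * (1 + 1 / L) + 0.002632) / L := by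
  have hL0 : 0 < L := by linarith
  have hlog : log L ≤ 1.66723 + L / 14.4 := by
    have h1 : log (L / 14.4) ≤ L / 14.4 - 1 := Real.log_le_sub_one_of_pos (by positivity)
    rw [Real.log_div hL0.ne' (by norm_num)] at h1
    have h2 : log 14.4 ≤ 2.66723 := by
      rw [show (14.4 : ℝ) = 2 ^ 4 * 0.9 by norm_num, Real.log_mul (by norm_num) (by norm_num),
        Real.log_pow]
      have h3 : log 0.9 ≤ -0.10536 := by
        rw [Real.log_le_iff_le_exp (by norm_num), Real.exp_neg, ← one_div, le_div_iff₀ (Real.exp_pos _)]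
        have := Real.exp_bound' (x := 0.10536) (by norm_num) (by norm_num) (n := 5) (by norm_num)
        norm_num [Finset.sum_range_succ, Nat.factorial] at this ⊢
        linarith
      have := Real.log_two_lt_d9
      push_cast
      linarith
    linarith
  have hexp : 1793000 * (1 + (L - 14.4) + (L - 14.4) ^ 2 / 2) ≤ exp L := by
    have h1 : exp L = exp 14.4 * exp (L - 14.4) := by rw [← Real.exp_add]; ring_nf
    have h2 : (1793000 : ℝ) ≤ exp 14.4 := by
      have h3 : (2.7182818283 : ℝ) ^ 14 ≤ exp 14 := by
        have := Real.exp_one_gt_d9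
        rw [show (14 : ℝ) = (14 : ℕ) * 1 by norm_num, Real.exp_nat_mul]
        exact pow_le_pow_left₀ (by norm_num) this.le 14
      have h4 : 1.4917 ≤ exp 0.4 := by
        refine le_trans ?_ (Real.sum_le_exp_of_nonneg (by norm_num) 6)
        norm_num [Finset.sum_range_succ, Nat.factorial]
      rw [show (14.4 : ℝ) = 14 + 0.4 by norm_num, Real.exp_add]
      calc (1793000 : ℝ) ≤ (2.7182818283 : ℝ) ^ 14 * 1.4917 := by norm_num
        _ ≤ _ := mul_le_mul h3 h4 (by norm_num) (Real.exp_pos _).le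
    rw [h1]
    exact mul_le_mul h2 (Real.quadratic_le_exp_of_nonneg (by linarith)) (by nlinarith) (Real.exp_pos _).le
  have hE := Real.exp_pos L
  have hnum : 40 * (1 + L) * (2 + 1 / L) + L * (40 * (log L + 3) + 11.1) ≤ 0.002632 * exp L := by
    have h1 : 1 / L ≤ 0.0695 := by rw [div_le_iff₀ hL0]; linarith
    have h2 : 40 * (1 + L) * (2 + 1 / L) ≤ 40 * (1 + L) * 2.0695 :=
      mul_le_mul_of_nonneg_left (by linarith) (by linarith)
    have h3 : L * (40 * (log L + 3) + 11.1) ≤ L * (40 * (1.66723 + L / 14.4 + 3) + 11.1) :=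
      mul_le_mul_of_nonneg_left (by linarith) hL0.le
    obtain ⟨d, rfl⟩ : ∃ d, L = 14.4 + d := ⟨L - 14.4, by ring⟩
    have hd : 0 ≤ d := by linarith
    have h4 : (0.002632 : ℝ) * (1793000 * (1 + d + d ^ 2 / 2)) ≤ 0.002632 * exp (14.4 + d) := by
      refine mul_le_mul_of_nonneg_left ?_ (by norm_num)
      rw [add_sub_cancel_left] at hexp
      exact hexp
    refine (add_le_add h2 h3).trans (le_trans ?_ h4)
    rw [← sub_nonneg]
    ring_nf
    positivity
  unfold rho err
  rw [Real.log_exp]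
  have e : 0.00608 / L + 0.00608 / L ^ 2 + 40 * (1 + L) / exp L * (2 / L + 1 / L ^ 2)
      + (40 * (log L + 3) + 1) / exp L + 10.1 / exp L
      = (0.00608 * (1 + 1 / L) + (40 * (1 + L) * (2 + 1 / L) + L * (40 * (log L + 3) + 11.1)) / exp L) / L := by
    field_simp
    ring
  rw [e]
  refine div_le_div_of_nonneg_right ?_ hL0.le
  have := (div_le_iff₀ hE).2 hnum
  linarith

/-! ### Large values of `τ(n)` -/

theorem gamma_le : eulerMascheroniConstant ≤ 0.57722 := by
  have h := HH_lower 8 (by norm_num)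
  have e : HH 8 = 761 / 280 := by norm_num [HH, Finset.sum_range_succ]
  rw [e] at h
  push_cast at h
  rw [log_eight] at h
  have := Real.log_two_gt_d9
  norm_num at h
  linarith

theorem exp_gamma_mul_le : exp eulerMascheroniConstant * 0.52857 ≤ 0.9414441 := by
  have h1 : exp eulerMascheroniConstant ≤ 1.7811 := by
    refine (Real.exp_le_exp.2 gamma_le).trans ?_
    refine (Real.exp_bound' (by norm_num) (by norm_num) (n := 8) (by norm_num)).trans ?_
    norm_num [Finset.sum_range_succ, Nat.factorial]
  linarith

/-- Chord bound for the concave function `log (1 - y)`. -/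
theorem log_one_sub_ge (y : ℝ) (h0 : 0 ≤ y) (h1 : y ≤ 0.2054) : -(1.1195 * y) ≤ log (1 - y) := by
  have hc := (strictConcaveOn_log_Ioi.concaveOn).2
    (show (1 : ℝ) ∈ Set.Ioi 0 from Set.mem_Ioi.2 (by norm_num))
    (show (0.7946 : ℝ) ∈ Set.Ioi 0 from Set.mem_Ioi.2 (by norm_num))
    (show 0 ≤ 1 - y / 0.2054 by rw [sub_nonneg, div_le_one (by norm_num)]; exact h1)
    (show 0 ≤ y / 0.2054 by positivity) (by ring)
  simp only [smul_eq_mul, Real.log_one, mul_zero, zero_add] at hc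
  have e : (1 - y / 0.2054) * 1 + y / 0.2054 * 0.7946 = 1 - y := by ring
  rw [e] at hc
  refine le_trans ?_ hc
  have h2 : -0.2299453 ≤ log 0.7946 := by
    rw [Real.le_log_iff_exp_le (by norm_num), Real.exp_neg, inv_le_comm₀ (Real.exp_pos _) (by norm_num)]
    refine le_trans ?_ (Real.sum_le_exp_of_nonneg (by norm_num) 8)
    norm_num [Finset.sum_range_succ, Nat.factorial]
  have h3 := mul_le_mul_of_nonneg_left h2 (show 0 ≤ y / 0.2054 by positivity)
  refine le_trans ?_ h3
  have : y / 0.2054 * -0.2299453 = -(y * (0.2299453 / 0.2054)) := by ring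
  rw [this, neg_le_neg_iff, mul_comm]
  exact mul_le_mul_of_nonneg_right (by norm_num) h0

/-- Lower bound for `log (L * qq L)`, in terms of `w = 1 / L`. -/
theorem log_qq_ge (w : ℝ) (h0 : 0 < w) (h1 : w ≤ 0.07) :
    w + 1.5 * w ^ 2 + 3.3 * w ^ 3 ≤ log (1 + w + 2 * w ^ 2 + 6 * w ^ 3) := by
  rw [Real.le_log_iff_exp_le (by positivity)]
  have h2 : w ^ 2 ≤ 0.07 * w := by nlinarith
  have h3 : w ^ 3 ≤ 0.0049 * w := by nlinarith
  refine (Real.exp_bound' (by positivity) (by nlinarith) (n := 3) (by norm_num)).trans ?_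
  norm_num [Finset.sum_range_succ, Nat.factorial]
  set p := w + 3 / 2 * w ^ 2 + 33 / 10 * w ^ 3 with hp
  have hp0 : 0 ≤ p := by positivity
  have hp1 : p ≤ w * (1 + 3 / 2 * w + 0.24 * w) := by nlinarith
  have hp2 : p ^ 2 ≤ w ^ 2 * (1 + 3.8 * w) := by
    calc p ^ 2 ≤ (w * (1 + 3 / 2 * w + 0.24 * w)) ^ 2 := pow_le_pow_left₀ hp0 hp1 2
      _ ≤ _ := by
        have : (w * (1 + 3 / 2 * w + 0.24 * w)) ^ 2 = w ^ 2 * (1 + 1.74 * w) ^ 2 := by ring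
        rw [this]
        refine mul_le_mul_of_nonneg_left ?_ (sq_nonneg w)
        nlinarith
  have hp3 : p ^ 3 ≤ w ^ 3 * 1.5 := by
    calc p ^ 3 ≤ (w * (1 + 3 / 2 * w + 0.24 * w)) ^ 3 := pow_le_pow_left₀ hp0 hp1 3
      _ = w ^ 3 * (1 + 1.74 * w) ^ 3 := by ring
      _ ≤ _ := by
        refine mul_le_mul_of_nonneg_left ?_ (by positivity)
        calc (1 + 1.74 * w) ^ 3 ≤ (1 + 1.74 * 0.07) ^ 3 := by gcongr
          _ ≤ 1.5 := by norm_num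
  nlinarith

/-- The analytic inequality behind the range of large `τ n`. -/
theorem final_ineq (L ll : ℝ) (hL : 14.4 ≤ L) (hll : ll = log L) :
    let q := log (1 + 1 / L + 2 * (1 / L) ^ 2 + 6 * (1 / L) ^ 3)
    let y := (ll + 0.366513 - q) / L
    0.00608 * (1 + 1 / L) + 0.002632 + 0.00001 ≤ 0.52857 - 0.366513 + q + log (1 - y) ∧ y < 1 := by
  intro q y
  have hL0 : 0 < L := by linarith
  set w := 1 / L with hw
  have hw0 : 0 < w := by positivity
  have hw1 : w ≤ 1 / 14.4 := one_div_le_one_div_of_le (by norm_num) hL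
  have hLw : L * w = 1 := by rw [hw]; field_simp
  have hlog : ll ≤ 1.66723 + L / 14.4 := by
    rw [hll]
    have h1 : log (L / 14.4) ≤ L / 14.4 - 1 := Real.log_le_sub_one_of_pos (by positivity)
    rw [Real.log_div hL0.ne' (by norm_num)] at h1
    have h2 : log 14.4 ≤ 2.66723 := by
      rw [show (14.4 : ℝ) = 2 ^ 4 * 0.9 by norm_num, Real.log_mul (by norm_num) (by norm_num),
        Real.log_pow]
      have h3 : log 0.9 ≤ -0.10536 := by
        rw [Real.log_le_iff_le_exp (by norm_num), Real.exp_neg, ← one_div, le_div_iff₀ (Real.exp_pos _)]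
        have := Real.exp_bound' (x := 0.10536) (by norm_num) (by norm_num) (n := 5) (by norm_num)
        norm_num [Finset.sum_range_succ, Nat.factorial] at this ⊢
        linarith
      have := Real.log_two_lt_d9
      push_cast
      linarith
    linarith
  have hq := log_qq_ge w hw0 (by norm_num at hw1 ⊢; linarith)
  change _ ≤ q at hq
  have hq3 : 0 ≤ 3.3 * w ^ 3 := by positivity
  -- upper bound for `q`, needed only for `0 ≤ y`
  have hq1 : q ≤ 1 := by
    have h1 : q ≤ _ := Real.log_le_sub_one_of_pos (x := 1 + w + 2 * w ^ 2 + 6 * w ^ 3) (by positivity)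
    have h2 : w ^ 2 ≤ w := by nlinarith
    have h3 : w ^ 3 ≤ w := by
      have : w ^ 3 = w ^ 2 * w := by ring
      nlinarith
    have : w ≤ 0.07 := by norm_num at hw1 ⊢; linarith
    have h4 : w ^ 2 ≤ 0.07 * w := by nlinarith
    have h5 : w ^ 3 ≤ 0.0049 * w := by nlinarith
    linarith
  have hll1 : 1 ≤ ll := by
    rw [hll, Real.le_log_iff_exp_le hL0]
    linarith [Real.exp_one_lt_d9]
  have hyw : y = (ll + 0.366513 - q) * w := by
    change (ll + 0.366513 - q) / L = _
    rw [hw]; ring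
  have hy0 : 0 ≤ y := by
    rw [hyw]; exact mul_nonneg (by linarith) hw0.le
  have hy1 : y ≤ 1 / 14.4 + (2.033743 - w - 1.5 * w ^ 2) * w := by
    rw [hyw]
    have h1 : (ll + 0.366513 - q) * w ≤ (1.66723 + L / 14.4 + 0.366513 - (w + 1.5 * w ^ 2)) * w :=
      mul_le_mul_of_nonneg_right (by linarith) hw0.le
    have h2 : (1.66723 + L / 14.4 + 0.366513 - (w + 1.5 * w ^ 2)) * w
      = (L * w) / 14.4 + (2.033743 - w - 1.5 * w ^ 2) * w := by ring
    rw [h2, hLw] at h1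
    exact h1
  have hy2 : y ≤ 0.2054 := by
    obtain ⟨u, hu⟩ : ∃ u, w = 1 / 14.4 - u := ⟨1 / 14.4 - w, by ring⟩
    have hu0 : 0 ≤ u := by linarith
    have hu1 : u ≤ 1 / 14.4 := by linarith
    have h1 : (2.033743 - w - 1.5 * w ^ 2) * w ≤ (2.033743 - 1 / 14.4 - 1.5 * (1 / 14.4) ^ 2) * (1 / 14.4) := by
      have : (2.033743 - 1 / 14.4 - 1.5 * (1 / 14.4) ^ 2) * (1 / 14.4) - (2.033743 - w - 1.5 * w ^ 2) * w
        = u * (2.033743 - (1 / 14.4 + w) - 1.5 * ((1 / 14.4) ^ 2 + (1 / 14.4) * w + w ^ 2)) := by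
        rw [hu]; ring
      have h2 : 0 ≤ 2.033743 - (1 / 14.4 + w) - 1.5 * ((1 / 14.4) ^ 2 + (1 / 14.4) * w + w ^ 2) := by
        have : w ^ 2 ≤ (1 / 14.4) ^ 2 := pow_le_pow_left₀ hw0.le hw1 2
        norm_num at this hw1 ⊢
        linarith
      have := mul_nonneg hu0 h2
      linarith
    refine hy1.trans ((add_le_add le_rfl h1).trans ?_)
    norm_num
  have hlg := log_one_sub_ge y hy0 hy2
  refine ⟨?_, by linarith⟩
  have hu0 : 0 ≤ 1 / 14.4 - w := by linarith
  obtain ⟨u, hu⟩ : ∃ u, w = 1 / 14.4 - u := ⟨1 / 14.4 - w, by ring⟩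
  have hu1 : 0 ≤ u := by linarith
  have hu2 : u ≤ 0.07 := by norm_num at hu ⊢; linarith
  have key : 0.00608 * (1 + w) + 0.002632 + 0.00001 ≤ 0.52857 - 0.366513 + (w + 1.5 * w ^ 2 + 3.3 * w ^ 3)
      - 1.1195 * (1 / 14.4 + (2.033743 - w - 1.5 * w ^ 2) * w) := by
    have h2 := pow_nonneg hu1 2
    rw [← sub_nonneg, hu]
    ring_nf
    nlinarith [pow_nonneg hu1 3, mul_nonneg hu1 hu1, mul_nonneg (mul_nonneg hu1 hu1) (sub_nonneg.2 hu2)]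
  have := mul_le_mul_of_nonneg_left hy1 (show (0:ℝ) ≤ 1.1195 by norm_num)
  linarith

/-- By the intermediate value theorem. -/
theorem exists_x (s : ℝ) (h : exp 14.4 * qq 14.4 ≤ s) :
    ∃ L, 14.4 ≤ L ∧ exp L * qq L = s := by
  have hs0 : 0 ≤ s := by
    refine le_trans ?_ h
    have := Real.exp_pos 14.4
    unfold qq; positivity
  have hc : ContinuousOn (fun L => exp L * qq L) (Set.Icc 14.4 (14.4 + 2 * s)) := by
    have h0 : ∀ L ∈ Set.Icc (14.4 : ℝ) (14.4 + 2 * s), L ≠ 0 := fun L hL => by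
      have := hL.1
      intro h; rw [h] at this; norm_num at this
    have h1 : ∀ (a : ℝ) (k : ℕ), ContinuousOn (fun L : ℝ => a / L ^ k) (Set.Icc 14.4 (14.4 + 2 * s)) :=
      fun a k => continuousOn_const.div (continuousOn_pow k) fun L hL => pow_ne_zero _ (h0 L hL)
    have h2 : ContinuousOn (fun L : ℝ => 1 / L) (Set.Icc 14.4 (14.4 + 2 * s)) :=
      continuousOn_const.div continuousOn_id h0
    exact Real.continuous_exp.continuousOn.mul (((h2.add (h1 1 2)).add (h1 2 3)).add (h1 6 4))
  have hi := intermediate_value_Icc (by linarith : (14.4 : ℝ) ≤ 14.4 + 2 * s) hc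
  have hup : s ≤ exp (14.4 + 2 * s) * qq (14.4 + 2 * s) := by
    set M := 14.4 + 2 * s with hM
    have hM0 : 0 < M := by rw [hM]; positivity
    have h1 : 1 / M ≤ qq M := by
      unfold qq
      have : 0 ≤ 1 / M ^ 2 + 2 / M ^ 3 + 6 / M ^ 4 := by positivity
      linarith
    have h2 := Real.quadratic_le_exp_of_nonneg hM0.le
    have h3 : s * M ≤ exp M := by nlinarith
    calc s ≤ exp M * (1 / M) := by rw [mul_one_div, le_div_iff₀ hM0]; exact h3
      _ ≤ _ := mul_le_mul_of_nonneg_left h1 (Real.exp_pos _).le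
  obtain ⟨L, hL, e⟩ := hi ⟨h, hup⟩
  exact ⟨L, hL.1, e⟩

/-- The bound of slope `1/(x log 2)` with `x = e^L`, `e^L qq L = log₂ τ(n)`, the value at which the
main terms are balanced. -/
theorem big_case (n : ℕ) (hn : n ≠ 0) (h : exp 14.4 * qq 14.4 ≤ log (tauFn n) / log 2) :
    (sigmaFn n : ℝ) / n ≤ exp eulerMascheroniConstant *
      (log (1 + log (tauFn n)) + log (log (exp 1 + log (tauFn n)))) + 0.9414441 := by
  obtain ⟨L, hL, hx⟩ := exists_x _ h
  set T := log (tauFn n : ℝ) with hT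
  have hL0 : 0 < L := by linarith
  have hl2 : 0 < log 2 := Real.log_pos (by norm_num)
  have hE := Real.exp_pos L
  have hE15 : 14 ≤ exp L := by linarith [Real.add_one_le_exp L]
  have hq0 : 0 < qq L := by unfold qq; positivity
  have hTe : T = log 2 * (exp L * qq L) := by rw [hx]; field_simp
  have hT0 : 0 < T := by rw [hTe]; positivity
  set z := 1 + 1 / L + 2 * (1 / L) ^ 2 + 6 * (1 / L) ^ 3 with hz
  have hz1 : 1 < z := by
    have : 0 < 1 / L := by positivity
    have : 0 < 1 / L + 2 * (1 / L) ^ 2 + 6 * (1 / L) ^ 3 := by positivity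
    rw [hz]; linarith
  have hqz : qq L = z / L := by rw [qq, hz]; field_simp
  obtain ⟨hf, hy⟩ := final_ineq L (log L) hL rfl
  simp only [← hz] at hf hy
  -- upper bound for `σ(n)/n`
  have hA := log_sigma_le_UU n hn (exp L) (by linarith)
  have hU := UU_upper (exp L) (by linarith)
  have hJ := JJ_ge (exp L) (by linarith)
  have hR := error_bound L hL
  rw [Real.log_exp] at hU hJ
  set ER := 0.00608 * (1 + 1 / L) + 0.002632 with hER
  have hw1 : 1 / L ≤ 1 / 14.4 := one_div_le_one_div_of_le (by norm_num) hL
  have hw0 : 0 < 1 / L := by positivity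
  have hER0 : 0 ≤ ER := by rw [hER]; positivity
  have hER1 : ER ≤ 0.01 := by rw [hER]; norm_num at hw1 ⊢; linarith
  have h1 : log (tauFn n : ℝ) / log 2 / exp L = qq L := by
    rw [← hT, ← hx]; field_simp
  rw [h1] at hA
  have h2 : qq L - 10.1 / exp L ≤ JJ (exp L) / exp L := by
    rw [le_div_iff₀ hE, sub_mul, div_mul_cancel₀ _ hE.ne']; linarith
  have h3 : log ((sigmaFn n : ℝ) / n) ≤ log L + eulerMascheroniConstant + ER / L := by linarith
  have hs0 : 0 < (sigmaFn n : ℝ) / n := by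
    have h4 : 0 < sigmaFn n := by
      unfold sigmaFn
      exact Finset.sum_pos (fun d hd => Nat.pos_of_mem_divisors hd) ⟨1, by simp [hn]⟩
    have : 0 < n := Nat.pos_of_ne_zero hn
    positivity
  have h4 : (sigmaFn n : ℝ) / n ≤ exp eulerMascheroniConstant * (L + ER + 0.00001) := by
    rw [← Real.exp_log hs0]
    refine (Real.exp_le_exp.2 h3).trans ?_
    rw [Real.exp_add, Real.exp_add, Real.exp_log hL0, mul_comm L, mul_assoc]
    refine mul_le_mul_of_nonneg_left ?_ (Real.exp_pos _).le
    have h5 : ER / L ≤ 0.01 / 14.4 := div_le_div₀ (by norm_num) hER1 (by norm_num) hL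
    have h6 : exp (ER / L) ≤ 1 + ER / L + (ER / L) ^ 2 := by
      have := Real.abs_exp_sub_one_sub_id_le (x := ER / L) (by
        rw [abs_of_nonneg (by positivity)]; norm_num at h5 ⊢; linarith)
      have := (abs_le.1 this).2
      linarith
    have h7 : L * (1 + ER / L + (ER / L) ^ 2) = L + ER + ER * (ER / L) := by field_simp
    have h8 : ER * (ER / L) ≤ 0.01 * (0.01 / 14.4) :=
      mul_le_mul hER1 h5 (by positivity) (by norm_num)
    calc _ ≤ L * (1 + ER / L + (ER / L) ^ 2) := mul_le_mul_of_nonneg_left h6 hL0.le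
      _ = L + ER + ER * (ER / L) := h7
      _ ≤ _ := by norm_num at h8 ⊢; linarith
  -- lower bound for the right-hand side
  have hll2 : -0.366513 ≤ log (log 2) := by
    rw [Real.le_log_iff_exp_le hl2, Real.exp_neg, inv_le_comm₀ (Real.exp_pos _) hl2]
    refine le_trans ?_ (Real.sum_le_exp_of_nonneg (by norm_num) 9)
    rw [inv_le_comm₀ hl2 (by norm_num [Finset.sum_range_succ, Nat.factorial])]
    refine le_trans ?_ Real.log_two_gt_d9.le
    norm_num [Finset.sum_range_succ, Nat.factorial]
  have hlT : log T = log (log 2) + L + log z - log L := by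
    rw [hTe, hqz, Real.log_mul hl2.ne' (by positivity), Real.log_mul hE.ne' (by positivity),
      Real.log_exp, Real.log_div (by positivity) hL0.ne']
    ring
  have hlT2 : L * (1 - (log L + 0.366513 - log z) / L) ≤ log T := by
    rw [hlT]
    have : L * (1 - (log L + 0.366513 - log z) / L) = L - (log L + 0.366513 - log z) := by field_simp
    rw [this]; linarith
  have hpos : 0 < 1 - (log L + 0.366513 - log z) / L := by linarith
  have hllT : log L + log (1 - (log L + 0.366513 - log z) / L) ≤ log (log T) := by
    rw [← Real.log_mul hL0.ne' hpos.ne']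
    exact Real.log_le_log (by positivity) hlT2
  have hlTpos : 0 < log T := lt_of_lt_of_le (by positivity) hlT2
  have g1 : log T ≤ log (1 + T) := Real.log_le_log hT0 (by linarith)
  have g2 : log (log T) ≤ log (log (exp 1 + T)) :=
    Real.log_le_log hlTpos (Real.log_le_log hT0 (by linarith [Real.exp_pos 1]))
  have g3 : L + ER + 0.00001 ≤ log (1 + T) + log (log (exp 1 + T)) + 0.52857 := by linarith
  calc (sigmaFn n : ℝ) / n ≤ exp eulerMascheroniConstant * (L + ER + 0.00001) := h4
    _ ≤ exp eulerMascheroniConstant * (log (1 + T) + log (log (exp 1 + T)) + 0.52857) :=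
      mul_le_mul_of_nonneg_left g3 (Real.exp_pos _).le
    _ ≤ _ := by rw [mul_add]; linarith [exp_gamma_mul_le]

/-! ### Integer approximations of logarithms -/

/-- The `k`-th term of the series of `log (1 + 1 / m)`, in units of `2 ^ (-64)`, rounded down. -/
def lgT (m k : ℕ) : ℕ :=
  Nat.div 36893488147419103232 (Nat.mul (Nat.add (Nat.mul 2 k) 1)
    (Nat.pow (Nat.add (Nat.mul 2 m) 1) (Nat.add (Nat.mul 2 k) 1)))

/-- The sum of the first `n` terms `lgT m k`. -/
def lgSum (m n : ℕ) : ℕ := Nat.rec 0 (fun k ih => Nat.add ih (lgT m k)) n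

theorem lgSum_eq (m n : ℕ) : lgSum m n = ∑ k ∈ Finset.range n, lgT m k := by
  induction n with
  | zero => rfl
  | succ n ih => rw [Finset.sum_range_succ, ← ih]; rfl

/-- Lower approximation of `2 ^ 64 * log (1 + 1 / m)`. -/
def lgL (m : ℕ) : ℕ := lgSum m 20

/-- Upper approximation of `2 ^ 64 * log (1 + 1 / m)`: twenty roundings and the tail. -/
def lgU (m : ℕ) : ℕ := Nat.add (lgSum m 20) 21

theorem lgT_bounds (m k : ℕ) :
    (lgT m k : ℝ) ≤ 2 ^ 64 * ((2 : ℝ) * (1 / (2 * k + 1)) * (1 / (2 * m + 1)) ^ (2 * k + 1)) ∧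
    2 ^ 64 * ((2 : ℝ) * (1 / (2 * k + 1)) * (1 / (2 * m + 1)) ^ (2 * k + 1)) ≤ lgT m k + 1 := by
  have e : (2 : ℝ) ^ 64 * (2 * (1 / (2 * k + 1)) * (1 / (2 * m + 1)) ^ (2 * k + 1))
      = ((36893488147419103232 : ℕ) : ℝ) / (((2 * k + 1) * (2 * m + 1) ^ (2 * k + 1) : ℕ) : ℝ) := by
    push_cast; rw [one_div_pow]; field_simp; norm_num
  rw [e]
  have hl : lgT m k = 36893488147419103232 / ((2 * k + 1) * (2 * m + 1) ^ (2 * k + 1)) := rfl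
  rw [hl]
  exact ⟨Nat.cast_div_le, (Nat.lt_floor_add_one _).le.trans (by rw [Nat.floor_div_eq_div])⟩

theorem lgL_le (m : ℕ) (hm : 1 ≤ m) : (lgL m : ℝ) ≤ 2 ^ 64 * log (1 + 1 / (m : ℝ)) := by
  have hm' : (0 : ℝ) < m := by exact_mod_cast hm
  refine le_trans ?_ (mul_le_mul_of_nonneg_left (log_atanh_lower m hm' 20) (by positivity))
  rw [lgL, lgSum_eq, Finset.mul_sum]
  push_cast
  exact Finset.sum_le_sum fun k _ => (lgT_bounds m k).1

theorem le_lgU (m : ℕ) (hm : 1 ≤ m) : 2 ^ 64 * log (1 + 1 / (m : ℝ)) ≤ lgU m := by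
  have hm1 : (1 : ℝ) ≤ m := by exact_mod_cast hm
  have hm' : (0 : ℝ) < m := by linarith
  refine (mul_le_mul_of_nonneg_left (log_atanh_upper m hm' 20) (by positivity)).trans ?_
  have e : (lgU m : ℝ) = (lgSum m 20 : ℝ) + 21 := by
    have : lgU m = lgSum m 20 + 21 := rfl
    rw [this]; push_cast; rfl
  rw [e, lgSum_eq, mul_add, Finset.mul_sum]
  push_cast
  have h1 : ∑ k ∈ Finset.range 20,
      (2 : ℝ) ^ 64 * ((2 : ℝ) * (1 / (2 * k + 1)) * (1 / (2 * m + 1)) ^ (2 * k + 1)) ≤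
      ∑ k ∈ Finset.range 20, ((lgT m k : ℝ) + 1) :=
    Finset.sum_le_sum fun k _ => (lgT_bounds m k).2
  rw [Finset.sum_add_distrib] at h1
  norm_num only [Finset.sum_const, Finset.card_range, nsmul_eq_mul] at h1
  have hz : 1 / (2 * (m : ℝ) + 1) ≤ 1 / 3 := one_div_le_one_div_of_le (by norm_num) (by linarith)
  have hz0 : 0 ≤ 1 / (2 * (m : ℝ) + 1) := by positivity
  have h2 : 2 ^ 64 * ((2 : ℝ) * (1 / (2 * 20 + 1)) * (1 / (2 * m + 1)) ^ (2 * 20 + 1) /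
      (1 - (1 / (2 * m + 1)) ^ 2)) ≤ 1 := by
    have h3 : (1 / (2 * (m : ℝ) + 1)) ^ 41 ≤ (1 / 3) ^ 41 := pow_le_pow_left₀ hz0 hz 41
    have h4 : (1 / (2 * (m : ℝ) + 1)) ^ 2 ≤ (1 / 3) ^ 2 := pow_le_pow_left₀ hz0 hz 2
    rw [← mul_div_assoc, div_le_one (by norm_num at h4 ⊢; linarith)]
    norm_num at h3 h4 ⊢
    linarith
  norm_num only at h1 h2 ⊢
  linarith

theorem log_two_eq : log 2 = log (1 + 1 / ((1 : ℕ) : ℝ)) := by norm_num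

/-- Lower approximation of `2 ^ 64 * log₂ (1 + 1 / k)`. -/
def dl (k : ℕ) : ℕ := Nat.div (Nat.mul (lgL k) 18446744073709551616) (lgU 1)

theorem dl_le (k : ℕ) (hk : 1 ≤ k) : (dl k : ℝ) / 2 ^ 64 ≤ log (1 + 1 / (k : ℝ)) / log 2 := by
  have hl2 : 0 < log 2 := Real.log_pos (by norm_num)
  have h1 := lgL_le k hk
  have h2 := le_lgU 1 le_rfl
  rw [← log_two_eq] at h2
  have h3 : (dl k : ℝ) ≤ ((lgL k * 18446744073709551616 : ℕ) : ℝ) / lgU 1 := Nat.cast_div_le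
  have h4 : ((lgL k * 18446744073709551616 : ℕ) : ℝ) / lgU 1 ≤ lgL k * 18446744073709551616 / (2 ^ 64 * log 2) := by
    push_cast
    exact div_le_div_of_nonneg_left (by positivity) (by positivity) h2
  have h5 : (lgL k : ℝ) * 18446744073709551616 / (2 ^ 64 * log 2) ≤
      2 ^ 64 * log (1 + 1 / (k : ℝ)) / log 2 := by
    rw [show (2 : ℝ) ^ 64 * log 2 = log 2 * 18446744073709551616 by norm_num; ring,
      mul_div_mul_right _ _ (by norm_num)]
    exact div_le_div_of_nonneg_right h1 hl2.le
  rw [div_le_iff₀ (by positivity)]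
  refine (h3.trans (h4.trans h5)).trans (le_of_eq ?_)
  ring

/-- `p + p ^ 2 + ⋯ + p ^ k`. -/
def gs (p k : ℕ) : ℕ := Nat.rec 0 (fun _ ih => Nat.mul p (Nat.add ih 1)) k

theorem gs_succ (p k : ℕ) : gs p (k + 1) = p * (gs p k + 1) := rfl

theorem gs_zero (p : ℕ) : gs p 0 = 0 := rfl

theorem gs_eq (p k : ℕ) (hp : 0 < p) :
    (gs p (k + 1) : ℝ) = p ^ (k + 1) * ∑ i ∈ Finset.range (k + 1), ((p : ℝ) ^ i)⁻¹ := by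
  have hp' : (p : ℝ) ≠ 0 := by exact_mod_cast hp.ne'
  induction k with
  | zero => simp [gs_succ, gs_zero]
  | succ k ih =>
    rw [gs_succ, Finset.sum_range_succ]
    push_cast
    rw [ih, mul_add, mul_add, pow_succ (p : ℝ) (k + 1)]
    field_simp

theorem gs_pos (p k : ℕ) (hp : 0 < p) (hk : 1 ≤ k) : 1 ≤ gs p k := by
  obtain ⟨j, rfl⟩ := Nat.exists_eq_add_of_le hk
  rw [add_comm, gs_succ]
  exact Nat.mul_pos hp (Nat.succ_pos _)

theorem pow_le_gs (p k : ℕ) (hk : 1 ≤ k) : p ^ k ≤ gs p k := by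
  induction k, hk using Nat.le_induction with
  | base => simp [gs_succ, gs_zero]
  | succ k hk ih =>
    rw [gs_succ, pow_succ, mul_comm]
    exact Nat.mul_le_mul_left p (by omega)

theorem gs_mono (p r k : ℕ) (h : p ≤ r) : gs p k ≤ gs r k := by
  induction k with
  | zero => exact le_rfl
  | succ k ih => rw [gs_succ, gs_succ]; exact Nat.mul_le_mul h (by omega)

/-- Telescoping of the local factor of `σ(n)/n` over the powers of `p`. -/
theorem locSig_eq (p v : ℕ) (hp : 0 < p) :
    locSig p v = ∑ k ∈ Finset.range v, log (1 + 1 / (gs p (k + 1) : ℝ)) := by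
  have hp' : (0 : ℝ) < p := by exact_mod_cast hp
  induction v with
  | zero => simp [locSig]
  | succ v ih =>
    rw [Finset.sum_range_succ, ← ih, locSig, locSig]
    have hA : 0 < ∑ i ∈ Finset.range (v + 1), ((p : ℝ) ^ i)⁻¹ :=
      Finset.sum_pos (fun _ _ => by positivity) (by simp)
    have hg : (0 : ℝ) < gs p (v + 1) := by exact_mod_cast gs_pos p (v + 1) hp (by omega)
    rw [← Real.log_mul hA.ne' (by positivity)]
    congr 1
    rw [Finset.sum_range_succ, gs_eq p v hp]
    field_simp

theorem log_succ_eq (v : ℕ) :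
    log ((v : ℝ) + 1) = ∑ k ∈ Finset.range v, log (1 + 1 / ((k + 1 : ℕ) : ℝ)) := by
  induction v with
  | zero => simp
  | succ v ih =>
    rw [Finset.sum_range_succ, ← ih, ← Real.log_mul (by positivity) (by positivity)]
    congr 1
    push_cast
    field_simp

/-! ### Small primes and covering sums over primes -/

/-- The primes below `2040`. -/
def smallP : List ℕ := [
  2, 3, 5, 7, 11, 13, 17, 19, 23, 29, 31, 37, 41, 43, 47, 53, 59, 61, 67, 71, 73, 79, 83, 89, 97, 101, 103,
  107, 109, 113, 127, 131, 137, 139, 149, 151, 157, 163, 167, 173, 179, 181, 191, 193, 197, 199, 211, 223,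
  227, 229, 233, 239, 241, 251, 257, 263, 269, 271, 277, 281, 283, 293, 307, 311, 313, 317, 331, 337, 347,
  349, 353, 359, 367, 373, 379, 383, 389, 397, 401, 409, 419, 421, 431, 433, 439, 443, 449, 457, 461, 463,
  467, 479, 487, 491, 499, 503, 509, 521, 523, 541, 547, 557, 563, 569, 571, 577, 587, 593, 599, 601, 607,
  613, 617, 619, 631, 641, 643, 647, 653, 659, 661, 673, 677, 683, 691, 701, 709, 719, 727, 733, 739, 743,
  751, 757, 761, 769, 773, 787, 797, 809, 811, 821, 823, 827, 829, 839, 853, 857, 859, 863, 877, 881, 883,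
  887, 907, 911, 919, 929, 937, 941, 947, 953, 967, 971, 977, 983, 991, 997, 1009, 1013, 1019, 1021, 1031,
  1033, 1039, 1049, 1051, 1061, 1063, 1069, 1087, 1091, 1093, 1097, 1103, 1109, 1117, 1123, 1129, 1151, 1153,
  1163, 1171, 1181, 1187, 1193, 1201, 1213, 1217, 1223, 1229, 1231, 1237, 1249, 1259, 1277, 1279, 1283, 1289,
  1291, 1297, 1301, 1303, 1307, 1319, 1321, 1327, 1361, 1367, 1373, 1381, 1399, 1409, 1423, 1427, 1429, 1433,
  1439, 1447, 1451, 1453, 1459, 1471, 1481, 1483, 1487, 1489, 1493, 1499, 1511, 1523, 1531, 1543, 1549, 1553,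
  1559, 1567, 1571, 1579, 1583, 1597, 1601, 1607, 1609, 1613, 1619, 1621, 1627, 1637, 1657, 1663, 1667, 1669,
  1693, 1697, 1699, 1709, 1721, 1723, 1733, 1741, 1747, 1753, 1759, 1777, 1783, 1787, 1789, 1801, 1811, 1823,
  1831, 1847, 1861, 1867, 1871, 1873, 1877, 1879, 1889, 1901, 1907, 1913, 1931, 1933, 1949, 1951, 1973, 1979,
  1987, 1993, 1997, 1999, 2003, 2011, 2017, 2027, 2029, 2039]

/-- Primality test below `47 ^ 2`: the numeral is the product of the primes up to `43`. -/
def tst (a : ℕ) : Bool :=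
  bif Nat.ble a 46 then [2, 3, 5, 7, 11, 13, 17, 19, 23, 29, 31, 37, 41, 43].contains a
  else Nat.beq (Nat.gcd a 13082761331670030) 1

theorem smallP_eq : smallP = (List.range 2040).filter tst := by decide +kernel

theorem smallP_nodup : smallP.Nodup := by
  rw [smallP_eq]; exact List.nodup_range.filter _

theorem lt_of_mem_smallP {p : ℕ} (h : p ∈ smallP) : p < 2040 := by
  rw [smallP_eq] at h
  exact List.mem_range.1 (List.mem_filter.1 h).1

theorem mem_smallP {p : ℕ} (hp : p.Prime) (h : p < 2040) : p ∈ smallP := by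
  rw [smallP_eq, List.mem_filter, List.mem_range]
  refine ⟨h, ?_⟩
  unfold tst
  rcases le_or_gt p 46 with h1 | h1
  · rw [Nat.ble_eq_true_of_le h1]
    simp only [cond_true]
    interval_cases p <;> first | rfl | (exfalso; revert hp; norm_num)
  · have h2 : Nat.ble p 46 = false := by
      rw [Bool.eq_false_iff]; intro h3; have := Nat.le_of_ble_eq_true h3; omega
    rw [h2]
    simp only [cond_false, Nat.beq_eq]
    have h3 : ∀ k ∈ [2, 3, 5, 7, 11, 13, 17, 19, 23, 29, 31, 37, 41, 43], Nat.Coprime p k := by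
      intro k hk
      refine (Nat.coprime_primes hp ?_).2 ?_
      · simp only [List.mem_cons, List.not_mem_nil, or_false] at hk
        rcases hk with rfl | rfl | rfl | rfl | rfl | rfl | rfl | rfl | rfl | rfl | rfl | rfl | rfl | rfl <;> norm_num
      · rintro rfl
        simp only [List.mem_cons, List.not_mem_nil, or_false] at hk
        omega
    have h4 : (13082761331670030 : ℕ) = [2, 3, 5, 7, 11, 13, 17, 19, 23, 29, 31, 37, 41, 43].prod := by norm_num
    rw [h4]
    exact Nat.coprime_list_prod_right_iff.2 h3

/-- The product of the primes from `7` to `1327`. -/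
def PP : ℕ := 1124370377328178909503163961218646318675247315165725558891134462743088497598918323414789058224096268906453596665810761473258734554968008807863535666872381754468373169944579230225816037525810511361913664918053525735897531095601834529925531335567466685282743225698169392591114592475596320475008737322806586096377587911221883262352131775859418344235407600972392364838161885133393806239947926063087495502080310815451919091228076669942342094313852192181179560192485725690464620903319886319716844810522108771883511116072125010373741673529496610164238879874547185439876091

theorem PP_eq : PP = ((smallP.take 217).drop 3).prod := by decide +kernel

theorem coprime_PP {p : ℕ} (hp : p.Prime) (h : 2040 ≤ p) : Nat.gcd PP p = 1 := by
  rw [PP_eq]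
  refine Nat.coprime_list_prod_left_iff.2 fun k hk => ?_
  have hk1 : k ∈ smallP := List.mem_of_mem_take (List.mem_of_mem_drop hk)
  refine Nat.Coprime.symm ((Nat.Prime.coprime_iff_not_dvd hp).2 fun hd => ?_)
  have h0 : k ≠ 0 := by
    rintro rfl
    exact absurd hk1 (by decide +kernel)
  have := Nat.le_of_dvd (Nat.pos_of_ne_zero h0) hd
  have := lt_of_mem_smallP hk1
  omega

/-- Upper approximation of `2 ^ 64 * log (1 + 1 / a)` for large `a`. -/
def lgV (a : ℕ) : ℕ :=
  Nat.add (Nat.div (Nat.mul 18446744073709551616 (Nat.add (Nat.mul 12 (Nat.mul a (Nat.add a 1))) 1))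
    (Nat.mul (Nat.mul 6 (Nat.mul a (Nat.add a 1))) (Nat.add (Nat.mul 2 a) 1))) 1

/-- A counter in the high digits (unit `2 ^ 128`), packed with `lgV a` in the low digits, so that a sum
of weights records both the number of integers and the sum of their `lgV`. -/
def wgt (a : ℕ) : ℕ := Nat.add 340282366920938463463374607431768211456 (lgV a)

/-- `wgt a` when `a` is prime to `PP`, and `0` otherwise. -/
def leaf (a : ℕ) : ℕ := Nat.div (wgt a) (Nat.pow (Nat.gcd PP a) 200)

/-- The sum of `leaf` over the integers from `a` to `a + 29` prime to `30`, when `30 ∣ a`. -/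
def unitSum (a : ℕ) : ℕ :=
  Nat.add (Nat.add (Nat.add (leaf (Nat.add a 1)) (leaf (Nat.add a 7)))
    (Nat.add (leaf (Nat.add a 11)) (leaf (Nat.add a 13))))
    (Nat.add (Nat.add (leaf (Nat.add a 17)) (leaf (Nat.add a 19)))
    (Nat.add (leaf (Nat.add a 23)) (leaf (Nat.add a 29))))

/-- The sum of `unitSum` over `2 ^ k` consecutive blocks of length `30`. -/
def seg (k : ℕ) : ℕ → ℕ :=
  Nat.rec unitSum (fun k ih a => Nat.add (ih a) (ih (Nat.add a (Nat.mul 30 (Nat.pow 2 k))))) k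

/-- The sum of `unitSum` over `len` consecutive blocks of length `30`, if `len < 2 ^ k`. -/
def segs (k : ℕ) : ℕ → ℕ → ℕ :=
  Nat.rec (fun _ _ => 0) (fun k ih len a => bif Nat.ble (Nat.pow 2 k) len
    then Nat.add (seg k a) (ih (Nat.sub len (Nat.pow 2 k)) (Nat.add a (Nat.mul 30 (Nat.pow 2 k))))
    else ih len a) k

theorem le_lgV (a : ℕ) (ha : 1 ≤ a) : 2 ^ 64 * log (1 + 1 / (a : ℝ)) ≤ lgV a := by
  have ha' : (0 : ℝ) < a := by exact_mod_cast ha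
  have h := log_up1 a ha'
  have e : lgV a = 18446744073709551616 * (12 * (a * (a + 1)) + 1) / (6 * (a * (a + 1)) * (2 * a + 1)) + 1 := rfl
  have h1 : ((18446744073709551616 * (12 * (a * (a + 1)) + 1) : ℕ) : ℝ) / ((6 * (a * (a + 1)) * (2 * a + 1) : ℕ) : ℝ)
      ≤ lgV a := by
    rw [e, Nat.cast_add, Nat.cast_one]
    exact (Nat.lt_floor_add_one _).le.trans (by rw [Nat.floor_div_eq_div])
  refine le_trans (le_trans (mul_le_mul_of_nonneg_left h (by positivity)) (le_of_eq ?_)) h1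
  push_cast
  field_simp
  norm_num
  ring

theorem lgV_le (a : ℕ) (ha : 2040 ≤ a) : lgV a ≤ 18446744073709551616 := by
  have e : lgV a = 18446744073709551616 * (12 * (a * (a + 1)) + 1) / (6 * (a * (a + 1)) * (2 * a + 1)) + 1 := rfl
  rw [e]
  have h1 : 18446744073709551616 * (12 * (a * (a + 1)) + 1) / (6 * (a * (a + 1)) * (2 * a + 1)) ≤
      9223372036854775808 := by
    refine Nat.div_le_of_le_mul ?_
    have h2 : 1 ≤ a * (a + 1) := Nat.mul_pos (by omega) (by omega)
    nlinarith
  omega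

/-- If the gcd is greater than `1`, its power exceeds `wgt a`, so the quotient is `0`; the division
replaces a case distinction. -/
theorem leaf_eq (a : ℕ) (ha : 2040 ≤ a) : leaf a = if Nat.gcd PP a = 1 then wgt a else 0 := by
  have e : leaf a = wgt a / (Nat.gcd PP a) ^ 200 := rfl
  rw [e]
  split_ifs with h
  · rw [h, one_pow, Nat.div_one]
  · refine Nat.div_eq_of_lt ?_
    have h0 : 0 < Nat.gcd PP a := Nat.gcd_pos_of_pos_right _ (by omega)
    have h2 : 2 ^ 200 ≤ (Nat.gcd PP a) ^ 200 := Nat.pow_le_pow_left (by omega) _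
    refine lt_of_lt_of_le ?_ h2
    have e2 : wgt a = 340282366920938463463374607431768211456 + lgV a := rfl
    have := lgV_le a ha
    rw [e2]
    norm_num
    omega

/-- `v` is the sum of the weights over a set of integers in `[a, b)` containing all the primes. -/
def Cover (a b v : ℕ) : Prop :=
  ∃ S : Finset ℕ, S ⊆ Finset.Ico a b ∧ (∀ p, p.Prime → p ∈ Finset.Ico a b → p ∈ S) ∧
    ∑ x ∈ S, wgt x = v

theorem Cover.append {a b c v w : ℕ} (h1 : Cover a b v) (h2 : Cover b c w) (hab : a ≤ b) (hbc : b ≤ c) :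
    Cover a c (v + w) := by
  obtain ⟨S, hS, hS', rfl⟩ := h1
  obtain ⟨T, hT, hT', rfl⟩ := h2
  refine ⟨S ∪ T, ?_, ?_, ?_⟩
  · refine Finset.union_subset (hS.trans ?_) (hT.trans ?_)
    · exact Finset.Ico_subset_Ico_right hbc
    · exact Finset.Ico_subset_Ico_left hab
  · intro p hp hpm
    rw [Finset.mem_union]
    rw [Finset.mem_Ico] at hpm
    rcases lt_or_ge p b with h | h
    · exact Or.inl (hS' p hp (Finset.mem_Ico.2 ⟨hpm.1, h⟩))
    · exact Or.inr (hT' p hp (Finset.mem_Ico.2 ⟨h, hpm.2⟩))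
  · rw [Finset.sum_union]
    rw [Finset.disjoint_left]
    intro x hx hx'
    have h3 := Finset.mem_Ico.1 (hS hx)
    have h4 := Finset.mem_Ico.1 (hT hx')
    omega

theorem Cover.refl (a : ℕ) : Cover a a 0 := ⟨∅, by simp, by simp, by simp⟩

/-- A prime in the block is prime to `30` and to `PP`. -/
theorem cover_unit (a : ℕ) (ha : 2040 ≤ a) (h30 : 30 ∣ a) : Cover a (a + 30) (unitSum a) := by
  refine ⟨(({1, 7, 11, 13, 17, 19, 23, 29} : Finset ℕ).image (a + ·)).filter
    (fun x => Nat.gcd PP x = 1), ?_, ?_, ?_⟩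
  · intro x hx
    simp only [Finset.mem_filter, Finset.mem_image, Finset.mem_insert, Finset.mem_singleton] at hx
    rw [Finset.mem_Ico]
    omega
  · intro p hp hpm
    rw [Finset.mem_Ico] at hpm
    rw [Finset.mem_filter]
    refine ⟨?_, coprime_PP hp (by omega)⟩
    have d2 : ¬ 2 ∣ p := fun h => by
      have := (Nat.prime_dvd_prime_iff_eq Nat.prime_two hp).1 h; omega
    have d3 : ¬ 3 ∣ p := fun h => by
      have := (Nat.prime_dvd_prime_iff_eq Nat.prime_three hp).1 h; omega
    have d5 : ¬ 5 ∣ p := fun h => by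
      have := (Nat.prime_dvd_prime_iff_eq Nat.prime_five hp).1 h; omega
    simp only [Finset.mem_image, Finset.mem_insert, Finset.mem_singleton]
    refine ⟨p - a, ?_, by omega⟩
    obtain ⟨j, rfl⟩ := Nat.exists_eq_add_of_le hpm.1
    have hj : j < 30 := by omega
    rw [Nat.add_sub_cancel_left]
    interval_cases j <;> omega
  · rw [Finset.sum_filter, Finset.sum_image (fun x _ y _ h => by simpa using h)]
    have e : unitSum a = leaf (a + 1) + leaf (a + 7) + (leaf (a + 11) + leaf (a + 13)) +
      (leaf (a + 17) + leaf (a + 19) + (leaf (a + 23) + leaf (a + 29))) := rfl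
    rw [e, Finset.sum_congr rfl (fun x _ => (leaf_eq (a + x) (by omega)).symm)]
    simp
    ring

theorem cover_seg (k a : ℕ) (ha : 2040 ≤ a) (h30 : 30 ∣ a) : Cover a (a + 30 * 2 ^ k) (seg k a) := by
  induction k generalizing a with
  | zero =>
    have h : Cover a (a + 30) (seg 0 a) := cover_unit a ha h30
    simpa using h
  | succ k ih =>
    have e : seg (k + 1) a = seg k a + seg k (a + 30 * 2 ^ k) := rfl
    rw [e]
    have h2 := ih (a + 30 * 2 ^ k) (by omega) (h30.add (Dvd.intro _ rfl))
    have e2 : a + 30 * 2 ^ k + 30 * 2 ^ k = a + 30 * 2 ^ (k + 1) := by ring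
    rw [e2] at h2
    exact (ih a ha h30).append h2 (by omega) (by rw [pow_succ]; omega)

theorem cover_segs (k len a : ℕ) (hl : len < 2 ^ k) (ha : 2040 ≤ a) (h30 : 30 ∣ a) :
    Cover a (a + 30 * len) (segs k len a) := by
  induction k generalizing len a with
  | zero =>
    have : len = 0 := by simpa using hl
    subst this
    exact Cover.refl a
  | succ k ih =>
    have e : segs (k + 1) len a = bif Nat.ble (2 ^ k) len then seg k a + segs k (len - 2 ^ k) (a + 30 * 2 ^ k)
      else segs k len a := rfl
    rw [e]
    rw [pow_succ] at hl
    rcases le_or_gt (2 ^ k) len with h | h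
    · rw [Nat.ble_eq_true_of_le h, cond_true]
      have h2 := ih (len - 2 ^ k) (a + 30 * 2 ^ k) (by omega) (by omega) (h30.add (Dvd.intro _ rfl))
      have e2 : a + 30 * 2 ^ k + 30 * (len - 2 ^ k) = a + 30 * len := by omega
      rw [e2] at h2
      exact (cover_seg k a ha h30).append h2 (by omega) (by omega)
    · have h2 : Nat.ble (2 ^ k) len = false := by
        rw [Bool.eq_false_iff]; intro h3; have := Nat.le_of_ble_eq_true h3; omega
      rw [h2, cond_false]
      exact ih len a h ha h30

/-! ### Intercepts of the lines -/

/-- `QM` bounds the parameters of all the lines used. -/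
def QM : ℕ := 1810020

/-- The number of primes `p < 2040` for which the exponent `k` may matter. -/
def cnt (k : ℕ) : ℕ := [0, 309, 291, 40, 15, 9, 6, 4, 4, 3, 3, 2, 2, 2, 2, 2, 1, 1, 1, 1, 1, 1, 1, 1, 1].getD k 0

/-- From this integer on, the exponent `k` does not matter. -/
def bnd (k : ℕ) : ℕ :=
  [0, 2040, 1903, 176, 52, 25, 15, 11, 8, 7, 6, 5, 4, 4, 4, 4, 3, 3, 3, 3, 3, 3, 3, 3, 3, 2].getD k 2

theorem cnt_spec : ∀ k < 26, 1 ≤ k → (∀ p ∈ smallP.drop (cnt k), bnd k ≤ p) ∧ bnd k ≤ 2040 ∧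
    (2 ≤ k → k * QM ≤ gs (bnd k) k) := by decide +kernel

theorem mul_QM_le_pow (k : ℕ) (hk : 26 ≤ k) : k * QM ≤ 2 ^ k := by
  induction k, hk using Nat.le_induction with
  | base => decide +kernel
  | succ k hk ih =>
    rw [pow_succ, add_mul]
    have : 1 * QM ≤ k * QM := Nat.mul_le_mul_right _ (by omega)
    omega

theorem cnt_zero (k : ℕ) (hk : 25 ≤ k) : cnt k = 0 := by
  unfold cnt
  exact List.getD_eq_default _ _ (by simpa using hk)

/-- Beyond the first `cnt k` primes the increments at exponent `k ≥ 2` are negligible. -/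
theorem gs_large (p k : ℕ) (hp : p.Prime) (hk : 2 ≤ k) (h : p ∉ smallP.take (cnt k)) : k * QM ≤ gs p k := by
  rcases lt_or_ge k 26 with h1 | h1
  · obtain ⟨ha, hb, hc⟩ := cnt_spec k h1 (by omega)
    refine (hc hk).trans (gs_mono _ _ _ ?_)
    rcases lt_or_ge p 2040 with h2 | h2
    · have h3 := mem_smallP hp h2
      rw [← List.take_append_drop (cnt k) smallP, List.mem_append] at h3
      exact ha p (h3.resolve_left h)
    · omega
  · exact (mul_QM_le_pow k h1).trans ((Nat.pow_le_pow_left hp.two_le k).trans (pow_le_gs p k (by omega)))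

theorem take_one : smallP.take (cnt 1) = smallP := by decide +kernel

/-- Sum of the positive parts of `lgU (gs p k) - t` over the first `c` primes. -/
def rowSum (k c t : ℕ) : ℕ := (smallP.take c).foldr (fun p acc => Nat.add (Nat.sub (lgU (gs p k)) t) acc) 0

/-- Contribution of the primes below `2040` to the intercept of the line of slope `e / 2 ^ 64`. -/
def itemSum (e : ℕ) : ℕ :=
  Nat.rec 0 (fun k ih => Nat.add ih (rowSum (Nat.add k 1) (cnt (Nat.add k 1))
    (Nat.div (Nat.mul (dl (Nat.add k 1)) e) 18446744073709551616))) 25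

/-- The intercept, in units of `2 ^ (-64)`, of the line with parameter `q`; `acc` is a sum of `wgt a`
over a set of integers in `[2040, q)` containing the primes, hence packs the number of these integers
and the sum of their `lgV`. -/
def Cq (q acc : ℕ) : ℕ :=
  Nat.add (itemSum (Nat.div 18446744073709551616 q))
    (Nat.sub (Nat.mod acc 340282366920938463463374607431768211456)
      (Nat.mul (Nat.div acc 340282366920938463463374607431768211456) (Nat.div 18446744073709551616 q)))

theorem rowSum_eq (k c t : ℕ) :
    rowSum k c t = ∑ p ∈ (smallP.take c).toFinset, (lgU (gs p k) - t) := by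
  have hnd : (smallP.take c).Nodup := smallP_nodup.sublist (List.take_sublist _ _)
  rw [List.sum_toFinset _ hnd, rowSum]
  generalize smallP.take c = l
  induction l with
  | nil => rfl
  | cons a l ih => rw [List.foldr_cons, ih, List.map_cons, List.sum_cons]; rfl

theorem itemSum_eq (e : ℕ) : itemSum e = ∑ k ∈ Finset.range 25, ∑ p ∈ (smallP.take (cnt (k + 1))).toFinset,
    (lgU (gs p (k + 1)) - dl (k + 1) * e / 18446744073709551616) := by
  have : ∀ m : ℕ, (Nat.rec 0 (fun k ih => Nat.add ih (rowSum (Nat.add k 1) (cnt (Nat.add k 1))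
    (Nat.div (Nat.mul (dl (Nat.add k 1)) e) 18446744073709551616))) m : ℕ) =
    ∑ k ∈ Finset.range m, ∑ p ∈ (smallP.take (cnt (k + 1))).toFinset,
    (lgU (gs p (k + 1)) - dl (k + 1) * e / 18446744073709551616) := by
    intro m
    induction m with
    | zero => rfl
    | succ m ih => rw [Finset.sum_range_succ, ← ih, ← rowSum_eq]; rfl
  exact this 25

/-- Local intercept at the prime `p` and exponent `k + 1`: an upper bound for the increment of the local
factor minus the increment of the line. `S` is a set of integers in `[2040, q)` containing the primes. -/
noncomputable def bet (q e : ℕ) (S : Finset ℕ) (k p : ℕ) : ℝ :=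
  (if p ∈ (smallP.take (cnt (k + 1))).toFinset then
    ((lgU (gs p (k + 1)) - dl (k + 1) * e / 18446744073709551616 : ℕ) : ℝ) / 2 ^ 64 else 0) +
  (if k = 0 then (if p ∈ S then log (1 + 1 / (p : ℝ)) - 1 / q else 0) else 0)

theorem inv_le_log_one_add (a : ℕ) (ha : 1 ≤ a) (q : ℕ) (hq : a + 1 ≤ q) :
    0 ≤ log (1 + 1 / (a : ℝ)) - 1 / q := by
  have ha' : (0 : ℝ) < a := by exact_mod_cast ha
  have h1 := Real.one_sub_inv_le_log_of_pos (x := 1 + 1 / (a : ℝ)) (by positivity)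
  have h2 : 1 - (1 + 1 / (a : ℝ))⁻¹ = 1 / ((a : ℝ) + 1) := by field_simp; ring
  have h3 : 1 / (q : ℝ) ≤ 1 / ((a : ℝ) + 1) :=
    one_div_le_one_div_of_le (by positivity) (by exact_mod_cast hq)
  linarith

theorem log_one_add_le (x : ℝ) (hx : 0 ≤ x) : log (1 + x) ≤ x := by
  have := Real.log_le_sub_one_of_pos (x := 1 + x) (by positivity)
  linarith

theorem bet_nonneg (q e : ℕ) (S : Finset ℕ) (hS : S ⊆ Finset.Ico 2040 q) (k p : ℕ) : 0 ≤ bet q e S k p := by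
  unfold bet
  refine add_nonneg (by split_ifs <;> positivity) ?_
  split_ifs with h1 h2
  · have := Finset.mem_Ico.1 (hS h2)
    exact inv_le_log_one_add p (by omega) q (by omega)
  all_goals rfl

/-- The primes with index below `cnt (k + 1)` and, for `k = 0`, the primes in `[2040, q)` are accounted
for in `bet`. In all other cases the increment is at most `1/gs p (k+1) ≤ 1/((k+1) q)`, which is at most
the increment of the line. -/
theorem bet_bound (q e : ℕ) (S : Finset ℕ) (hq : 8 ≤ q) (hqM : q ≤ QM) (he : (e : ℝ) / 2 ^ 64 ≤ 1 / q)
    (hS : S ⊆ Finset.Ico 2040 q) (hS' : ∀ p, p.Prime → p ∈ Finset.Ico 2040 q → p ∈ S)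
    (k p : ℕ) (hp : p.Prime) :
    log (1 + 1 / (gs p (k + 1) : ℝ)) - 1 / (q * log 2) * log (1 + 1 / ((k + 1 : ℕ) : ℝ)) ≤ bet q e S k p := by
  have hl2 : 0 < log 2 := Real.log_pos (by norm_num)
  have hq0 : (0 : ℝ) < q := by exact_mod_cast (by omega : 0 < q)
  have hk0 : (0 : ℝ) < ((k + 1 : ℕ) : ℝ) := by exact_mod_cast Nat.succ_pos k
  have eD : 1 / (q * log 2) * log (1 + 1 / ((k + 1 : ℕ) : ℝ)) = log (1 + 1 / ((k + 1 : ℕ) : ℝ)) / log 2 * (1 / q) := by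
    field_simp
  have hd := dl_le (k + 1) (by omega)
  have hsec : 0 ≤ (if k = 0 then (if p ∈ S then log (1 + 1 / (p : ℝ)) - 1 / q else 0) else 0) := by
    split_ifs with h1 h2
    · have := Finset.mem_Ico.1 (hS h2)
      exact inv_le_log_one_add p (by omega) q (by omega)
    all_goals rfl
  have hg1 := gs_pos p (k + 1) hp.pos (by omega)
  have hg0 : (0 : ℝ) < gs p (k + 1) := by exact_mod_cast hg1
  unfold bet
  by_cases hm : p ∈ smallP.take (cnt (k + 1))
  · rw [if_pos (by simpa using hm)]
    refine le_trans ?_ (le_add_of_nonneg_right hsec)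
    have h1 := le_lgU _ hg1
    have h2 : ((lgU (gs p (k + 1)) : ℝ) - ((dl (k + 1) * e / 18446744073709551616 : ℕ) : ℝ)) ≤
        ((lgU (gs p (k + 1)) - dl (k + 1) * e / 18446744073709551616 : ℕ) : ℝ) := by
      rw [sub_le_iff_le_add]
      exact_mod_cast (by omega : lgU (gs p (k + 1)) ≤ lgU (gs p (k + 1)) - dl (k + 1) * e / 18446744073709551616 + dl (k + 1) * e / 18446744073709551616)
    have h3 : ((dl (k + 1) * e / 18446744073709551616 : ℕ) : ℝ) ≤ (dl (k + 1) : ℝ) * e / 18446744073709551616 := by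
      refine Nat.cast_div_le.trans (le_of_eq ?_)
      push_cast; rfl
    have h4 : (dl (k + 1) : ℝ) / 2 ^ 64 * (e / 2 ^ 64) ≤ log (1 + 1 / ((k + 1 : ℕ) : ℝ)) / log 2 * (1 / q) :=
      mul_le_mul hd he (by positivity) (le_trans (by positivity) hd)
    rw [eD, le_div_iff₀ (by positivity)]
    have h5 : (dl (k + 1) : ℝ) * e / 18446744073709551616 = (dl (k + 1) : ℝ) / 2 ^ 64 * (e / 2 ^ 64) * 2 ^ 64 := by
      field_simp; norm_num
    nlinarith
  · rw [if_neg (by simpa using hm), zero_add]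
    rcases Nat.eq_zero_or_pos k with rfl | hk
    · have hp2 : 2040 ≤ p := by
        by_contra hlt
        exact hm (by rw [zero_add, take_one]; exact mem_smallP hp (by omega))
      have e1 : gs p (0 + 1) = p := by rw [gs_succ, gs_zero]; omega
      have e2 : 1 / (q * log 2) * log (1 + 1 / ((0 + 1 : ℕ) : ℝ)) = 1 / q := by
        rw [eD]; norm_num
      rw [e1, e2, if_pos rfl]
      split_ifs with h2
      · rfl
      · have h3 : q ≤ p := by
          by_contra hlt
          exact h2 (hS' p hp (Finset.mem_Ico.2 ⟨hp2, by omega⟩))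
        have h4 := log_one_add_le (1 / (p : ℝ)) (by positivity)
        have h5 : 1 / (p : ℝ) ≤ 1 / q := one_div_le_one_div_of_le hq0 (by exact_mod_cast h3)
        linarith
    · rw [if_neg (by omega)]
      have h1 := gs_large p (k + 1) hp (by omega) hm
      have h2 : ((k + 1 : ℕ) : ℝ) * q ≤ gs p (k + 1) := by
        exact_mod_cast (Nat.mul_le_mul_left _ hqM).trans h1
      have h3 := log_one_add_le (1 / (gs p (k + 1) : ℝ)) (by positivity)
      have h4 : 1 / (gs p (k + 1) : ℝ) ≤ 1 / (((k + 1 : ℕ) : ℝ) * q) :=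
        one_div_le_one_div_of_le (by positivity) h2
      have h5 := log_one_add_inv_ge (k + 1) (by omega)
      have h6 : 1 / ((k + 1 : ℕ) : ℝ) ≤ log (1 + 1 / ((k + 1 : ℕ) : ℝ)) / log 2 := by
        rw [le_div_iff₀ hl2]
        refine le_trans (le_of_eq ?_) h5
        ring
      have h7 : 1 / (((k + 1 : ℕ) : ℝ) * q) ≤ log (1 + 1 / ((k + 1 : ℕ) : ℝ)) / log 2 * (1 / q) := by
        rw [← one_div_mul_one_div]
        exact mul_le_mul_of_nonneg_right h6 (by positivity)
      rw [eD]
      linarith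

/-- The linear bound with slope `1/q` in `s = log₂ τ(n)` and intercept `Cq q acc / 2 ^ 64`. -/
theorem line_C (n : ℕ) (hn : n ≠ 0) (q acc : ℕ) (hq : 8 ≤ q) (hqM : q ≤ QM) (hc : Cover 2040 q acc) :
    log ((sigmaFn n : ℝ) / n) ≤ log (tauFn n : ℝ) / log 2 / q + (Cq q acc : ℝ) / 2 ^ 64 := by
  obtain ⟨S, hS, hS', hv⟩ := hc
  set e := 18446744073709551616 / q with he_def
  have hq0 : (0 : ℝ) < q := by exact_mod_cast (by omega : 0 < q)
  have he : (e : ℝ) / 2 ^ 64 ≤ 1 / q := by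
    have h1 : (e : ℝ) ≤ ((18446744073709551616 : ℕ) : ℝ) / q := Nat.cast_div_le
    push_cast at h1
    rw [div_le_iff₀ (by positivity)]
    refine h1.trans (le_of_eq ?_)
    field_simp; norm_num
  have hb0 := bet_nonneg q e S hS
  have key := line_bound n hn (1 / (q * log 2)) (fun p => ∑ k ∈ Finset.range 25, bet q e S k p)
    (smallP.toFinset ∪ S) (fun p => Finset.sum_nonneg fun k _ => hb0 k p) ?_ ?_
  · refine key.trans ?_
    have e1 : 1 / ((q : ℝ) * log 2) * log (tauFn n : ℝ) = log (tauFn n : ℝ) / log 2 / q := by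
      rw [div_div, mul_comm (log 2), one_div_mul_eq_div]
    rw [e1]
    refine add_le_add le_rfl ?_
    refine (Finset.sum_le_sum_of_subset_of_nonneg (Finset.filter_subset _ _)
      (fun p _ _ => Finset.sum_nonneg fun k _ => hb0 k p)).trans ?_
    rw [Finset.sum_comm]
    unfold bet
    simp_rw [Finset.sum_add_distrib]
    have hA : ∑ k ∈ Finset.range 25, ∑ p ∈ smallP.toFinset ∪ S,
        (if p ∈ (smallP.take (cnt (k + 1))).toFinset then
        ((lgU (gs p (k + 1)) - dl (k + 1) * e / 18446744073709551616 : ℕ) : ℝ) / 2 ^ 64 else 0) =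
        (itemSum e : ℝ) / 2 ^ 64 := by
      rw [itemSum_eq]
      push_cast
      rw [Finset.sum_div]
      refine Finset.sum_congr rfl fun k _ => ?_
      rw [← Finset.sum_filter, Finset.sum_div]
      refine Finset.sum_congr ?_ fun _ _ => rfl
      ext p
      rw [Finset.mem_filter, Finset.mem_union, List.mem_toFinset, List.mem_toFinset]
      exact ⟨fun h => h.2, fun h => ⟨Or.inl (List.mem_of_mem_take h), h⟩⟩
    have hB : ∑ k ∈ Finset.range 25, ∑ p ∈ smallP.toFinset ∪ S,
        (if k = 0 then (if p ∈ S then log (1 + 1 / (p : ℝ)) - 1 / q else 0) else 0) =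
        ∑ p ∈ S, (log (1 + 1 / (p : ℝ)) - 1 / q) := by
      rw [Finset.sum_eq_single_of_mem 0 (by simp)]
      · simp only [if_true]
        rw [← Finset.sum_filter]
        refine Finset.sum_congr ?_ fun _ _ => rfl
        ext p
        rw [Finset.mem_filter, Finset.mem_union]
        exact ⟨fun h => h.2, fun h => ⟨Or.inr h, h⟩⟩
      · intro k _ hk
        simp [hk]
    rw [hA, hB]
    have hcard : S.card ≤ 1810020 := by
      refine (Finset.card_le_card hS).trans ?_
      rw [Nat.card_Ico]
      have : QM = 1810020 := rfl
      omega
    have hacc : acc = 340282366920938463463374607431768211456 * S.card + ∑ x ∈ S, lgV x := by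
      have e2 : ∑ x ∈ S, wgt x = ∑ x ∈ S, (340282366920938463463374607431768211456 + lgV x) :=
        Finset.sum_congr rfl fun x _ => rfl
      rw [← hv, e2, Finset.sum_add_distrib, Finset.sum_const, smul_eq_mul, mul_comm]
    have hlt : ∑ x ∈ S, lgV x < 340282366920938463463374607431768211456 := by
      have h1 : ∑ x ∈ S, lgV x ≤ S.card • 18446744073709551616 :=
        Finset.sum_le_card_nsmul _ _ _ fun x hx => lgV_le x (Finset.mem_Ico.1 (hS hx)).1
      rw [smul_eq_mul] at h1
      omega
    have hmod : acc % 340282366920938463463374607431768211456 = ∑ x ∈ S, lgV x := by omega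
    have hdiv : acc / 340282366920938463463374607431768211456 = S.card := by omega
    have eC : Cq q acc = itemSum e + (∑ x ∈ S, lgV x - S.card * e) := by
      rw [← hmod, ← hdiv]; rfl
    rw [eC]
    push_cast
    rw [add_div]
    refine add_le_add le_rfl ?_
    rw [Finset.sum_sub_distrib, Finset.sum_const, nsmul_eq_mul]
    have h1 : ((∑ x ∈ S, lgV x : ℕ) : ℝ) - ((S.card * e : ℕ) : ℝ) ≤ ((∑ x ∈ S, lgV x - S.card * e : ℕ) : ℝ) := by
      rw [sub_le_iff_le_add]
      exact_mod_cast (by omega : ∑ x ∈ S, lgV x ≤ ∑ x ∈ S, lgV x - S.card * e + S.card * e)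
    have h2 : ∑ x ∈ S, 2 ^ 64 * log (1 + 1 / (x : ℝ)) ≤ ∑ x ∈ S, (lgV x : ℝ) :=
      Finset.sum_le_sum fun x hx => le_lgV x (by have := (Finset.mem_Ico.1 (hS hx)).1; omega)
    rw [← Finset.mul_sum] at h2
    have h3 : (S.card : ℝ) * (e / 2 ^ 64) ≤ S.card * (1 / q) := mul_le_mul_of_nonneg_left he (by positivity)
    have h4 : (S.card : ℝ) * e = (S.card : ℝ) * (e / 2 ^ 64) * 2 ^ 64 := by field_simp
    push_cast at h1
    rw [le_div_iff₀ (by positivity)]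
    nlinarith
  · intro p hp hpF
    rw [Finset.mem_union, not_or] at hpF
    refine Finset.sum_eq_zero fun k _ => ?_
    unfold bet
    rw [if_neg, if_neg hpF.2]
    · simp
    · intro h
      rw [List.mem_toFinset] at h hpF
      exact hpF.1 (List.mem_of_mem_take h)
  · intro p v hp
    rw [locSig_eq p v hp.pos, log_succ_eq v, Finset.mul_sum, ← sub_le_iff_le_add', ← Finset.sum_sub_distrib]
    have h1 : ∑ k ∈ Finset.range v, (log (1 + 1 / (gs p (k + 1) : ℝ)) -
        1 / (q * log 2) * log (1 + 1 / ((k + 1 : ℕ) : ℝ))) ≤ ∑ k ∈ Finset.range v, bet q e S k p :=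
      Finset.sum_le_sum fun k _ => bet_bound q e S hq hqM he hS hS' k p hp
    refine h1.trans ?_
    have h2 : ∑ k ∈ Finset.range v, bet q e S k p ≤ ∑ k ∈ Finset.range (max v 25), bet q e S k p :=
      Finset.sum_le_sum_of_subset_of_nonneg (Finset.range_mono (le_max_left _ _)) fun k _ _ => hb0 k p
    refine h2.trans (le_of_eq ?_)
    refine (Finset.sum_subset (Finset.range_mono (le_max_right _ _)) fun k _ hk => ?_).symm
    rw [Finset.mem_range, not_lt] at hk
    unfold bet
    have hk0 : ¬ k = 0 := by omega
    rw [cnt_zero (k + 1) (by omega), if_neg hk0]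
    simp

/-! ### Exponentials, concavity and constants -/

/-- Upper approximation of `2 ^ 128 * exp (y / 2 ^ 64)`: sixty squarings, starting from
`exp x ≤ 1 / (1 - x)` at `x = y / 2 ^ 124`. -/
def expUp (y : ℕ) : ℕ :=
  Nat.rec (Nat.add (Nat.div (Nat.pow 2 252) (Nat.sub (Nat.pow 2 124) y)) 1)
    (fun _ r => Nat.add (Nat.div (Nat.pow r 2) (Nat.pow 2 128)) 1) 60

theorem exp_le_expUp (y : ℕ) (hy : y < 2 ^ 124) : exp ((y : ℝ) / 2 ^ 64) ≤ expUp y / 2 ^ 128 := by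
  have hdiv : ∀ a b : ℕ, (a : ℝ) / b ≤ ((a / b + 1 : ℕ) : ℝ) := fun a b => by
    push_cast
    exact (Nat.lt_floor_add_one _).le.trans (by rw [Nat.floor_div_eq_div])
  have key : ∀ m : ℕ, exp ((y : ℝ) / 2 ^ 124 * 2 ^ m) ≤
      ((Nat.rec (Nat.add (Nat.div (Nat.pow 2 252) (Nat.sub (Nat.pow 2 124) y)) 1)
      (fun _ r => Nat.add (Nat.div (Nat.pow r 2) (Nat.pow 2 128)) 1) m : ℕ) : ℝ) / 2 ^ 128 := by
    intro m
    induction m with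
    | zero =>
      have h1 := hdiv (2 ^ 252) (2 ^ 124 - y)
      rw [Nat.cast_sub hy.le] at h1
      have hy' : (y : ℝ) < 2 ^ 124 := by exact_mod_cast hy
      have h2 := Real.one_sub_le_exp_neg ((y : ℝ) / 2 ^ 124)
      have h3 : (0 : ℝ) < 1 - (y : ℝ) / 2 ^ 124 := by
        rw [sub_pos, div_lt_one (by positivity)]; exact hy'
      rw [Real.exp_neg] at h2
      have h4 : exp ((y : ℝ) / 2 ^ 124) ≤ 1 / (1 - (y : ℝ) / 2 ^ 124) := by
        rw [le_div_iff₀ h3]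
        have := mul_le_mul_of_nonneg_left h2 (Real.exp_pos ((y : ℝ) / 2 ^ 124)).le
        rwa [mul_inv_cancel₀ (Real.exp_pos _).ne'] at this
      have h5 : 1 / (1 - (y : ℝ) / 2 ^ 124) = (2 ^ 252 / (2 ^ 124 - y)) / 2 ^ 128 := by
        have : (2 : ℝ) ^ 124 - y ≠ 0 := (sub_pos.2 hy').ne'
        field_simp
      rw [pow_zero, mul_one]
      refine h4.trans (h5.le.trans (div_le_div_of_nonneg_right ?_ (by positivity)))
      refine le_trans (le_of_eq ?_) h1
      norm_num
    | succ m ih =>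
      refine le_trans ?_ (div_le_div_of_nonneg_right (hdiv _ _) (by positivity))
      have e : (y : ℝ) / 2 ^ 124 * 2 ^ (m + 1) = (y : ℝ) / 2 ^ 124 * 2 ^ m + (y : ℝ) / 2 ^ 124 * 2 ^ m := by ring
      rw [e, Real.exp_add]
      refine (mul_le_mul ih ih (Real.exp_pos _).le (by positivity)).trans (le_of_eq ?_)
      have e3 : ∀ r : ℕ, (r : ℝ) / 2 ^ 128 * (r / 2 ^ 128) = ((r ^ 2 : ℕ) : ℝ) / ((2 ^ 128 : ℕ) : ℝ) / 2 ^ 128 := by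
        intro r; push_cast; ring
      exact e3 _
  have h := key 60
  have e : (y : ℝ) / 2 ^ 124 * 2 ^ 60 = y / 2 ^ 64 := by field_simp
  rwa [e] at h

/-- The right-hand side as a function of `s = log₂ τ(n)`. -/
noncomputable def Gv (s : ℝ) : ℝ :=
  exp eulerMascheroniConstant * (log (1 + s * log 2) + log (log (exp 1 + s * log 2))) + 0.9414441

theorem log_concave (x y t : ℝ) (hx : 0 < x) (hy : 0 < y) (h0 : 0 ≤ t) (h1 : t ≤ 1) :
    (1 - t) * log x + t * log y ≤ log ((1 - t) * x + t * y) :=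
  strictConcaveOn_log_Ioi.concaveOn.2 hx hy (by linarith) h0 (by ring)

theorem one_lt_log_e {x : ℝ} (h : exp 1 ≤ x) : 1 ≤ log x := by
  rw [Real.le_log_iff_exp_le (lt_of_lt_of_le (Real.exp_pos 1) h)]; exact h

theorem Gv_concave (a b t : ℝ) (ha : 0 ≤ a) (hb : 0 ≤ b) (h0 : 0 ≤ t) (h1 : t ≤ 1) :
    (1 - t) * Gv a + t * Gv b ≤ Gv ((1 - t) * a + t * b) := by
  have hl2 : 0 < log 2 := Real.log_pos (by norm_num)
  have he : 0 < exp 1 := Real.exp_pos 1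
  have hal : 0 ≤ a * log 2 := by positivity
  have hbl : 0 ≤ b * log 2 := by positivity
  have p1 := log_concave (1 + a * log 2) (1 + b * log 2) t (by positivity) (by positivity) h0 h1
  have p2 := log_concave (exp 1 + a * log 2) (exp 1 + b * log 2) t (by positivity) (by positivity) h0 h1
  have la := one_lt_log_e (x := exp 1 + a * log 2) (by linarith)
  have lb := one_lt_log_e (x := exp 1 + b * log 2) (by linarith)
  have p3 := log_concave _ _ t (by linarith : 0 < log (exp 1 + a * log 2))
    (by linarith : 0 < log (exp 1 + b * log 2)) h0 h1
  have p4 := Real.log_le_log (by nlinarith : 0 < (1 - t) * log (exp 1 + a * log 2) + t * log (exp 1 + b * log 2)) p2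
  have e1 : (1 - t) * (1 + a * log 2) + t * (1 + b * log 2) = 1 + ((1 - t) * a + t * b) * log 2 := by ring
  have e2 : (1 - t) * (exp 1 + a * log 2) + t * (exp 1 + b * log 2) = exp 1 + ((1 - t) * a + t * b) * log 2 := by ring
  rw [e1] at p1
  rw [e2] at p4
  have hg : 0 < exp eulerMascheroniConstant := Real.exp_pos _
  unfold Gv
  have := mul_le_mul_of_nonneg_left (add_le_add p1 (p3.trans p4)) hg.le
  linarith

/-- An inequality between the exponential of a line and `Gv` holds on an interval if it holds at
the endpoints. -/
theorem exp_line_le (C q a b s : ℝ) (ha : 0 ≤ a) (has : a ≤ s) (hsb : s ≤ b)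
    (h1 : exp (a / q + C) ≤ Gv a) (h2 : exp (b / q + C) ≤ Gv b) : exp (s / q + C) ≤ Gv s := by
  rcases eq_or_lt_of_le (has.trans hsb) with hab | hab
  · have : s = a := by linarith
    rwa [this]
  have hba : 0 < b - a := by linarith
  set t := (s - a) / (b - a) with ht
  have h0 : 0 ≤ t := div_nonneg (by linarith) hba.le
  have ht1 : t ≤ 1 := by rw [ht, div_le_one hba]; linarith
  have hs : s = (1 - t) * a + t * b := by
    rw [ht]; field_simp; ring
  have hconv := convexOn_exp.2 (Set.mem_univ (a / q + C)) (Set.mem_univ (b / q + C))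
    (by linarith : 0 ≤ 1 - t) h0 (by ring)
  simp only [smul_eq_mul] at hconv
  have e : (1 - t) * (a / q + C) + t * (b / q + C) = s / q + C := by rw [hs]; ring
  rw [e] at hconv
  have hG := Gv_concave a b t ha (by linarith) h0 ht1
  rw [← hs] at hG
  refine hconv.trans (le_trans ?_ hG)
  exact add_le_add (mul_le_mul_of_nonneg_left h1 (by linarith)) (mul_le_mul_of_nonneg_left h2 h0)

theorem gamma_num : 0.57721566489 ≤ eulerMascheroniConstant := by
  have h := gamma_lower 32 (by norm_num)
  have hH : HH 32 = 586061125622639 / 144403552893600 := by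
    unfold HH; norm_num [Finset.sum_range_succ]
  have hl : log ((32 : ℕ) : ℝ) = 5 * log 2 := by
    rw [show ((32 : ℕ) : ℝ) = 2 ^ 5 by norm_num, Real.log_pow]; norm_num
  have h2 := le_lgU 1 le_rfl
  rw [← log_two_eq, show lgU 1 = 12786308645202655672 by decide +kernel] at h2
  rw [hH, hl] at h
  norm_num at h h2 ⊢
  linarith

theorem exp_gamma_num : 1.78107241796 ≤ exp eulerMascheroniConstant := by
  refine le_trans ?_ (Real.exp_le_exp.2 gamma_num)
  refine le_trans ?_ (Real.sum_le_exp_of_nonneg (by norm_num) 14)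
  norm_num [Finset.sum_range_succ, Nat.factorial]

/-- The ranges of large and of small `τ(n)` overlap. -/
theorem threshold_num : exp 14.4 * qq 14.4 ≤ 134694 := by
  have h1 : exp 14.4 ^ 5 ≤ (1794074.78 : ℝ) ^ 5 := by
    rw [← Real.exp_nat_mul, show ((5 : ℕ) : ℝ) * 14.4 = ((72 : ℕ) : ℝ) * 1 by norm_num, Real.exp_nat_mul]
    refine (pow_le_pow_left₀ (Real.exp_pos 1).le Real.exp_one_lt_d9.le 72).trans ?_
    norm_num
  have h2 : exp 14.4 ≤ 1794074.78 := le_of_pow_le_pow_left₀ (by norm_num) (by norm_num) h1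
  have h3 : 0 ≤ qq 14.4 := by unfold qq; norm_num
  refine (mul_le_mul_of_nonneg_right h2 h3).trans ?_
  unfold qq
  norm_num

/-! ### The verification of a list of lines -/

/-- Lower approximation of `2 ^ 128 * Gv (s / 2 ^ 20)`, given lower approximations of the two
logarithms in units of `2 ^ (-64)`. -/
def gLow (w1 w2 : ℕ) : ℕ := Nat.add (Nat.mul 32854987070851171563 (Nat.add w1 w2)) 320356826671752682890659590256454335242

/-- Checks that `w1` and `w2` are lower approximations of the two logarithms in `Gv (s / 2 ^ 20)`. -/
def ptOK (s w1 w2 : ℕ) : Bool :=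
  Nat.ble (Nat.add w1 1) (Nat.pow 2 124) && (Nat.ble (Nat.add (Nat.div (expUp w2) (Nat.pow 2 64)) 2) (Nat.pow 2 124) &&
  (Nat.ble (expUp w1) (Nat.add (Nat.pow 2 128) (Nat.mul (Nat.mul s 12786308645202655651) (Nat.pow 2 44))) &&
  (Nat.ble (Nat.add w2 1) (Nat.pow 2 124) &&
  Nat.ble (expUp (Nat.add (Nat.div (expUp w2) (Nat.pow 2 64)) 1))
    (Nat.add 924983374492100048015014677977421661338 (Nat.mul (Nat.mul s 12786308645202655651) (Nat.pow 2 44))))))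

/-- Checks the line with parameter `q` and intercept `c` against the lower bound `g` at `s / 2 ^ 20`. -/
def lineOK (q c s g : ℕ) : Bool :=
  Nat.ble (Nat.add (Nat.add c (Nat.add (Nat.div (Nat.mul s (Nat.pow 2 44)) q) 1)) 1) (Nat.pow 2 124) &&
  Nat.ble (expUp (Nat.add c (Nat.add (Nat.div (Nat.mul s (Nat.pow 2 44)) q) 1))) g

/-- The covering sum of the line of parameter `q` extends over `[2040, maxQ q)`, which is empty if
`q ≤ 2040`. -/
def maxQ (q : ℕ) : ℕ := bif Nat.ble q 2040 then 2040 else q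

/-- One line of the certificate: the line of parameter `q` is used from the previous breakpoint up
to `s / 2 ^ 20`; `acc` is the sum of weights over `[2040, maxQ q)`, and `w1`, `w2` are lower
approximations, in units of `2 ^ (-64)`, of the two logarithms in `Gv (s / 2 ^ 20)`. -/
structure Entry where
  q : ℕ
  acc : ℕ
  s : ℕ
  w1 : ℕ
  w2 : ℕ

/-- Checks that `acc` is `a0`, a sum of weights over `[2040, q0)`, plus the covering sum over
`[q0, maxQ q)` in blocks of length `30`. -/
def coverOK (q0 a0 q acc : ℕ) : Bool :=
  Nat.beq (Nat.add q0 (Nat.mul 30 (Nat.div (Nat.sub (maxQ q) q0) 30))) (maxQ q) &&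
  (Nat.ble (Nat.add (Nat.div (Nat.sub (maxQ q) q0) 30) 1) (Nat.pow 2 17) &&
  Nat.beq (Nat.add a0 (segs 17 (Nat.div (Nat.sub (maxQ q) q0) 30) q0)) acc)

/-- The verification of a list of lines. The remaining arguments are the current breakpoint `s0`, a lower
approximation `g0` of `2 ^ 128 * Gv (s0 / 2 ^ 20)`, and the end `q0` and value `a0` of the covering sum so
far. At the end of the list, the breakpoint must have passed
`141237944000 / 2 ^ 20 > 134694`. -/
def chkLine : List Entry → ℕ → ℕ → ℕ → ℕ → Bool
  | [], s0, _, _, _ => Nat.ble 141237944 (Nat.div s0 1000)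
  | x :: l, s0, g0, q0, a0 =>
    coverOK q0 a0 x.q x.acc && (Nat.ble 8 x.q && (Nat.ble x.q QM && (ptOK x.s x.w1 x.w2 &&
    (lineOK x.q (Cq x.q x.acc) s0 g0 && (lineOK x.q (Cq x.q x.acc) x.s (gLow x.w1 x.w2) &&
    chkLine l x.s (gLow x.w1 x.w2) (maxQ x.q) x.acc)))))

theorem ptOK_sound (s w1 w2 : ℕ) (h : ptOK s w1 w2 = true) :
    (gLow w1 w2 : ℝ) / 2 ^ 128 ≤ Gv ((s : ℝ) / 2 ^ 20) := by
  simp only [ptOK, Bool.and_eq_true] at h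
  obtain ⟨h1, h2, h3, h4, h5⟩ := h
  have h1 := Nat.le_of_ble_eq_true h1
  have h2 := Nat.le_of_ble_eq_true h2
  have h3 := Nat.le_of_ble_eq_true h3
  have h4 := Nat.le_of_ble_eq_true h4
  have h5 := Nat.le_of_ble_eq_true h5
  have x1 := exp_le_expUp w1 h1
  have x2 := exp_le_expUp w2 h4
  have x3 := exp_le_expUp _ h2
  have hl := lgL_le 1 le_rfl
  rw [← log_two_eq, show lgL 1 = 12786308645202655651 by decide +kernel] at hl
  have hT : ((s * 12786308645202655651 * 2 ^ 44 : ℕ) : ℝ) / 2 ^ 128 ≤ (s : ℝ) / 2 ^ 20 * log 2 := by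
    have : (12786308645202655651 : ℝ) / 2 ^ 64 ≤ log 2 := by
      rw [div_le_iff₀ (by positivity)]; push_cast at hl; linarith
    refine le_trans (le_of_eq ?_) (mul_le_mul_of_nonneg_left this (by positivity))
    push_cast
    ring
  set T := (s : ℝ) / 2 ^ 20 * log 2 with hTd
  have hT0 : 0 ≤ T := by have := Real.log_pos (by norm_num : (1 : ℝ) < 2); positivity
  have y1 : (w1 : ℝ) / 2 ^ 64 ≤ log (1 + T) := by
    rw [Real.le_log_iff_exp_le (by linarith)]
    refine x1.trans ?_
    have h6 : (expUp w1 : ℝ) ≤ ((2 ^ 128 + s * 12786308645202655651 * 2 ^ 44 : ℕ) : ℝ) := by exact_mod_cast h3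
    have h7 : ((2 ^ 128 + s * 12786308645202655651 * 2 ^ 44 : ℕ) : ℝ) / 2 ^ 128 = 1 + ((s * 12786308645202655651 * 2 ^ 44 : ℕ) : ℝ) / 2 ^ 128 := by
      push_cast; ring
    have := div_le_div_of_nonneg_right h6 (by positivity : (0 : ℝ) ≤ 2 ^ 128)
    linarith
  have y2 : (w2 : ℝ) / 2 ^ 64 ≤ log (log (exp 1 + T)) := by
    have hlog := one_lt_log_e (x := exp 1 + T) (by linarith)
    rw [Real.le_log_iff_exp_le (by linarith), Real.le_log_iff_exp_le (by have := Real.exp_pos 1; linarith)]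
    have h8 : exp ((w2 : ℝ) / 2 ^ 64) ≤ ((Nat.add (Nat.div (expUp w2) (Nat.pow 2 64)) 1 : ℕ) : ℝ) / 2 ^ 64 := by
      refine x2.trans ?_
      have h9 : (expUp w2 : ℝ) / ((2 ^ 64 : ℕ) : ℝ) ≤ ((expUp w2 / 2 ^ 64 + 1 : ℕ) : ℝ) := by
        push_cast
        exact (Nat.lt_floor_add_one _).le.trans (by
          have := Nat.floor_div_eq_div (K := ℝ) (expUp w2) (2 ^ 64)
          push_cast at this
          rw [this])
      have h10 : (expUp w2 : ℝ) / 2 ^ 128 = (expUp w2 : ℝ) / ((2 ^ 64 : ℕ) : ℝ) / 2 ^ 64 := by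
        push_cast; ring
      rw [h10]
      exact div_le_div_of_nonneg_right h9 (by positivity)
    refine (Real.exp_le_exp.2 h8).trans (x3.trans ?_)
    have h6 : (expUp (Nat.add (Nat.div (expUp w2) (Nat.pow 2 64)) 1) : ℝ) ≤
      ((924983374492100048015014677977421661338 + s * 12786308645202655651 * 2 ^ 44 : ℕ) : ℝ) := by exact_mod_cast h5
    have h7 : ((924983374492100048015014677977421661338 + s * 12786308645202655651 * 2 ^ 44 : ℕ) : ℝ) / 2 ^ 128 =
        924983374492100048015014677977421661338 / 2 ^ 128 + ((s * 12786308645202655651 * 2 ^ 44 : ℕ) : ℝ) / 2 ^ 128 := by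
      push_cast; ring
    have h8 : (924983374492100048015014677977421661338 : ℝ) / 2 ^ 128 ≤ exp 1 :=
      le_trans (by norm_num) Real.exp_one_gt_d9.le
    have := div_le_div_of_nonneg_right h6 (by positivity : (0 : ℝ) ≤ 2 ^ 128)
    linarith
  have e1 : (gLow w1 w2 : ℝ) / 2 ^ 128 =
      32854987070851171563 / 2 ^ 64 * ((w1 : ℝ) / 2 ^ 64 + (w2 : ℝ) / 2 ^ 64) + 320356826671752682890659590256454335242 / 2 ^ 128 := by
    have : gLow w1 w2 = 32854987070851171563 * (w1 + w2) + 320356826671752682890659590256454335242 := rfl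
    rw [this]
    push_cast
    ring
  have e2 : (32854987070851171563 : ℝ) / 2 ^ 64 ≤ exp eulerMascheroniConstant :=
    le_trans (by norm_num) exp_gamma_num
  have e3 : (320356826671752682890659590256454335242 : ℝ) / 2 ^ 128 ≤ 0.9414441 := by norm_num
  rw [e1]
  unfold Gv
  refine add_le_add (mul_le_mul e2 (add_le_add y1 y2) (by positivity) (Real.exp_pos _).le) e3

theorem lineOK_sound (q c s g : ℕ) (hq : 8 ≤ q) (h : lineOK q c s g = true) :
    exp ((s : ℝ) / 2 ^ 20 / q + c / 2 ^ 64) ≤ g / 2 ^ 128 := by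
  simp only [lineOK, Bool.and_eq_true] at h
  obtain ⟨h1, h2⟩ := h
  have h1 := Nat.le_of_ble_eq_true h1
  have h2 := Nat.le_of_ble_eq_true h2
  have hq0 : (0 : ℝ) < q := by exact_mod_cast (by omega : 0 < q)
  refine le_trans (Real.exp_le_exp.2 ?_) ((exp_le_expUp _ h1).trans
    (div_le_div_of_nonneg_right (by exact_mod_cast h2) (by positivity)))
  have h3 : ((s * 2 ^ 44 : ℕ) : ℝ) / q ≤ ((s * 2 ^ 44 / q + 1 : ℕ) : ℝ) := by
    push_cast
    exact (Nat.lt_floor_add_one _).le.trans (by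
      have := Nat.floor_div_eq_div (K := ℝ) (s * 2 ^ 44) q
      push_cast at this
      rw [this])
  have h4 : (s : ℝ) / 2 ^ 20 / q = ((s * 2 ^ 44 : ℕ) : ℝ) / q / 2 ^ 64 := by
    push_cast; field_simp; norm_num
  have h5 : ((Nat.add c (Nat.add (Nat.div (Nat.mul s (Nat.pow 2 44)) q) 1) : ℕ) : ℝ) =
    (c : ℝ) + ((s * 2 ^ 44 / q + 1 : ℕ) : ℝ) := by exact_mod_cast rfl
  rw [h4, h5, add_div, add_comm]
  exact add_le_add le_rfl (div_le_div_of_nonneg_right h3 (by positivity))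

theorem Cover.of_maxQ {q v : ℕ} (h : Cover 2040 (maxQ q) v) : Cover 2040 q v := by
  rcases le_or_gt q 2040 with h1 | h1
  · have e : maxQ q = 2040 := by rw [maxQ, Nat.ble_eq_true_of_le h1, cond_true]
    rw [e] at h
    obtain ⟨S, hS, _, hv⟩ := h
    have : S = ∅ := by simpa using hS
    subst this
    refine ⟨∅, by simp, fun p _ hp => ?_, hv⟩
    have := Finset.mem_Ico.1 hp
    omega
  · have e : maxQ q = q := by
      have : Nat.ble q 2040 = false := by
        rw [Bool.eq_false_iff]; intro h3; have := Nat.le_of_ble_eq_true h3; omega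
      rw [maxQ, this, cond_false]
    rwa [e] at h

theorem coverOK_sound (q0 a0 q acc : ℕ) (h0 : 2040 ≤ q0) (h30 : 30 ∣ q0) (hc : Cover 2040 q0 a0)
    (h : coverOK q0 a0 q acc = true) : 2040 ≤ maxQ q ∧ 30 ∣ maxQ q ∧ Cover 2040 (maxQ q) acc := by
  simp only [coverOK, Bool.and_eq_true] at h
  obtain ⟨h1, h2, h3⟩ := h
  have h1 := Nat.eq_of_beq_eq_true h1
  have h2 := Nat.le_of_ble_eq_true h2
  have h3 := Nat.eq_of_beq_eq_true h3
  generalize Nat.div (Nat.sub (maxQ q) q0) 30 = len at h1 h2 h3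
  have h4 := cover_segs 17 len q0 h2 h0 h30
  have h5 : q0 + 30 * len = maxQ q := h1
  have h6 := hc.append h4 h0 (by omega)
  rw [h5] at h6
  have h7 : a0 + segs 17 len q0 = acc := h3
  rw [h7] at h6
  exact ⟨by omega, by omega, h6⟩

/-- If `log₂ τ(n)` lies beyond the current breakpoint, it lies in one of the intervals of the list (the
last breakpoint exceeds `134694`), and there `line_C` and `exp_line_le` apply. -/
theorem chkLine_sound (n : ℕ) (hn : n ≠ 0) (l : List Entry) (s0 g0 q0 a0 : ℕ) (h0 : 2040 ≤ q0) (h30 : 30 ∣ q0)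
    (hc : Cover 2040 q0 a0) (hg : (g0 : ℝ) / 2 ^ 128 ≤ Gv ((s0 : ℝ) / 2 ^ 20)) (h : chkLine l s0 g0 q0 a0 = true)
    (hs : (s0 : ℝ) / 2 ^ 20 ≤ log (tauFn n : ℝ) / log 2) (hs' : log (tauFn n : ℝ) / log 2 < 134694) :
    (sigmaFn n : ℝ) / n ≤ Gv (log (tauFn n : ℝ) / log 2) := by
  induction l generalizing s0 g0 q0 a0 with
  | nil =>
    exfalso
    have h1 := Nat.le_of_ble_eq_true h
    have h2 : 141237944 * 1000 ≤ s0 := by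
      have : 141237944 ≤ s0 / 1000 := h1
      omega
    have h3 : (141237944 * 1000 : ℝ) ≤ s0 := by exact_mod_cast h2
    rw [div_le_iff₀ (by positivity)] at hs
    generalize log (tauFn n : ℝ) / log 2 = x at hs hs'
    norm_num at hs hs'
    linarith
  | cons x l ih =>
    simp only [chkLine, Bool.and_eq_true] at h
    obtain ⟨h1, h2, h3, h4, h5, h6, h7⟩ := h
    have h2 := Nat.le_of_ble_eq_true h2
    have h3 := Nat.le_of_ble_eq_true h3
    obtain ⟨c1, c2, c3⟩ := coverOK_sound _ _ _ _ h0 h30 hc h1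
    have hp := ptOK_sound _ _ _ h4
    rcases le_or_gt (log (tauFn n : ℝ) / log 2) ((x.s : ℝ) / 2 ^ 20) with hle | hgt
    · have b1 := (lineOK_sound _ _ _ _ h2 h5).trans hg
      have b2 := (lineOK_sound _ _ _ _ h2 h6).trans hp
      have b3 := exp_line_le _ _ _ _ _ (by positivity) hs hle b1 b2
      have b4 := line_C n hn x.q x.acc h2 h3 c3.of_maxQ
      have hpos : 0 < (sigmaFn n : ℝ) / n := by
        refine div_pos ?_ (by exact_mod_cast Nat.pos_of_ne_zero hn)
        have : 0 < sigmaFn n := Finset.sum_pos (fun d hd => Nat.pos_of_mem_divisors hd)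
          ⟨1, Nat.one_mem_divisors.2 hn⟩
        exact_mod_cast this
      rw [Real.log_le_iff_le_exp hpos] at b4
      exact b4.trans b3
    · exact ih _ _ _ _ c1 c2 c3 hp h7 hgt.le

/-! ### The list of lines, and the conclusion -/

/-- The lines of the certificate, in the order of increasing `q`. -/
def lineData : List Entry := [
  ⟨8, 0, 9799163, 37113238479148417024, 14701074831986655232⟩,
  ⟨66, 0, 37426488, 59916078236548726784, 22094715767566106624⟩,
  ⟨260, 0, 91957941, 76068879484623781888, 26256746569575432192⟩,
  ⟨667, 0, 178309561, 88138974277622824960, 28906530150119636992⟩,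
  ⟨1337, 0, 296076304, 97431415780699799552, 30730542481737252864⟩,
  ⟨2280, 9868188640707215440438111453448074549151, 442495072, 104812486212741758976, 32066193720378130432⟩,
  ⟨3480, 60570261311927046496481901648664140971504, 614004368, 110837572118870228992, 33091227839082004480⟩,
  ⟨4920, 118418263688486585285256343367717296991622, 805749326, 115840063522511781888, 33902060855520919552⟩,
  ⟨6570, 183752478137306770270224890270491509934578, 1012373341, 120044029756204646400, 34557467975120584704⟩,
  ⟨8340, 250447822053810709109046800929717092584891, 1225809408, 123568171777863450624, 35089782257716559872⟩,
  ⟨10230, 321566836740286847972892510569433373882357, 1445190803, 126601791685596807168, 35536182447974645760⟩,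
  ⟨12180, 390644157225237356055957890900188147900679, 1664822625, 129209041028858773504, 35911497721848004608⟩,
  ⟨14130, 460742324810950679529413349931329904061307, 1879766687, 131447097164478545920, 36227751353188876288⟩,
  ⟨16080, 531521057130505879929795522390887037674483, 2089732287, 133398901070724333568, 36499240174437269504⟩,
  ⟨17970, 595494142111642311060910152310718538884570, 2288040195, 135070120316311175168, 36728594987262935040⟩,
  ⟨19800, 657085250524332172947781133324512549364117, 2480723591, 136560678580315488256, 36930797371698184192⟩,
  ⟨21630, 721398617872389542542359102474076542428348, 2676008511, 137957679266214707200, 37118332251221786624⟩,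
  ⟨23400, 781968879184316589038839928488091925893439, 2852966314, 139138232102628098048, 37275348669309124608⟩,
  ⟨24960, 833011234222457358558346234207876179075550, 3000301769, 140066612146910265344, 37397899903605145600⟩,
  ⟨26340, 879629918490625928052828653946167436651362, 3139368599, 140902000605119119360, 37507488626943983616⟩,
  ⟨27630, 920463802521138543668433688968398926776060, 3266509219, 141633994235035254784, 37602984799942737920⟩,
  ⟨28860, 964019945487018666991745722321111377333055, 3392088155, 142329559559302021120, 37693275496318500864⟩,
  ⟨30030, 1000089876380638144118863497158207797122254, 3505875351, 142937934247963394048, 37771889481934176256⟩,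
  ⟨31200, 1038882066209625128953688271074744763462349, 3630610482, 143582569734070075392, 37854827193661652992⟩,
  ⟨32490, 1080736797340900559959683419011760954343577, 3769254849, 144273606865542184960, 37943324966962331648⟩,
  ⟨33840, 1128036046342911006381092566752343564182469, 3902681201, 144915051056377888768, 38025095416939282432⟩,
  ⟨35040, 1165467106704214237362063832499992893918139, 4011426582, 145421831552408485888, 38089445111588978688⟩,
  ⟨36060, 1197793931561703391391084469522467119452172, 4107061625, 145856291620572364800, 38144434500894982144⟩,
  ⟨36990, 1229440191685350668493178354964089885373804, 4198326855, 146261570908118319104, 38195583871543672832⟩,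
  ⟨37800, 1255301651571341991716394862622796021937195, 4269540035, 146571734745947832320, 38234633826337816576⟩,
  ⟨38490, 1275718593586598299524197368085257549924196, 4335163069, 146853006336981991424, 38269975229762633728⟩,
  ⟨39180, 1298177229803380238112780123520635306272644, 4407725895, 147159110082466152448, 38308360342124625920⟩,
  ⟨39900, 1322337277854766869018679753770884007205831, 4478746103, 147453866781213458432, 38345247564761137152⟩,
  ⟨40650, 1344455631704627869143799133021219208905131, 4555893285, 147768804079568945152, 38384579317778612224⟩,
  ⟨41520, 1372358785792144823147795887639420449983580, 4651325690, 148151091466397024256, 38432210363961311232⟩,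
  ⟨42480, 1407067587218080546421060142379208636500806, 4747459230, 148528340639909150720, 38479093953881702400⟩,
  ⟨43290, 1431908200003309054253886520134443716212135, 4809703024, 148768547545007783936, 38508884573013671936⟩,
  ⟨43860, 1448241753615514100500128521609516416355205, 4860820282, 148963503039999639552, 38533027916815532032⟩,
  ⟨44340, 1464235024860798208282907147821411835374528, 4903412525, 149124386095944957952, 38552928052307820544⟩,
  ⟨44730, 1476825472436872931431052023617571334187009, 4938878795, 149257289900771770368, 38569351237794267136⟩,
  ⟨45030, 1486353378710659208408026524134454675679909, 4961011756, 149339746773629927424, 38579533282537373696⟩,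
  ⟨45210, 1491457614214473285359977149377008268557994, 4974154988, 149388538338783264768, 38585555590402015232⟩,
  ⟨45330, 1495200720250603608458074274539517788433242, 4985999241, 149432397430266003456, 38590967416161828864⟩,
  ⟨45420, 1497922979185971116165781274651578381562133, 4991552974, 149452926963586957312, 38593500036741464064⟩,
  ⟨45450, 1498943826286733931556171399691922765989840, 4992969010, 149458157727953977344, 38594145273285443584⟩,
  ⟨45480, 1498943826286733931556171399691922765989840, 4995275396, 149466674225500651520, 38595195770612219904⟩,
  ⟨45510, 1500304955754417685410024899743573380681366, 4997966934, 149476607955652575232, 38596421006217183232⟩,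
  ⟨45540, 1500985520488259562336951649768775245708657, 5002780591, 149494360518594396160, 38598610422184542208⟩,
  ⟨45600, 1503367497056706131581195274854323902988109, 5009691142, 149519816505920847872, 38601749446713671680⟩,
  ⟨45690, 1505749473625152700825438899934854051827046, 5019497989, 149555881215476629504, 38606195741830414336⟩,
  ⟨45810, 1508812014927441146996609275031459976887510, 5033509738, 149607287432618704896, 38612531594940907520⟩,
  ⟨45990, 1514937097532018039338950025200321268376093, 5054785676, 149685071573292154880, 38622114427657256960⟩,
  ⟨46290, 1523784439071962439388997775385719601374427, 5092831073, 149823351884483657728, 38639138023164346368⟩,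
  ⟨46770, 1539437427950325608708313025559113385258545, 5148695894, 150024538665231843328, 38663878084908810240⟩,
  ⟨47460, 1559854369965581916516115525488025583441435, 5227959408, 150306277998186201088, 38698468298335453184⟩,
  ⟨48390, 1588438088786940747447039024860144527442161, 5331496698, 150667932982109536256, 38742775587825254400⟩,
  ⟨49590, 1627910843349769609208790523011341961187608, 5461459303, 151112080226653306880, 38797044593490657280⟩,
  ⟨51000, 1671807268682570670995565894709297004140493, 5607147529, 151597578381923713024, 38856184773627346944⟩,
  ⟨52620, 1722849623720711440515072139251909667764954, 5775201135, 152142183586590621696, 38922300983057842176⟩,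
  ⟨54510, 1782058755564954733157699380873471607783970, 5972424129, 152761462268933177344, 38997196951817027584⟩,
  ⟨56730, 1851816640783747118167691243376545457144341, 6205309179, 153466918231055794176, 39082147710085627904⟩,
  ⟨59160, 1930421867542483903227730851265051437203752, 6438952804, 154148559183369207808, 39163861994825580544⟩,
  ⟨61590, 2002902011696643795945429707755301580557248, 6669789057, 154798146254979203072, 39241399424490930176⟩,
  ⟨64170, 2081847520822301519468932684739672269460893, 6931881995, 155508983070090854400, 39325877290720559104⟩,
  ⟨67230, 2174404324624796781530970654302582578495551, 7251259138, 156339716870595674112, 39424117815700881408⟩,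
  ⟨71010, 2288058635176390228327737862326243034359571, 7647814666, 157321710828710264832, 39539577257577152512⟩,
  ⟨75630, 2430296664549342506055428553447077158745763, 8121034799, 158428997262254276608, 39668909613655261184⟩,
  ⟨81180, 2598396153808286107006335725733418332165485, 8687413026, 159672408768023363584, 39813071763121635328⟩,
  ⟨87810, 2796440491356272292742019874363978031895526, 9355172145, 161038237688366366720, 39970142632301035520⟩,
  ⟨95760, 3035318712934771094093308989851528445719706, 10155506433, 162552235051660083200, 40142707844018339840⟩,
  ⟨105270, 3312648841975335941815959444577041971343386, 11097875512, 164188922114348154880, 40327463097698615296⟩,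
  ⟨116790, 3646125561557855636010066722863209317471655, 12249029976, 166009251333268307968, 40530802583449632768⟩,
  ⟨131010, 4061610331568321499898847300576295167401544, 13660355048, 168020653671723302912, 40752914376983314432⟩,
  ⟨148590, 4563867105143626671970788416248484851259912, 15383090560, 170211363991263903744, 40991827284084129792⟩,
  ⟨170370, 5180118471637446229302960040290731510393568, 17503592520, 172593306159244378112, 41248136922109313024⟩,
  ⟨197850, 5954601138749502172145600875310883932479078, 20175229498, 175213444773953142784, 41526029974880911360⟩,
  ⟨232890, 6927468425776465239187389123363574229729975, 23538791711, 178057627751048806400, 41823026441678225408⟩,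
  ⟨277920, 8155207205627211215363244968187991428498669, 27828189108, 181145425046973448192, 42140144137089843200⟩,
  ⟨336660, 9738200776543416947394863921991725757968270, 33381193506, 184501517316104650752, 42478748866134933504⟩,
  ⟨414150, 11779214413335205851248185113303284163385632, 40614223030, 188119248178918719488, 42836926783987646464⟩,
  ⟨517650, 14487862054025876020416647305051687304568468, 50186885997, 192023101764135813120, 43215792022713532416⟩,
  ⟨657750, 18065250577465702086807104884686630680988207, 62975421102, 196210229153124843520, 43613686461383049216⟩,
  ⟨849960, 22902364423246842344938975279237476406015167, 80322805418, 200698393678542012416, 44030871827065602048⟩,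
  ⟨1117680, 29502481212045364782274589531074749600724795, 104167822266, 205493539571232669696, 44466410694327140352⟩,
  ⟨1495860, 38646548975944823172462392364145184183091654, 130364168295, 209631617173245919232, 44834177990795460608⟩,
  ⟨1810020, 46097711964412612706919906388208777534400203, 141238992896, 211109583560630075392, 44963774101452750848⟩]

set_option maxRecDepth 100000 in
/-- The verification starts at `s = 1 = 1048576 / 2 ^ 20`, with an empty covering sum. -/
theorem lineData_ok : chkLine lineData 1048576 (gLow 9713853144781291520 3775663761541562368) 2040 0 = true := by
  decide +kernel

theorem first_ok : ptOK 1048576 9713853144781291520 3775663761541562368 = true := by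
  decide +kernel

theorem tau_ge_two (n : ℕ) (hn : 2 ≤ n) : 2 ≤ tauFn n := by
  have h : ({1, n} : Finset ℕ) ⊆ n.divisors := by
    intro x hx
    simp only [Finset.mem_insert, Finset.mem_singleton] at hx
    rw [Nat.mem_divisors]
    rcases hx with rfl | rfl
    · exact ⟨one_dvd _, by omega⟩
    · exact ⟨dvd_rfl, by omega⟩
  have h2 := Finset.card_le_card h
  rw [Finset.card_pair (by omega)] at h2
  exact h2

/-- For every integer `n ≥ 2`,
`σ(n)/n ≤ e^γ·(log(log(e·τ(n))) + log(log(log(e^e·τ(n))))) + 0.9414441`. -/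
theorem stmt_4 (n : ℕ) (hn : 2 ≤ n) :
    (sigmaFn n : ℝ) / (n : ℝ) ≤
      Real.exp Real.eulerMascheroniConstant *
          (Real.log (Real.log (Real.exp 1 * (tauFn n : ℝ))) +
            Real.log (Real.log (Real.log (Real.exp (Real.exp 1) * (tauFn n : ℝ))))) +
        0.9414441 := by
  have h2 : (2 : ℝ) ≤ tauFn n := by exact_mod_cast tau_ge_two n hn
  have hl2 : 0 < log 2 := Real.log_pos (by norm_num)
  have h0 : (tauFn n : ℝ) ≠ 0 := by linarith
  rw [Real.log_mul (Real.exp_pos 1).ne' h0, Real.log_mul (Real.exp_pos _).ne' h0, Real.log_exp, Real.log_exp]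
  rcases le_or_gt 134694 (log (tauFn n : ℝ) / log 2) with h | h
  · exact big_case n (by omega) (threshold_num.trans h)
  · have h1 : 1 ≤ log (tauFn n : ℝ) / log 2 := by
      rw [le_div_iff₀ hl2, one_mul]
      exact Real.log_le_log (by norm_num) h2
    have h3 := chkLine_sound n (by omega) lineData _ _ 2040 0 le_rfl (by norm_num) (Cover.refl 2040)
      (ptOK_sound _ _ _ first_ok) lineData_ok (by norm_num; exact h1) h
    unfold Gv at h3
    rwa [div_mul_cancel₀ _ hl2.ne'] at h3
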